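/- Let u be an AB-entropy solution of u_t + f(x,u)_x = 0 on ℝ × [0,∞). Then for every x ∈ ℝ the set C_0(u,x) is a nonempty compact subset of ℝ, and the maps x ↦ min C_0(u,x) and x ↦ max C_0(u,x) are monotone nondecreasing: for all x_1 < x_2, min C_0(u,x_1) ≤ min C_0(u,x_2) and max C_0(u,x_1) ≤ max C_0(u,x_2). -/

import Mathlib

open MeasureTheory Set Filter

noncomputable section

/-- The discontinuous flux `f(x,u) = f_l(u)` for `x < 0`, `f_r(u)` for `x > 0`
(the value at the interface is taken to be `f_r(u)`). -/
def dflux (fl fr : ℝ → ℝ) (x u : ℝ) : ℝ := if x < 0 then fl u else fr u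

/-- The connection function `c^{AB}`. -/
def cAB (A B : ℝ) (x : ℝ) : ℝ := if x ≤ 0 then A else B

/-- An `AB`-entropy solution of `u_t + f(x,u)_x = 0` on `ℝ × [0,∞)` with
initial datum `u0`, for the flux `f(x,·) = fl` on `x<0` and `fr` on `x>0`,
relative to the connection `(A,B)`.  The structure bundles the solution `u`
(as a function of `(x,t)`), its one-sided spatial limits `um x t = u(x-,t)` and
`up x t = u(x+,t)` (for `t > 0`), the weak (distributional) formulation, the
Kružkov entropy inequalities away from the interface, the `AB`-interface
entropy inequality, `L¹_loc`-continuity in time and the initial condition. -/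
structure ABSol (fl fr : ℝ → ℝ) (A B : ℝ) (u0 : ℝ → ℝ) where
  u : ℝ → ℝ → ℝ
  meas : Measurable (Function.uncurry u)
  bdd : ∃ M : ℝ, ∀ x t, |u x t| ≤ M
  um : ℝ → ℝ → ℝ
  up : ℝ → ℝ → ℝ
  um_spec : ∀ x t, 0 < t →
    Tendsto (fun y => u y t) (nhdsWithin x (Iio x)) (nhds (um x t))
  up_spec : ∀ x t, 0 < t →
    Tendsto (fun y => u y t) (nhdsWithin x (Ioi x)) (nhds (up x t))
  weak : ∀ φ : ℝ → ℝ → ℝ,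
    ContDiff ℝ 1 (fun p : ℝ × ℝ => φ p.1 p.2) →
    HasCompactSupport (fun p : ℝ × ℝ => φ p.1 p.2) →
    (∀ x t, t ≤ 0 → φ x t = 0) →
    (∫ p : ℝ × ℝ, (u p.1 p.2 * deriv (fun s => φ p.1 s) p.2 +
        dflux fl fr p.1 (u p.1 p.2) * deriv (fun y => φ y p.2) p.1)) = 0
  kruzkov_l : ∀ (k : ℝ) (φ : ℝ → ℝ → ℝ),
    ContDiff ℝ 1 (fun p : ℝ × ℝ => φ p.1 p.2) →
    HasCompactSupport (fun p : ℝ × ℝ => φ p.1 p.2) →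
    (∀ x t, 0 ≤ φ x t) →
    (∀ x t, 0 ≤ x ∨ t ≤ 0 → φ x t = 0) →
    0 ≤ ∫ p : ℝ × ℝ, (|u p.1 p.2 - k| * deriv (fun s => φ p.1 s) p.2 +
        Real.sign (u p.1 p.2 - k) * (fl (u p.1 p.2) - fl k) *
          deriv (fun y => φ y p.2) p.1)
  kruzkov_r : ∀ (k : ℝ) (φ : ℝ → ℝ → ℝ),
    ContDiff ℝ 1 (fun p : ℝ × ℝ => φ p.1 p.2) →
    HasCompactSupport (fun p : ℝ × ℝ => φ p.1 p.2) →
    (∀ x t, 0 ≤ φ x t) →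
    (∀ x t, x ≤ 0 ∨ t ≤ 0 → φ x t = 0) →
    0 ≤ ∫ p : ℝ × ℝ, (|u p.1 p.2 - k| * deriv (fun s => φ p.1 s) p.2 +
        Real.sign (u p.1 p.2 - k) * (fr (u p.1 p.2) - fr k) *
          deriv (fun y => φ y p.2) p.1)
  interfaceEntropy : ∀ φ : ℝ → ℝ → ℝ,
    ContDiff ℝ 1 (fun p : ℝ × ℝ => φ p.1 p.2) →
    HasCompactSupport (fun p : ℝ × ℝ => φ p.1 p.2) →
    (∀ x t, 0 ≤ φ x t) →
    (∀ x t, t ≤ 0 → φ x t = 0) →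
    0 ≤ ∫ p : ℝ × ℝ, (|u p.1 p.2 - cAB A B p.1| * deriv (fun s => φ p.1 s) p.2 +
        Real.sign (u p.1 p.2 - cAB A B p.1) *
          (dflux fl fr p.1 (u p.1 p.2) - dflux fl fr p.1 (cAB A B p.1)) *
          deriv (fun y => φ y p.2) p.1)
  timeCont : ∀ (r t₀ : ℝ), 0 ≤ t₀ →
    Tendsto (fun t => ∫ x in Icc (-r) r, |u x t - u x t₀|)
      (nhdsWithin t₀ (Ici 0)) (nhds 0)
  init : ∀ᵐ x : ℝ ∂volume, u x 0 = u0 x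

/-- `AB`-genuine/interface characteristic for the `AB`-entropy solution `sol`,
on the time interval `[0,T]`, where `γ = f_l(A) = f_r(B)`. -/
def IsABgic (T : ℝ) (fl fr : ℝ → ℝ) (γ : ℝ) {A B : ℝ} {u0 : ℝ → ℝ}
    (sol : ABSol fl fr A B u0) (ζ : ℝ → ℝ) : Prop :=
  (∃ K : NNReal, LipschitzOnWith K ζ (Icc 0 T)) ∧
  (∀ᵐ t ∂(volume.restrict (Icc 0 T)),
    (ζ t < 0 → HasDerivAt ζ (deriv fl (sol.um (ζ t) t)) t ∧
      deriv fl (sol.um (ζ t) t) = deriv fl (sol.up (ζ t) t)) ∧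
    (0 < ζ t → HasDerivAt ζ (deriv fr (sol.um (ζ t) t)) t ∧
      deriv fr (sol.um (ζ t) t) = deriv fr (sol.up (ζ t) t)) ∧
    (ζ t = 0 → fl (sol.um 0 t) = γ ∧ fr (sol.up 0 t) = γ))

/-- `C(u,x)`: the set of `AB`-genuine/interface characteristics of `sol`
reaching `x` at time `T`. -/
def charSet (T : ℝ) (fl fr : ℝ → ℝ) (γ : ℝ) {A B : ℝ} {u0 : ℝ → ℝ}
    (sol : ABSol fl fr A B u0) (x : ℝ) : Set (ℝ → ℝ) :=
  {ζ | IsABgic T fl fr γ sol ζ ∧ ζ T = x}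

/-- `C₀(u,x)`: the set of initial positions `ζ(0)` of characteristics in `C(u,x)`. -/
def charSet0 (T : ℝ) (fl fr : ℝ → ℝ) (γ : ℝ) {A B : ℝ} {u0 : ℝ → ℝ}
    (sol : ABSol fl fr A B u0) (x : ℝ) : Set ℝ :=
  (fun ζ : ℝ → ℝ => ζ 0) '' charSet T fl fr γ sol x

/-- Membership in `L^∞(ℝ)`: measurable and (essentially) bounded. -/
def IsLinf (g : ℝ → ℝ) : Prop :=
  Measurable g ∧ ∃ M : ℝ, ∀ᵐ x : ℝ ∂volume, |g x| ≤ M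

/-- `ω ∈ A^{[AB]}(T)`: the profile `ω` is attainable at time `T`. -/
def Attainable (T : ℝ) (fl fr : ℝ → ℝ) (A B : ℝ) (ω : ℝ → ℝ) : Prop :=
  ∃ u0 : ℝ → ℝ, IsLinf u0 ∧
    ∃ sol : ABSol fl fr A B u0, ∀ᵐ x : ℝ ∂volume, sol.u x T = ω x

/-- `I_T^{[AB]}(ω)`: the set of (bounded) initial data whose `AB`-entropy
solution coincides a.e. with `ω` at time `T`. -/
def InitialSet (T : ℝ) (fl fr : ℝ → ℝ) (A B : ℝ) (ω : ℝ → ℝ) : Set (ℝ → ℝ) :=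
  {u0 | IsLinf u0 ∧
    ∃ sol : ABSol fl fr A B u0, ∀ᵐ x : ℝ ∂volume, sol.u x T = ω x}

/-- `x` is a point of continuity of `ω`: the one-sided limits exist and coincide. -/
def ContinuityPt (ω : ℝ → ℝ) (x : ℝ) : Prop :=
  ∃ l : ℝ, Tendsto ω (nhdsWithin x (Iio x)) (nhds l) ∧
    Tendsto ω (nhdsWithin x (Ioi x)) (nhds l)


/-- monotonicity for Lipschitz functions -/
lemma lip_mono {h : ℝ → ℝ} {K : NNReal} {a b : ℝ} (hab : a ≤ b)
    (hl : LipschitzOnWith K h (Icc a b))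
    (hd : ∀ᵐ t, t ∈ Ioo a b → ∀ d, HasDerivAt h d t → 0 ≤ d) : h a ≤ h b := by
  have hac : AbsolutelyContinuousOnInterval h a b :=
    LipschitzOnWith.absolutelyContinuousOnInterval (by rwa [uIcc_of_le hab])
  have h1 := hac.integral_deriv_eq_sub
  have h2 : 0 ≤ ∫ x in a..b, deriv h x := by
    rw [intervalIntegral.integral_of_le hab]
    apply setIntegral_nonneg_of_ae_restrict
    rw [← restrict_Ioo_eq_restrict_Ioc, EventuallyLE, ae_restrict_iff' measurableSet_Ioo]
    filter_upwards [hd] with t ht hti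
    by_cases hdt : DifferentiableAt ℝ h t
    · exact ht hti _ hdt.hasDerivAt
    · simp [deriv_zero_of_not_differentiableAt hdt]
  linarith

lemma lip_mono' {h : ℝ → ℝ} {K : NNReal} {a b : ℝ} (hab : a ≤ b) {C : ℝ}
    (hl : LipschitzOnWith K h (Icc a b))
    (hd : ∀ᵐ t, t ∈ Ioo a b → ∀ d, HasDerivAt h d t → C ≤ d) : h a + C * (b - a) ≤ h b := by
  have hlin : LipschitzWith ‖C‖₊ (fun t : ℝ => C * t) := by
    apply LipschitzWith.of_dist_le_mul
    intro x y
    simp [Real.dist_eq, ← mul_sub, abs_mul]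
  have := lip_mono (h := fun t => h t - C * t) hab (hl.sub (hlin.lipschitzOnWith)) (by
    filter_upwards [hd] with t ht hti d hdt
    have h3 : HasDerivAt h (d + C) t := by
      have := hdt.add ((hasDerivAt_id t).const_mul C)
      refine (this.congr_deriv (by simp)).congr_of_eventuallyEq (Eventually.of_forall fun s => ?_)
      simp
    linarith [ht hti _ h3])
  linarith

/-- if the line derivative is a.e. bounded above in an open set, get the inequality on
segments -/
lemma line_ineq {w : ℝ × ℝ → ℝ} {K : NNReal} (hw : LipschitzWith K w) {U : Set (ℝ × ℝ)}
    (hU : IsOpen U) (v : ℝ × ℝ) {C : ℝ}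
    (hae : ∀ᵐ P : ℝ × ℝ, P ∈ U → ∀ d, HasLineDerivAt ℝ w d P v → d ≤ C)
    {P : ℝ × ℝ} {τ : ℝ} (hτ : 0 ≤ τ) (hseg : ∀ s ∈ Icc 0 τ, P + s • v ∈ U) :
    w (P + τ • v) ≤ w P + C * τ := by
  set N := toMeasurable volume {P : ℝ × ℝ | ¬ (P ∈ U → ∀ d, HasLineDerivAt ℝ w d P v → d ≤ C)}
  have hN0 : volume N = 0 := by
    rw [measure_toMeasurable]; exact hae
  have hNm : MeasurableSet N := measurableSet_toMeasurable _ _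
  have hgood : ∀ Q, Q ∉ N → Q ∈ U → ∀ d, HasLineDerivAt ℝ w d Q v → d ≤ C := by
    intro Q hQ
    by_contra hc
    exact hQ (subset_toMeasurable _ _ hc)
  have h1 : ∀ t : ℝ, ∀ᵐ Q : ℝ × ℝ, Q + t • v ∉ N := by
    intro t
    have := (measurePreserving_add_right (volume : Measure (ℝ × ℝ)) (t • v)).quasiMeasurePreserving
    exact this.ae (measure_eq_zero_iff_ae_notMem.1 hN0)
  have h2 : ∀ᵐ Q : ℝ × ℝ, ∀ᵐ t : ℝ, Q + t • v ∉ N := by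
    rw [Measure.ae_ae_comm]
    · exact Eventually.of_forall h1
    · have : Measurable (fun x : (ℝ × ℝ) × ℝ => x.1 + x.2 • v) := by fun_prop
      exact (this hNm).compl
  have hev : ∀ᶠ Q in nhds P, ∀ s ∈ Icc 0 τ, Q + s • v ∈ U := by
    have hc : Continuous (fun x : (ℝ × ℝ) × ℝ => x.1 + x.2 • v) := by fun_prop
    have := isCompact_Icc.eventually_forall_of_forall_eventually (x₀ := P) (K := Icc (0:ℝ) τ)
      (P := fun Q s => Q + s • v ∈ U) (fun s hs => by
        exact hc.continuousAt.eventually (hU.mem_nhds (hseg s hs)))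
    exact this
  have hQ : ∀ Q : ℝ × ℝ, (∀ s ∈ Icc 0 τ, Q + s • v ∈ U) → (∀ᵐ t : ℝ, Q + t • v ∉ N) →
      w (Q + τ • v) ≤ w Q + C * τ := by
    intro Q hQ1 hQ2
    have hl : LipschitzWith (K * ‖v‖₊) (fun s : ℝ => w (Q + s • v)) := by
      apply hw.comp
      apply LipschitzWith.of_dist_le_mul
      intro x y
      simp [dist_eq_norm, ← sub_smul, norm_smul, mul_comm]
    have := lip_mono' (h := fun s => - w (Q + s • v)) (C := -C) hτ (hl.neg.lipschitzOnWith) (by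
      filter_upwards [hQ2] with t ht hti d hd
      have h3 : HasLineDerivAt ℝ w (-d) (Q + t • v) v := by
        have h4 : HasDerivAt (fun s => w (Q + s • v)) (-d) t := by
          have := hd.neg
          refine this.congr_of_eventuallyEq (Eventually.of_forall fun s => ?_)
          simp
        have h5 : HasDerivAt (fun s : ℝ => t + s) 1 0 := by
          simpa using (hasDerivAt_id (0:ℝ)).const_add t
        have h6 := HasDerivAt.comp (0:ℝ) (h₂ := fun s => w (Q + s • v)) (h := fun s : ℝ => t + s) (by simpa using h4) h5
        rw [HasLineDerivAt]
        refine (h6.congr_deriv (by simp)).congr_of_eventuallyEq (Eventually.of_forall fun s => ?_)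
        simp [add_smul, add_assoc]
      linarith [hgood _ ht (hQ1 t ⟨hti.1.le, hti.2.le⟩) _ h3])
    simp at this
    linarith
  have hdense : ∃ᶠ Q in nhds P, (∀ᵐ t : ℝ, Q + t • v ∉ N) := by
    have := (Measure.dense_of_ae h2) P
    exact mem_closure_iff_frequently.1 this
  have hfr : ∃ᶠ Q in nhds P, 0 ≤ w Q + C * τ - w (Q + τ • v) :=
    (hdense.and_eventually hev).mono fun Q h => by linarith [hQ Q h.2 h.1]
  have hcont : Continuous (fun Q => w Q + C * τ - w (Q + τ • v)) := by
    have := hw.continuous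
    fun_prop
  have hmem : P ∈ closure {Q | 0 ≤ w Q + C * τ - w (Q + τ • v)} := mem_closure_iff_frequently.2 hfr
  rw [(isClosed_le continuous_const hcont).closure_eq] at hmem
  simp only [mem_ofPred_eq] at hmem
  linarith

/-- data of a uniformly convex flux -/
structure Flux (f f' g : ℝ → ℝ) : Prop where
  hd : ∀ v, HasDerivAt f (f' v) v
  fg : ∀ p, f' (g p) = p
  gf : ∀ v, g (f' v) = v
  gc : Continuous g
  mono : StrictMono f'
  cont' : Continuous f'
  tan : ∀ u v, f v + f' v * (u - v) ≤ f u

def Leg (f g : ℝ → ℝ) (p : ℝ) : ℝ := p * g p - f (g p)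

namespace Flux
variable {f f' g : ℝ → ℝ}

lemma gmono (F : Flux f f' g) : StrictMono g := by
  intro p q hpq
  by_contra h
  push Not at h
  have := F.mono.monotone h
  rw [F.fg, F.fg] at this
  linarith

lemma cont (F : Flux f f' g) : Continuous f :=
  continuous_iff_continuousAt.2 fun v => (F.hd v).continuousAt

lemma leg_ge (F : Flux f f' g) (p k : ℝ) : p * k - f k ≤ Leg f g p := by
  have := F.tan k (g p)
  rw [F.fg] at this
  unfold Leg
  linarith

lemma leg_fderiv (v : ℝ) (F : Flux f f' g) : Leg f g (f' v) = f' v * v - f v := by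
  simp [Leg, F.gf]

lemma leg_deriv (F : Flux f f' g) (p : ℝ) : HasDerivAt (Leg f g) (g p) p := by
  have key : ∀ q, |Leg f g q - Leg f g p - (q - p) * g p| ≤ |g q - g p| * |q - p| := by
    intro q
    have h1 := F.leg_ge q (g p)
    have h2 := F.leg_ge p (g q)
    unfold Leg at *
    rw [← abs_mul, abs_of_nonneg (by linarith)]
    refine le_trans ?_ (le_abs_self _)
    linarith
  rw [hasDerivAt_iff_isLittleO]
  rw [Asymptotics.isLittleO_iff]
  intro c hc
  have hg : ∀ᶠ q in nhds p, |g q - g p| < c := by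
    have := Metric.continuousAt_iff'.1 (F.gc.continuousAt (x := p)) c hc
    simpa [Real.dist_eq] using this
  filter_upwards [hg] with q hq
  simp only [smul_eq_mul, Real.norm_eq_abs]
  exact (key q).trans (by gcongr)

lemma leg_cont (F : Flux f f' g) : Continuous (Leg f g) :=
  continuous_iff_continuousAt.2 fun v => (F.leg_deriv v).continuousAt

lemma reflect (F : Flux f f' g) :
    Flux (fun v => f (-v)) (fun v => - f' (-v)) (fun p => - g (-p)) where
  hd v := by
    have := (F.hd (-v)).comp v (hasDerivAt_neg v)
    simpa [Function.comp_def] using this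
  fg p := by simp [F.fg]
  gf v := by simp [F.gf]
  gc := (F.gc.comp continuous_neg).neg
  mono := by
    intro a b hab
    have := F.mono (neg_lt_neg hab)
    simpa using this
  cont' := (F.cont'.comp continuous_neg).neg
  tan u v := by
    have := F.tan (-u) (-v)
    linarith

lemma leg_reflect (p : ℝ) : Leg (fun v => f (-v)) (fun p => - g (-p)) p = Leg f g (-p) := by
  simp [Leg]

end Flux

lemma flux_exists {f : ℝ → ℝ} (hC : ContDiff ℝ 2 f) {a : ℝ} (ha : 0 < a)
    (h2 : ∀ w, a ≤ deriv (deriv f) w) : ∃ g, Flux f (deriv f) g := by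
  have hd1 : Differentiable ℝ f := hC.differentiable (by norm_num)
  have hC1 : ContDiff ℝ 1 (deriv f) := by
    have := (contDiff_succ_iff_deriv (n := 1) (f := f) (𝕜 := ℝ)).1 (by norm_num; exact hC)
    exact this.2.2
  have hd2 : Differentiable ℝ (deriv f) := hC1.differentiable (by norm_num)
  have hlow : ∀ x y, x ≤ y → a * (y - x) ≤ deriv f y - deriv f x := by
    intro x y hxy
    exact mul_sub_le_image_sub_of_le_deriv hd2 h2 hxy
  have hmono : StrictMono (deriv f) := by
    intro x y hxy
    have := hlow x y hxy.le
    have : 0 < a * (y - x) := mul_pos ha (by linarith)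
    linarith
  have hsurj : Function.Surjective (deriv f) := by
    apply hC1.continuous.surjective
    · refine tendsto_atTop_mono' _ (f₁ := fun x => deriv f 0 + a * x) ?_ ?_
      · filter_upwards [eventually_ge_atTop 0] with x hx
        have := hlow 0 x hx
        linarith
      · exact tendsto_atTop_add_const_left _ _ (tendsto_id.const_mul_atTop ha)
    · refine tendsto_atBot_mono' _ (f₁ := fun x => deriv f 0 + a * x) ?_ ?_
      · filter_upwards [eventually_le_atBot 0] with x hx
        have := hlow x 0 hx
        linarith
      · exact tendsto_atBot_add_const_left _ _ (tendsto_id.const_mul_atBot ha)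
  let e := hmono.orderIsoOfSurjective _ hsurj
  have he : ∀ x, e x = deriv f x := fun x => rfl
  refine ⟨e.symm, fun v => (hd1 v).hasDerivAt, fun p => ?_, fun v => ?_, e.symm.continuous, hmono,
    hC1.continuous, ?_⟩
  · rw [← he]; simp
  · rw [← he]; simp
  · intro u v
    have hconv : ConvexOn ℝ univ f := hmono.monotone.convexOn_univ_of_deriv hd1
    rcases lt_trichotomy u v with h | h | h
    · have := hconv.slope_le_of_hasDerivAt (mem_univ u) (mem_univ v) h (hd1 v).hasDerivAt
      rw [slope_def_field, div_le_iff₀ (by linarith)] at this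
      linarith
    · subst h; simp
    · have := hconv.le_slope_of_hasDerivAt (mem_univ v) (mem_univ u) h (hd1 v).hasDerivAt
      rw [slope_def_field, le_div_iff₀ (by linarith)] at this
      linarith


open scoped Convolution in
lemma conv_lineDeriv (φ : ContDiffBump (0 : ℝ × ℝ)) {h : ℝ × ℝ → ℝ} {K : NNReal}
    (hl : LipschitzWith K h) (P v : ℝ × ℝ) :
    lineDeriv ℝ (φ.normed volume ⋆[ContinuousLinearMap.lsmul ℝ ℝ, volume] h) P v =
      (φ.normed volume ⋆[ContinuousLinearMap.lsmul ℝ ℝ, volume] (fun Q => lineDeriv ℝ h Q v)) P := by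
  have hφc : Continuous (φ.normed volume) := φ.continuous_normed
  have hφs : HasCompactSupport (φ.normed volume) := φ.hasCompactSupport_normed
  have hφi : Integrable (φ.normed volume) volume := hφc.integrable_of_hasCompactSupport hφs
  have hhc := hl.continuous
  have hv : ∀ᵐ t : ℝ × ℝ, LineDifferentiableAt ℝ h (P - t) v := by
    have := (Measure.measurePreserving_sub_left (volume : Measure (ℝ × ℝ)) P).quasiMeasurePreserving
    exact this.ae (hl.ae_lineDifferentiableAt v)
  have key := hasDerivAt_integral_of_dominated_loc_of_lip (μ := (volume : Measure (ℝ × ℝ)))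
    (F := fun (s : ℝ) t => φ.normed volume t * h (P + s • v - t))
    (F' := fun t => φ.normed volume t * lineDeriv ℝ h (P - t) v) (x₀ := (0:ℝ)) (s := univ)
    (bound := fun t => |φ.normed volume t| * (K * ‖v‖)) univ_mem
    (Eventually.of_forall fun s => by
      apply Continuous.aestronglyMeasurable
      fun_prop)
    (by
      apply Continuous.integrable_of_hasCompactSupport
      · fun_prop
      · exact hφs.mul_right)
    (by
      apply AEStronglyMeasurable.mul hφc.aestronglyMeasurable
      exact ((measurable_lineDeriv hhc).comp (measurable_const.sub measurable_id)).aestronglyMeasurable)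
    (by
      refine Eventually.of_forall fun t => ?_
      apply LipschitzOnWith.of_dist_le_mul
      intro x _ y _
      rw [Real.dist_eq, ← mul_sub, abs_mul]
      have h1 := hl.dist_le_mul (P + x • v - t) (P + y • v - t)
      have h2 : dist (P + x • v - t) (P + y • v - t) = ‖v‖ * dist x y := by
        rw [dist_eq_norm, show P + x • v - t - (P + y • v - t) = (x - y) • v by
          rw [sub_smul]; abel, norm_smul, Real.dist_eq, Real.norm_eq_abs, mul_comm]
      rw [h2, Real.dist_eq] at h1
      calc |φ.normed volume t| * |h (P + x • v - t) - h (P + y • v - t)|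
          ≤ |φ.normed volume t| * (K * (‖v‖ * dist x y)) := by gcongr
        _ = _ := by
          rw [Real.coe_nnabs, abs_of_nonneg (a := |φ.normed volume t| * (K * ‖v‖)) (by positivity)]; ring)
    (by exact (hφi.abs).mul_const _)
    (by
      filter_upwards [hv] with t ht
      have h1 := ht.hasLineDerivAt
      unfold HasLineDerivAt at h1
      have h2 := h1.const_mul (φ.normed volume t)
      refine h2.congr_of_eventuallyEq (Eventually.of_forall fun s => ?_)
      simp only []
      rw [show P + s • v - t = P - t + s • v by abel])
  have h3 := key.2
  rw [lineDeriv]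
  have h4 : (fun s : ℝ => (φ.normed volume ⋆[ContinuousLinearMap.lsmul ℝ ℝ, volume] h) (P + s • v))
      = fun s => ∫ t, φ.normed volume t * h (P + s • v - t) := by
    ext s
    simp [convolution_def]
  rw [h4, h3.deriv]
  simp [convolution_def]

lemma lineDeriv_zero_of_notMem {h : ℝ × ℝ → ℝ} {P : ℝ × ℝ} (hP : P ∉ tsupport h) (v : ℝ × ℝ) :
    lineDeriv ℝ h P v = 0 := by
  have h1 : h =ᶠ[nhds P] fun _ => 0 := notMem_tsupport_iff_eventuallyEq.1 hP
  rw [h1.lineDeriv_eq]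
  simp [lineDeriv]

open scoped Convolution in
lemma lip_test {E Q : ℝ × ℝ → ℝ} (hE : Measurable E) (hQ : Measurable Q) {CE CQ : ℝ}
    (hEb : ∀ P, |E P| ≤ CE) (hQb : ∀ P, |Q P| ≤ CQ) {U : Set (ℝ × ℝ)} (hU : IsOpen U)
    (hC1 : ∀ φ : ℝ × ℝ → ℝ, ContDiff ℝ 1 φ → HasCompactSupport φ → (∀ P, 0 ≤ φ P) →
      (∀ P, P ∉ U → φ P = 0) →
      0 ≤ ∫ P, (E P * fderiv ℝ φ P (0, 1) + Q P * fderiv ℝ φ P (1, 0)))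
    {h : ℝ × ℝ → ℝ} {K : NNReal} (hl : LipschitzWith K h) (hs : HasCompactSupport h)
    (h0 : ∀ P, 0 ≤ h P) (hsU : tsupport h ⊆ U) :
    0 ≤ ∫ P, (E P * lineDeriv ℝ h P (0, 1) + Q P * lineDeriv ℝ h P (1, 0)) := by
  have hhc := hl.continuous
  have hli : LocallyIntegrable h := hhc.locallyIntegrable
  let φ : ℕ → ContDiffBump (0 : ℝ × ℝ) := fun n =>
    { rIn := 1 / (2 * ((n : ℝ) + 1)), rOut := 1 / ((n : ℝ) + 1)
      rIn_pos := by positivity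
      rIn_lt_rOut := by
        apply one_div_lt_one_div_of_lt <;> [positivity; skip]
        have : (0:ℝ) ≤ n := n.cast_nonneg
        linarith }
  have hrout : ∀ n, (φ n).rOut = 1 / ((n : ℝ) + 1) := fun n => rfl
  have hrin : ∀ n, (φ n).rIn = 1 / (2 * ((n : ℝ) + 1)) := fun n => rfl
  have hφ0 : Tendsto (fun n => (φ n).rOut) atTop (nhds 0) := by
    simp only [hrout]; exact tendsto_one_div_add_atTop_nhds_zero_nat
  let hn : ℕ → ℝ × ℝ → ℝ := fun n =>
    (φ n).normed volume ⋆[ContinuousLinearMap.lsmul ℝ ℝ, volume] h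
  have hnC : ∀ n, ContDiff ℝ 1 (hn n) := fun n =>
    (φ n).hasCompactSupport_normed.contDiff_convolution_left _ (φ n).contDiff_normed hli
  have hns : ∀ n, HasCompactSupport (hn n) := fun n =>
    HasCompactSupport.convolution _ (φ n).hasCompactSupport_normed hs
  have hn0 : ∀ n P, 0 ≤ hn n P := by
    intro n P
    apply integral_nonneg
    intro t
    simp only [ContinuousLinearMap.lsmul_apply, smul_eq_mul, Pi.zero_apply]
    exact mul_nonneg ((φ n).nonneg_normed _) (h0 _)
  obtain ⟨δ, hδ, hδU⟩ := (show IsCompact (tsupport h) from hs).exists_thickening_subset_open hU hsU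
  have hδn : ∀ᶠ n in atTop, (φ n).rOut < δ := hφ0.eventually (gt_mem_nhds hδ)
  have hzero : ∀ (G : ℝ × ℝ → ℝ), (∀ P ∉ tsupport h, G P = 0) → ∀ n P ε, (φ n).rOut ≤ ε →
      P ∉ Metric.thickening ε (tsupport h) →
      ((φ n).normed volume ⋆[ContinuousLinearMap.lsmul ℝ ℝ, volume] G) P = 0 := by
    intro G hG n P ε hε hP
    have hb : ∀ x ∈ Metric.ball P (φ n).rOut, G x = 0 := by
      intro x hx
      apply hG
      intro hx'
      exact hP (Metric.mem_thickening_iff.2 ⟨x, hx', by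
        rw [dist_comm]; exact lt_of_lt_of_le hx hε⟩)
    have hP0 : G P = 0 := hb P (Metric.mem_ball_self (φ n).rOut_pos)
    rw [(φ n).normed_convolution_eq_right, hP0]
    intro x hx
    rw [hb x hx, hP0]
  have hnU : ∀ᶠ n in atTop, ∀ P, P ∉ U → hn n P = 0 := by
    filter_upwards [hδn] with n hn P hP
    exact hzero h (fun P hP => image_eq_zero_of_notMem_tsupport hP) n P δ hn.le
      (fun h' => hP (hδU h'))
  have hfd : ∀ n P v, fderiv ℝ (hn n) P v =
      ((φ n).normed volume ⋆[ContinuousLinearMap.lsmul ℝ ℝ, volume]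
        (fun Q => lineDeriv ℝ h Q v)) P := by
    intro n P v
    rw [← conv_lineDeriv (φ n) hl P v]
    exact (((hnC n).differentiable (by norm_num)) P).lineDeriv_eq_fderiv.symm
  have hld : ∀ v, ∀ Q, |lineDeriv ℝ h Q v| ≤ K * ‖v‖ := fun v Q => by
    rw [← Real.norm_eq_abs]; exact norm_lineDeriv_le_of_lipschitz ℝ hl
  have hfb : ∀ n P v, |fderiv ℝ (hn n) P v| ≤ K * ‖v‖ := by
    intro n P v
    rw [hfd]
    have hi1 : Integrable (fun t => (φ n).normed volume t * (K * ‖v‖)) :=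
      ((φ n).continuous_normed.integrable_of_hasCompactSupport
        (φ n).hasCompactSupport_normed).mul_const _
    rw [convolution_def]
    calc |∫ t, _| ≤ ∫ t, (φ n).normed volume t * (K * ‖v‖) := by
          rw [← Real.norm_eq_abs]
          apply norm_integral_le_of_norm_le hi1
          refine Eventually.of_forall fun t => ?_
          simp only [ContinuousLinearMap.lsmul_apply, smul_eq_mul, norm_mul, Real.norm_eq_abs]
          rw [abs_of_nonneg ((φ n).nonneg_normed _)]
          exact mul_le_mul_of_nonneg_left (hld v _) ((φ n).nonneg_normed _)
      _ = K * ‖v‖ := by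
          rw [integral_mul_const, (φ n).integral_normed, one_mul]
  have hlim : ∀ v, ∀ᵐ P, Tendsto (fun n => fderiv ℝ (hn n) P v) atTop
      (nhds (lineDeriv ℝ h P v)) := by
    intro v
    have := ContDiffBump.ae_convolution_tendsto_right_of_locallyIntegrable (φ := φ) (l := atTop)
      (K := 2) (μ := volume) hφ0 (Eventually.of_forall fun n => by
        rw [hrout, hrin]; field_simp; norm_num) (hl.locallyIntegrable_lineDeriv v)
    filter_upwards [this] with P hP
    simpa only [hfd] using hP
  set Z := Metric.cthickening 1 (tsupport h)
  have hZ : IsCompact Z := (show IsCompact (tsupport h) from hs).cthickening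
  have hfz : ∀ n P v, P ∉ Z → fderiv ℝ (hn n) P v = 0 := by
    intro n P v hP
    rw [hfd]
    refine hzero _ (fun P hP => lineDeriv_zero_of_notMem hP v) n P 1 ?_ ?_
    · rw [hrout, div_le_one (by positivity)]
      have : (0:ℝ) ≤ n := n.cast_nonneg
      linarith
    · intro h'
      exact hP (Metric.thickening_subset_cthickening _ _ h')
  have hT : Tendsto (fun n => ∫ P, (E P * fderiv ℝ (hn n) P (0, 1) + Q P * fderiv ℝ (hn n) P (1, 0)))
      atTop (nhds (∫ P, (E P * lineDeriv ℝ h P (0, 1) + Q P * lineDeriv ℝ h P (1, 0)))) := by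
    have hCE : 0 ≤ CE := (abs_nonneg _).trans (hEb 0)
    have hCQ : 0 ≤ CQ := (abs_nonneg _).trans (hQb 0)
    apply tendsto_integral_of_dominated_convergence
      (Z.indicator fun _ => CE * (K * ‖((0:ℝ), (1:ℝ))‖) + CQ * (K * ‖((1:ℝ), (0:ℝ))‖))
    · intro n
      have hm : ∀ v, Measurable fun P => fderiv ℝ (hn n) P v := fun v =>
        measurable_fderiv_apply_const ℝ (hn n) v
      exact ((hE.mul (hm _)).add (hQ.mul (hm _))).aestronglyMeasurable
    · rw [integrable_indicator_iff hZ.measurableSet]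
      exact integrableOn_const hZ.measure_lt_top.ne
    · intro n
      refine Eventually.of_forall fun P => ?_
      by_cases hP : P ∈ Z
      · rw [indicator_of_mem hP]
        refine (norm_add_le _ _).trans ?_
        rw [norm_mul, norm_mul]
        simp only [Real.norm_eq_abs]
        gcongr
        · exact hEb P
        · exact hfb _ _ _
        · exact hQb P
        · exact hfb _ _ _
      · rw [indicator_of_notMem hP, hfz n P _ hP, hfz n P _ hP]
        simp
    · filter_upwards [hlim (0, 1), hlim (1, 0)] with P h1 h2
      exact (h1.const_mul _).add (h2.const_mul _)
  refine ge_of_tendsto hT ?_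
  filter_upwards [hnU] with n hnn
  exact hC1 _ (hnC n) (hns n) (hn0 n) hnn


lemma integrable_of_bdd {G : ℝ × ℝ → ℝ} (hG : Measurable G) {C : ℝ} (hb : ∀ P, |G P| ≤ C)
    {Z : Set (ℝ × ℝ)} (hZ : IsCompact Z) (h0 : ∀ P ∉ Z, G P = 0) : Integrable G := by
  have h1 : IntegrableOn G Z := by
    refine Measure.integrableOn_of_bounded (M := C) hZ.measure_lt_top.ne
      hG.aestronglyMeasurable ?_
    exact Eventually.of_forall fun P => by simpa using hb P
  refine (integrableOn_iff_integrable_of_support_subset ?_).1 h1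
  intro P hP
  by_contra h
  exact hP (h0 P h)

structure HalfPDE (f f' g : ℝ → ℝ) (w u : ℝ × ℝ → ℝ) (K : NNReal) (M : ℝ) : Prop where
  flux : Flux f f' g
  lip : LipschitzWith K w
  meas : Measurable u
  bdd : ∀ P, |u P| ≤ M
  pde : ∀ᵐ P : ℝ × ℝ, 0 < P.1 → 0 < P.2 → DifferentiableAt ℝ w P →
    fderiv ℝ w P (1, 0) = u P ∧ fderiv ℝ w P (0, 1) = - f (u P)
  kru : ∀ k, ∀ φ : ℝ × ℝ → ℝ, ContDiff ℝ 1 φ → HasCompactSupport φ → (∀ P, 0 ≤ φ P) →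
      (∀ P, P ∉ {P : ℝ × ℝ | 0 < P.1 ∧ 0 < P.2} → φ P = 0) →
      0 ≤ ∫ P, (|u P - k| * fderiv ℝ φ P (0, 1) +
        (Real.sign (u P - k) * (f (u P) - f k)) * fderiv ℝ φ P (1, 0))

lemma measurable_rsign : Measurable Real.sign := by
  unfold Real.sign
  exact Measurable.ite measurableSet_Iio measurable_const
    (Measurable.ite measurableSet_Ioi measurable_const measurable_const)

lemma Flux.lipb {f f' g : ℝ → ℝ} (F : Flux f f' g) (M k : ℝ) : ∃ C, 0 ≤ C ∧ ∀ v, |v| ≤ M →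
    |f v - f k| ≤ C * |v - k| := by
  refine ⟨|f' k| + |f' M| + |f' (-M)|, by positivity, fun v hv => ?_⟩
  rw [abs_le] at hv
  have h1 := F.tan v k
  have h2 := F.tan k v
  have h3 := F.mono.monotone hv.1
  have h4 := F.mono.monotone hv.2
  have h5 : |f' v| ≤ |f' M| + |f' (-M)| := by
    rw [abs_le]
    constructor
    · linarith [neg_abs_le (f' (-M)), abs_nonneg (f' M)]
    · linarith [le_abs_self (f' M), abs_nonneg (f' (-M))]
  have h6 : |f' k * (v - k)| = |f' k| * |v - k| := abs_mul _ _
  have h7 : |f' v * (k - v)| = |f' v| * |v - k| := by rw [abs_mul, abs_sub_comm k v]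
  have h8 : |f' v| * |v - k| ≤ (|f' M| + |f' (-M)|) * |v - k| := by gcongr
  have h9 : 0 ≤ |f' k| * |v - k| := by positivity
  have h10 : 0 ≤ (|f' M| + |f' (-M)|) * |v - k| := by positivity
  rw [abs_le]
  constructor
  · linarith [neg_abs_le (f' k * (v - k)), le_abs_self (f' k * (v - k))]
  · linarith [neg_abs_le (f' v * (k - v)), le_abs_self (f' v * (k - v))]

lemma LL {f f' g : ℝ → ℝ} {w u : ℝ × ℝ → ℝ} {K : NNReal} {M : ℝ} (H : HalfPDE f f' g w u K M)
    {P0 : ℝ × ℝ} (hx : 0 < P0.1) (ht : 0 < P0.2) {k r : ℝ}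
    (hloc : ∀ ω > 0, ∀ᶠ P in nhds P0,
      w P0 + k * (P.1 - P0.1) + r * (P.2 - P0.2) - ω * ‖P - P0‖ ≤ w P) : 0 ≤ r + f k := by
  by_contra hneg
  push Not at hneg
  set c0 := -(r + f k) with hc0
  have hc0p : 0 < c0 := by linarith
  obtain ⟨C, hC0, hC⟩ := H.flux.lipb M k
  set ω := c0 / (4 * (1 + C)) with hω
  have hωp : 0 < ω := by positivity
  have hωe : 2 * ω * (1 + C) = c0 / 2 := by rw [hω]; field_simp; norm_num
  set U : Set (ℝ × ℝ) := {P : ℝ × ℝ | 0 < P.1 ∧ 0 < P.2} with hUdef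
  have hU : IsOpen U := (isOpen_lt continuous_const continuous_fst).inter
    (isOpen_lt continuous_const continuous_snd)
  have hev := (hloc ω hωp).and (hU.mem_nhds (show P0 ∈ U from ⟨hx, ht⟩))
  obtain ⟨ρ, hρ, hball⟩ := Metric.eventually_nhds_iff.1 hev
  set aff : ℝ × ℝ → ℝ := fun P => w P0 + k * (P.1 - P0.1) + r * (P.2 - P0.2) with haff
  set N : ℝ × ℝ → ℝ := fun P => ‖P - P0‖ with hN
  have hNl : LipschitzWith 1 N := by
    apply LipschitzWith.of_dist_le_mul
    intro P Q
    rw [Real.dist_eq, dist_eq_norm, NNReal.coe_one, one_mul]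
    refine (abs_norm_sub_norm_le _ _).trans (le_of_eq ?_)
    congr 1; abel
  have haffl : ∃ Ka : NNReal, LipschitzWith Ka aff := by
    refine ⟨‖k‖₊ + ‖r‖₊, LipschitzWith.of_dist_le_mul fun P Q => ?_⟩
    rw [Real.dist_eq, dist_eq_norm]
    have h1 : |P.1 - Q.1| ≤ ‖P - Q‖ := norm_fst_le (P - Q)
    have h2 : |P.2 - Q.2| ≤ ‖P - Q‖ := norm_snd_le (P - Q)
    have h3 : aff P - aff Q = k * (P.1 - Q.1) + r * (P.2 - Q.2) := by simp only [haff]; ring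
    rw [h3]
    refine (abs_add_le _ _).trans ?_
    rw [abs_mul, abs_mul]
    push_cast
    rw [add_mul, Real.norm_eq_abs, Real.norm_eq_abs]
    gcongr
  obtain ⟨Ka, hKa⟩ := haffl
  have hωN : LipschitzWith (‖ω‖₊ * 1) (fun P => ω * N P) := by
    have := (lipschitzWith_smul ω).comp hNl
    exact this
  set δ := ω * ρ / 2 with hδ
  have hδp : 0 < δ := by positivity
  set h : ℝ × ℝ → ℝ := fun P => max 0 (δ - (max (w P) (aff P - ω * N P) - aff P + (ω * N P + ω * N P)))
    with hh
  have hlip : ∃ Kh : NNReal, LipschitzWith Kh h := by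
    have h1 := H.lip.max (hKa.sub hωN)
    have h2 := ((h1.sub hKa).add (hωN.add hωN))
    have h3 := (LipschitzWith.const (α := ℝ × ℝ) δ).sub h2
    exact ⟨_, h3.const_max 0⟩
  obtain ⟨Kh, hKh⟩ := hlip
  have hhc := hKh.continuous
  have h0 : ∀ P, 0 ≤ h P := fun P => le_max_left _ _
  have hhN : ∀ P, 0 < h P → N P < ρ / 2 := by
    intro P hP
    rcases lt_max_iff.1 hP with h1 | h1
    · exact absurd h1 (lt_irrefl _)
    · have h2 := le_max_right (w P) (aff P - ω * N P)
      have h3 : ω * N P < ω * (ρ / 2) := by linarith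
      exact lt_of_mul_lt_mul_left h3 hωp.le
  have hts : tsupport h ⊆ Metric.closedBall P0 (ρ / 2) := by
    apply closure_minimal _ Metric.isClosed_closedBall
    intro P hP
    have := hhN P (lt_of_le_of_ne (h0 P) (Ne.symm hP))
    rw [Metric.mem_closedBall, dist_eq_norm]
    exact this.le
  have hcs : HasCompactSupport h := HasCompactSupport.of_support_subset_isCompact
    (isCompact_closedBall P0 (ρ / 2)) ((subset_tsupport h).trans hts)
  have htsU : tsupport h ⊆ U := by
    intro P hP
    refine (hball ?_).2
    have := hts hP
    rw [Metric.mem_closedBall] at this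
    linarith
  have hEm : Measurable fun P => |u P - k| := (H.meas.sub_const k).abs
  have hQm : Measurable fun P => Real.sign (u P - k) * (f (u P) - f k) :=
    (measurable_rsign.comp (H.meas.sub_const k)).mul
      ((H.flux.cont.measurable.comp H.meas).sub_const _)
  have hEb : ∀ P, |(|u P - k|)| ≤ M + |k| := by
    intro P
    rw [abs_abs]
    exact (abs_sub _ _).trans (by linarith [H.bdd P])
  have hsign : ∀ y : ℝ, |Real.sign y| ≤ 1 := by
    intro y
    rcases Real.sign_apply_eq y with h | h | h <;> rw [h] <;> norm_num
  have hQb' : ∀ P, |Real.sign (u P - k) * (f (u P) - f k)| ≤ C * |u P - k| := by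
    intro P
    rw [abs_mul]
    calc _ ≤ 1 * |f (u P) - f k| := by gcongr; exact hsign _
      _ ≤ _ := by rw [one_mul]; exact hC _ (H.bdd P)
  have hQb : ∀ P, |Real.sign (u P - k) * (f (u P) - f k)| ≤ C * (M + |k|) := by
    intro P
    refine (hQb' P).trans ?_
    have := hEb P
    rw [abs_abs] at this
    gcongr
  have hmain := lip_test hEm hQm hEb hQb hU (H.kru k) hKh hcs h0 htsU
  set J : ℝ × ℝ → ℝ := fun P => |u P - k| * lineDeriv ℝ h P (0, 1) +
    Real.sign (u P - k) * (f (u P) - f k) * lineDeriv ℝ h P (1, 0) with hJ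
  have hld : ∀ v, ∀ Q, |lineDeriv ℝ h Q v| ≤ Kh * ‖v‖ := fun v Q => by
    rw [← Real.norm_eq_abs]; exact norm_lineDeriv_le_of_lipschitz ℝ hKh
  have hoff : ∀ P v, h P = 0 → lineDeriv ℝ h P v = 0 := by
    intro P v hP
    unfold lineDeriv
    apply IsLocalMin.deriv_eq_zero
    refine Eventually.of_forall fun s => ?_
    simp [hP, h0]
  have hmeasL : ∀ v, Measurable fun P => lineDeriv ℝ h P v := fun v => measurable_lineDeriv hhc
  have hJm : Measurable J := (hEm.mul (hmeasL _)).add (hQm.mul (hmeasL _))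
  have hM0 : 0 ≤ M := (abs_nonneg _).trans (H.bdd 0)
  have hJi : Integrable J := by
    refine integrable_of_bdd hJm (C := (M + |k|) * (Kh * ‖((0:ℝ),(1:ℝ))‖) +
      C * (M + |k|) * (Kh * ‖((1:ℝ),(0:ℝ))‖)) ?_ hcs ?_
    · intro P
      refine (abs_add_le _ _).trans ?_
      rw [abs_mul, abs_mul (Real.sign (u P - k) * (f (u P) - f k))]
      have := hEb P
      have := hQb P
      have := hld (0,1) P
      have := hld (1,0) P
      gcongr
    · intro P hP
      have := image_eq_zero_of_notMem_tsupport hP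
      simp [hJ, hoff P _ this]
  have hae : ∀ᵐ P : ℝ × ℝ, 0 < h P → J P ≤ -(c0 / 2) * |u P - k| ∧
      (u P = k → lineDeriv ℝ h P (0, 1) < 0) := by
    filter_upwards [H.pde, H.lip.ae_differentiableAt, hNl.ae_differentiableAt] with P h1 h2 h3 hP
    have hPU : P ∈ U := htsU (subset_tsupport h (ne_of_gt hP))
    obtain ⟨h4, h5⟩ := h1 hPU.1 hPU.2 h2
    set D : ℝ × ℝ →L[ℝ] ℝ := k • ContinuousLinearMap.fst ℝ ℝ ℝ + r • ContinuousLinearMap.snd ℝ ℝ ℝ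
    have haffd : HasFDerivAt aff D P := by
      have e1 : HasFDerivAt (fun P : ℝ × ℝ => D P) D P := D.hasFDerivAt
      have e2 := e1.add_const (w P0 - k * P0.1 - r * P0.2)
      refine e2.congr_of_eventuallyEq (Eventually.of_forall fun Q => ?_)
      simp [haff, D]; ring
    have hloc2 : h =ᶠ[nhds P] fun Q => δ - (w Q - aff Q + (ω * N Q + ω * N Q)) := by
      filter_upwards [(isOpen_lt continuous_const hhc).mem_nhds hP,
        (isOpen_lt (hNl.continuous) continuous_const).mem_nhds
          (show N P < ρ by linarith [hhN P hP])] with Q hQ1 hQ2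
      have hQ3 := (hball (y := Q) (by rw [dist_eq_norm]; exact hQ2)).1
      have hQ4 : max (w Q) (aff Q - ω * N Q) = w Q := max_eq_left hQ3
      simp only [hh, hQ4] at hQ1 ⊢
      rcases lt_max_iff.1 hQ1 with h | h
      · exact absurd h (lt_irrefl _)
      · exact max_eq_right h.le
    have hhd : HasFDerivAt h (-(fderiv ℝ w P - D + (ω • fderiv ℝ N P + ω • fderiv ℝ N P))) P := by
      have e1 := (h2.hasFDerivAt.sub haffd).add
        ((h3.hasFDerivAt.const_mul ω).add (h3.hasFDerivAt.const_mul ω))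
      have e2 := e1.const_sub δ
      refine HasFDerivAt.congr_of_eventuallyEq ?_ hloc2
      exact e2
    have hNx : ∀ v : ℝ × ℝ, |fderiv ℝ N P v| ≤ ‖v‖ := by
      intro v
      have := (fderiv ℝ N P).le_opNorm v
      have h6 := norm_fderiv_le_of_lipschitz ℝ hNl (x₀ := P)
      rw [← Real.norm_eq_abs]
      refine this.trans ?_
      calc _ ≤ (1:ℝ) * ‖v‖ := by gcongr; exact_mod_cast h6
        _ = _ := one_mul _
    have hl1 : lineDeriv ℝ h P (0, 1) = f (u P) + r - 2 * ω * fderiv ℝ N P (0, 1) := by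
      rw [(hhd.hasLineDerivAt (0,1)).lineDeriv]
      simp [h5, D]; ring
    have hl2 : lineDeriv ℝ h P (1, 0) = -(u P - k) - 2 * ω * fderiv ℝ N P (1, 0) := by
      rw [(hhd.hasLineDerivAt (1,0)).lineDeriv]
      simp [h4, D]; ring
    have hn1 : |fderiv ℝ N P (0, 1)| ≤ 1 := (hNx _).trans (by simp [Prod.norm_def])
    have hn2 : |fderiv ℝ N P (1, 0)| ≤ 1 := (hNx _).trans (by simp [Prod.norm_def])
    constructor
    · simp only [hJ, hl1, hl2]
      have hs : Real.sign (u P - k) * (u P - k) = |u P - k| := by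
        rcases lt_trichotomy (u P - k) 0 with h | h | h
        · rw [Real.sign_of_neg h, abs_of_neg h]; ring
        · rw [h]; simp
        · rw [Real.sign_of_pos h, abs_of_pos h]; ring
      set S := Real.sign (u P - k) * (f (u P) - f k) with hSdef
      have hS1 : S * (u P - k) = |u P - k| * (f (u P) - f k) := by rw [← hs, hSdef]; ring
      have hS2 : |S| ≤ C * |u P - k| := hQb' P
      have hS3 : -(S * fderiv ℝ N P (1, 0)) ≤ C * |u P - k| := by
        have : |S * fderiv ℝ N P (1, 0)| ≤ C * |u P - k| := by
          rw [abs_mul]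
          calc _ ≤ C * |u P - k| * 1 := by gcongr
            _ = _ := mul_one _
        linarith [neg_abs_le (S * fderiv ℝ N P (1, 0))]
      have hS4 : -(|u P - k| * fderiv ℝ N P (0, 1)) ≤ |u P - k| := by
        have : |u P - k| * (-1) ≤ |u P - k| * fderiv ℝ N P (0, 1) := by
          gcongr; linarith [(abs_le.1 hn1).1]
        linarith
      have e1 : |u P - k| * (f (u P) + r - 2 * ω * fderiv ℝ N P (0, 1)) +
        S * (-(u P - k) - 2 * ω * fderiv ℝ N P (1, 0)) =
        |u P - k| * (r + f k) + 2 * ω * (-(|u P - k| * fderiv ℝ N P (0, 1))) +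
        2 * ω * (-(S * fderiv ℝ N P (1, 0))) := by
        linear_combination -hS1
      rw [e1]
      have e2 : 2 * ω * (-(|u P - k| * fderiv ℝ N P (0, 1))) ≤ 2 * ω * |u P - k| := by gcongr
      have e3 : 2 * ω * (-(S * fderiv ℝ N P (1, 0))) ≤ 2 * ω * (C * |u P - k|) := by gcongr
      have e4 : 2 * ω * |u P - k| + 2 * ω * (C * |u P - k|) = c0 / 2 * |u P - k| := by
        rw [← hωe]; ring
      have e5 : r + f k = - c0 := by rw [hc0]; ring
      rw [e5]; linarith
    · intro huk
      rw [hl1, huk]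
      have : 2 * ω * (-fderiv ℝ N P (0, 1)) ≤ 2 * ω * 1 := by
        gcongr; linarith [(abs_le.1 hn1).1]
      have : 0 ≤ 2 * ω * C := by positivity
      linarith
  have hJle : ∀ᵐ P : ℝ × ℝ, J P ≤ 0 := by
    filter_upwards [hae] with P hP
    rcases (h0 P).lt_or_eq with h1 | h1
    · refine ((hP h1).1).trans ?_
      have : 0 ≤ c0 / 2 * |u P - k| := by positivity
      linarith
    · simp [hJ, hoff P _ h1.symm]
  have hJ0 : ∀ᵐ P : ℝ × ℝ, J P = 0 := by
    have e1 : ∫ P, -J P = 0 := by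
      apply le_antisymm
      · rw [integral_neg]; linarith
      · apply integral_nonneg_of_ae
        filter_upwards [hJle] with P hP
        simpa using hP
    have e2 := (integral_eq_zero_iff_of_nonneg_ae (by
      filter_upwards [hJle] with P hP
      simpa using hP) hJi.neg).1 e1
    filter_upwards [e2] with P hP
    simpa using hP
  have hneg2 : ∀ᵐ P : ℝ × ℝ, 0 < h P → lineDeriv ℝ h P (0, 1) < 0 := by
    filter_upwards [hJ0, hae] with P h1 h2 hP
    obtain ⟨h3, h4⟩ := h2 hP
    apply h4
    rw [h1] at h3
    have : |u P - k| ≤ 0 := by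
      by_contra hc
      push Not at hc
      have : 0 < c0 / 2 * |u P - k| := by positivity
      linarith
    linarith [abs_nonpos_iff.1 this]
  have hint0 : ∫ P, lineDeriv ℝ h P (0, 1) = 0 := by
    have := LipschitzWith.integral_lineDeriv_mul_eq (μ := (volume : Measure (ℝ × ℝ)))
      (LipschitzWith.const (α := ℝ × ℝ) (1:ℝ)) hKh hcs (-(0, 1))
    simp only [neg_neg, mul_one] at this
    rw [← this]
    simp [lineDeriv]
  have hli : Integrable (fun P => lineDeriv ℝ h P (0, 1)) :=
    integrable_of_bdd (hmeasL _) (hld _) hcs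
      (fun P hP => hoff P _ (image_eq_zero_of_notMem_tsupport hP))
  have hle : ∀ᵐ P : ℝ × ℝ, 0 ≤ - lineDeriv ℝ h P (0, 1) := by
    filter_upwards [hneg2] with P hP
    rcases (h0 P).lt_or_eq with h1 | h1
    · linarith [hP h1]
    · simp [hoff P _ h1.symm]
  have hz := (integral_eq_zero_iff_of_nonneg_ae hle hli.neg).1 (by
    rw [integral_neg, hint0, neg_zero])
  have hΩ : ∀ᵐ P : ℝ × ℝ, ¬ (0 < h P) := by
    filter_upwards [hz, hneg2] with P h1 h2 h3
    have := h2 h3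
    simp at h1
    linarith
  have hΩo : IsOpen {P | 0 < h P} := isOpen_lt continuous_const hhc
  have hP0 : 0 < h P0 := by
    apply lt_max_of_lt_right
    simp [haff, hN, hδp]
  have := hΩo.measure_pos volume ⟨P0, hP0⟩
  rw [ae_iff] at hΩ
  simp only [not_not] at hΩ
  exact absurd hΩ this.ne'


namespace HalfPDE
variable {f f' g : ℝ → ℝ} {w u : ℝ × ℝ → ℝ} {K : NNReal} {M : ℝ}

lemma S (H : HalfPDE f f' g w u K M) {x p t τ : ℝ} (hx : 0 ≤ x) (hx' : 0 ≤ x + p * τ)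
    (ht : 0 ≤ t) (hτ : 0 ≤ τ) : w (x + p * τ, t + τ) ≤ w (x, t) + τ * Leg f g p := by
  set U : Set (ℝ × ℝ) := {P : ℝ × ℝ | 0 < P.1 ∧ 0 < P.2} with hUdef
  have hU : IsOpen U := (isOpen_lt continuous_const continuous_fst).inter
    (isOpen_lt continuous_const continuous_snd)
  have hpos : ∀ ε > 0, w ((x + ε) + p * τ, (t + ε) + τ) ≤ w (x + ε, t + ε) + τ * Leg f g p := by
    intro ε hε
    have := line_ineq H.lip hU (p, 1) (C := Leg f g p) (by
      filter_upwards [H.pde, H.lip.ae_differentiableAt] with P h1 h2 hP d hd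
      obtain ⟨h3, h4⟩ := h1 hP.1 hP.2 h2
      have h5 := (h2.hasFDerivAt.hasLineDerivAt (p, 1)).lineDeriv
      rw [hd.lineDeriv] at h5
      have h6 : ((p, 1) : ℝ × ℝ) = p • (1, 0) + (0, 1) := by simp
      rw [h5, h6, map_add, map_smul, h3, h4]
      have := H.flux.leg_ge p (u P)
      simpa [sub_eq_add_neg] using this) (P := (x + ε, t + ε)) hτ (by
      intro s hs
      constructor
      · simp only [Prod.smul_mk, Prod.mk_add_mk, smul_eq_mul]
        rcases le_total 0 p with hp | hp
        · have : 0 ≤ s * p := mul_nonneg hs.1 hp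
          linarith
        · have : τ * p ≤ s * p := mul_le_mul_of_nonpos_right hs.2 hp
          linarith
      · simp only [Prod.smul_mk, Prod.mk_add_mk, smul_eq_mul]
        linarith [hs.1])
    simp only [Prod.smul_mk, Prod.mk_add_mk, smul_eq_mul, mul_one] at this
    rw [mul_comm τ p, mul_comm (Leg f g p) τ] at this
    exact this
  have hwc := H.lip.continuous
  have hc : Continuous fun ε : ℝ => w (x + ε, t + ε) + τ * Leg f g p - w ((x + ε) + p * τ, (t + ε) + τ) := by
    fun_prop
  have ht := (hc.tendsto 0).mono_left (nhdsWithin_le_nhds (s := Ioi 0))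
  have := ge_of_tendsto (b := 0) ht (by
    filter_upwards [self_mem_nhdsWithin] with ε hε
    linarith [hpos ε hε])
  simp only [add_zero] at this
  linarith

lemma coer (H : HalfPDE f f' g w u K M) {x y s t ts : ℝ} (hx : 0 ≤ x) (hy : 0 ≤ y) (hs : 0 ≤ s)
    (hst : s < ts) (ht0 : 0 ≤ t) (ht : t ≤ ts) :
    w (x, t) + (y - x) - (K + |f (-(K+1))|) * ts - 2 * K * x ≤
      w (y, s) + (ts - s) * Leg f g ((x - y) / (ts - s)) := by
  have h1 := H.flux.leg_ge ((x - y) / (ts - s)) (-(K+1))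
  have hp : 0 < ts - s := by linarith
  have h2 : (ts - s) * ((x - y) / (ts - s) * (-(K+1)) - f (-(K+1))) ≤
    (ts - s) * Leg f g ((x - y) / (ts - s)) := by gcongr
  have h3 : (ts - s) * ((x - y) / (ts - s) * (-(K+1)) - f (-(K+1))) =
    (K+1) * (y - x) - (ts - s) * f (-(K+1)) := by field_simp; ring
  have h4 := H.lip.dist_le_mul (x, t) (y, s)
  rw [Real.dist_eq, Prod.dist_eq, Real.dist_eq, Real.dist_eq] at h4
  have hK : (0:ℝ) ≤ K := K.coe_nonneg
  have h5 : max |x - y| |t - s| ≤ |x - y| + ts := by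
    apply max_le
    · linarith
    · have : |t - s| ≤ ts := by rw [abs_le]; constructor <;> linarith
      linarith [abs_nonneg (x - y)]
  have h6 : (K : ℝ) * max |x - y| |t - s| ≤ K * (|x - y| + ts) := by gcongr
  have h7 : (ts - s) * f (-(K+1)) ≤ ts * |f (-(K+1))| := by
    calc _ ≤ (ts - s) * |f (-(K+1))| := by gcongr; exact le_abs_self _
      _ ≤ _ := by gcongr; linarith
  have h8 := (abs_le.1 (h4.trans h6)).2
  have h9 : (y - x) - 2 * K * x ≤ (K + 1) * (y - x) - K * |x - y| := by
    rcases le_total x y with h | h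
    · rw [abs_of_nonpos (by linarith)]
      have : 0 ≤ (K : ℝ) * x := by positivity
      linarith
    · rw [abs_of_nonneg (by linarith)]
      have : 0 ≤ (K : ℝ) * y := by positivity
      linarith
  linarith

lemma cost_fderiv (F : Flux f f' g) {x ts y s : ℝ} (hs : s < ts) :
    HasFDerivAt (fun P : ℝ × ℝ => (ts - P.2) * Leg f g ((x - P.1) / (ts - P.2)))
      (-(g ((x - y) / (ts - s))) • ContinuousLinearMap.fst ℝ ℝ ℝ +
        (f (g ((x - y) / (ts - s)))) • ContinuousLinearMap.snd ℝ ℝ ℝ) (y, s) := by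
  have hp : ts - s ≠ 0 := by linarith
  have h1 : HasFDerivAt (fun P : ℝ × ℝ => ts - P.2) (-ContinuousLinearMap.snd ℝ ℝ ℝ) (y, s) :=
    (hasFDerivAt_snd).const_sub ts
  have h2 : HasFDerivAt (fun P : ℝ × ℝ => x - P.1) (-ContinuousLinearMap.fst ℝ ℝ ℝ) (y, s) :=
    (hasFDerivAt_fst).const_sub x
  have h3' := h2.mul ((hasDerivAt_inv hp).comp_hasFDerivAt ((y, s) : ℝ × ℝ) h1)
  have h3 : HasFDerivAt (fun P : ℝ × ℝ => (x - P.1) / (ts - P.2)) _ (y, s) := h3'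
  have h4 := (F.leg_deriv ((x - y) / (ts - s))).comp_hasFDerivAt ((y, s) : ℝ × ℝ) h3
  have h5 := h1.mul h4
  refine h5.congr_fderiv ?_
  ext
  · simp
    field_simp
  · simp [Leg]
    field_simp
    ring

lemma BC_eps (H : HalfPDE f f' g w u K M) {x t ε : ℝ} (hx : 0 < x) (ht : 0 < t) (hε : 0 < ε) :
    ∃ y s, 0 ≤ y ∧ 0 ≤ s ∧ s < t + ε ∧ (y = 0 ∨ s = 0) ∧
      w (y, s) + (t + 2 * ε - s) * Leg f g ((x - y) / (t + 2 * ε - s)) ≤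
        w (x, t) + 2 * ε * Leg f g 0 + ε := by
  set lam := ε ^ 2 with hlam
  have hlp : 0 < lam := by positivity
  set t' := t + ε with ht'
  set ts := t + 2 * ε with hts
  set cost : ℝ × ℝ → ℝ := fun P => (ts - P.2) * Leg f g ((x - P.1) / (ts - P.2)) with hcost
  set Ψ : ℝ × ℝ → ℝ := fun P => w P + cost P + lam / (t' - P.2) with hΨ
  set C := (K + |f (-(K+1))|) * ts + 2 * K * x with hC
  have hlow : ∀ y s, 0 ≤ y → 0 ≤ s → s < t' → w (x, t) + (y - x) - C + lam / (t' - s) ≤ Ψ (y, s) := by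
    intro y s hy hs hst
    have := H.coer hx.le hy hs (show s < ts by linarith) ht.le (show t ≤ ts by linarith)
    simp only [hΨ, hcost]
    linarith
  have hm : Ψ (x, t) = w (x, t) + 2 * ε * Leg f g 0 + ε := by
    simp only [hΨ, hcost]
    rw [show ts - t = 2 * ε by rw [hts]; ring, show t' - t = ε by rw [ht']; ring, sub_self, zero_div,
      hlam]
    field_simp
  set m := 2 * ε * Leg f g 0 + ε with hmdef
  set Y := x + |m| + |C| + 1 with hY
  set η := min ε (lam / (|m| + |C| + x + 1)) with hη
  have hηp : 0 < η := by
    apply lt_min hε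
    positivity
  have hηε : η ≤ ε := min_le_left _ _
  set Z : Set (ℝ × ℝ) := Icc 0 Y ×ˢ Icc 0 (t' - η) with hZ
  have hZc : IsCompact Z := isCompact_Icc.prod isCompact_Icc
  have hPZ : (x, t) ∈ Z := by
    refine ⟨⟨hx.le, ?_⟩, ⟨ht.le, ?_⟩⟩
    · simp only [hY]; linarith [abs_nonneg m, abs_nonneg C]
    · simp only [ht']; linarith
  have hcostd : ∀ y s, s < t' → HasFDerivAt cost
      (-(g ((x - y) / (ts - s))) • ContinuousLinearMap.fst ℝ ℝ ℝ +
        (f (g ((x - y) / (ts - s)))) • ContinuousLinearMap.snd ℝ ℝ ℝ) (y, s) := by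
    intro y s hs
    exact cost_fderiv H.flux (by linarith)
  have hpend : ∀ y s, s < t' → HasFDerivAt (fun P : ℝ × ℝ => lam / (t' - P.2))
      ((lam / (t' - s) ^ 2) • ContinuousLinearMap.snd ℝ ℝ ℝ) (y, s) := by
    intro y s hs
    have h1 : HasFDerivAt (fun P : ℝ × ℝ => t' - P.2) (-ContinuousLinearMap.snd ℝ ℝ ℝ) (y, s) :=
      (hasFDerivAt_snd).const_sub t'
    have hne : t' - s ≠ 0 := by linarith
    have h2' := ((hasDerivAt_inv hne).comp_hasFDerivAt ((y, s) : ℝ × ℝ) h1).const_mul lam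
    have h2 : HasFDerivAt (fun P : ℝ × ℝ => lam / (t' - P.2)) _ (y, s) := h2'
    refine h2.congr_fderiv ?_
    ext
    · simp
    · simp [div_eq_mul_inv]
  have hΨc : ContinuousOn Ψ Z := by
    rintro ⟨y, s⟩ ⟨_, hs⟩
    have hs' : s < t' := by have := hs.2; simp only at this; linarith
    exact ((H.lip.continuous.continuousAt.add (hcostd y s hs').continuousAt).add
      (hpend y s hs').continuousAt).continuousWithinAt
  obtain ⟨⟨y, s⟩, hPs, hmin⟩ := hZc.exists_isMinOn ⟨_, hPZ⟩ hΨc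
  have hle : Ψ (y, s) ≤ w (x, t) + m := by
    have := hmin hPZ
    simp only [mem_ofPred_eq] at this
    rw [hm] at this
    linarith
  have hy0 : 0 ≤ y := hPs.1.1
  have hs0 : 0 ≤ s := hPs.2.1
  have hst : s < t' := by have := hPs.2.2; simp only at this; linarith
  have hminD : ∀ y' s', 0 ≤ y' → 0 ≤ s' → s' < t' → Ψ (y, s) ≤ Ψ (y', s') := by
    intro y' s' hy' hs' hst'
    by_cases hin : (y', s') ∈ Z
    · exact hmin hin
    · refine hle.trans ?_
      refine le_trans ?_ (hlow y' s' hy' hs' hst')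
      have hposn : 0 < lam / (t' - s') := div_pos hlp (by linarith)
      by_cases hyY : y' ≤ Y
      · have hsη : t' - η < s' := by
          by_contra hc
          push Not at hc
          exact hin ⟨⟨hy', hyY⟩, ⟨hs', hc⟩⟩
        have h1 : t' - s' < lam / (|m| + |C| + x + 1) := by
          have := min_le_right ε (lam / (|m| + |C| + x + 1))
          linarith
        have h2 : |m| + |C| + x + 1 < lam / (t' - s') := by
          rw [lt_div_iff₀ (by positivity)] at h1
          rw [lt_div_iff₀ (by linarith)]
          linarith
        linarith [le_abs_self m, le_abs_self C]
      · push Not at hyY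
        linarith [le_abs_self m, le_abs_self C]
  refine ⟨y, s, hy0, hs0, hst, ?_, ?_⟩
  · by_contra hc
    push Not at hc
    have hyp : 0 < y := lt_of_le_of_ne hy0 (Ne.symm hc.1)
    have hsp : 0 < s := lt_of_le_of_ne hs0 (Ne.symm hc.2)
    set p := (x - y) / (ts - s) with hp
    have hd := ((hcostd y s hst).add (hpend y s hst)).neg
    have hLL := LL H (P0 := (y, s)) hyp hsp (k := g p) (r := -f (g p) - lam / (t' - s) ^ 2) (by
      intro ω hω
      have h1 := (Asymptotics.isLittleO_iff.1 (hasFDerivAt_iff_isLittleO.1 hd)) hω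
      filter_upwards [h1, continuous_fst.continuousAt.eventually (lt_mem_nhds (show (0:ℝ) < ((y, s) : ℝ × ℝ).1 from hyp)),
        continuous_snd.continuousAt.eventually (lt_mem_nhds (show (0:ℝ) < ((y, s) : ℝ × ℝ).2 from hsp)),
        continuous_snd.continuousAt.eventually (gt_mem_nhds (show ((y, s) : ℝ × ℝ).2 < t' from hst))]
        with P hP h2 h3 h4
      have h5 := hminD P.1 P.2 h2.le h3.le h4
      simp only [hΨ, Prod.mk.eta] at h5
      have h6 := (abs_le.1 hP).1
      simp at h6
      linarith)
    have : 0 < lam / (t' - s) ^ 2 := by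
      apply div_pos hlp
      have : 0 < t' - s := by linarith
      positivity
    linarith
  · have h1 : 0 < lam / (t' - s) := div_pos hlp (by linarith)
    simp only [hΨ, hcost] at hle
    linarith

lemma BC (H : HalfPDE f f' g w u K M) {x t : ℝ} (hx : 0 < x) (ht : 0 < t) :
    ∃ y s, 0 ≤ y ∧ 0 ≤ s ∧ s < t ∧ (y = 0 ∨ s = 0) ∧
      w (x, t) = w (y, s) + (t - s) * Leg f g ((x - y) / (t - s)) := by
  set ε : ℕ → ℝ := fun n => 1 / ((n : ℝ) + 1) with hε
  have hεp : ∀ n, 0 < ε n := fun n => by positivity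
  have hε1 : ∀ n, ε n ≤ 1 := fun n => by
    simp only [hε]
    rw [div_le_one (by positivity)]
    linarith [n.cast_nonneg (α := ℝ)]
  have hεt : Tendsto ε atTop (nhds 0) := tendsto_one_div_add_atTop_nhds_zero_nat
  choose y s hy hs hst hor hle using fun n => H.BC_eps hx ht (hεp n)
  set C := (K + |f (-(K+1))|) * (t + 2) + 2 * K * x with hC
  set Y := x + C + 2 * |Leg f g 0| + 1 with hY
  have hyY : ∀ n, y n ≤ Y := by
    intro n
    have h1 := H.coer hx.le (hy n) (hs n) (show s n < t + 2 * ε n by linarith [hst n, hεp n]) ht.le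
      (show t ≤ t + 2 * ε n by linarith [hεp n])
    have h2 : (K + |f (-(K+1))|) * (t + 2 * ε n) ≤ (K + |f (-(K+1))|) * (t + 2) := by
      gcongr
      linarith [hε1 n]
    have h3 : 2 * ε n * Leg f g 0 ≤ 2 * |Leg f g 0| := by
      calc _ ≤ 2 * ε n * |Leg f g 0| := by
            have := hεp n
            gcongr; exact le_abs_self _
        _ ≤ 2 * 1 * |Leg f g 0| := by gcongr; exact hε1 n
        _ = _ := by ring
    linarith [hle n, hε1 n]
  have hZc : IsCompact (Icc 0 Y ×ˢ Icc 0 (t + 1) : Set (ℝ × ℝ)) := isCompact_Icc.prod isCompact_Icc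
  obtain ⟨⟨y', s'⟩, hmem, φ, hφ, hlim⟩ := hZc.tendsto_subseq (x := fun n => (y n, s n))
    (fun n => ⟨⟨hy n, hyY n⟩, ⟨hs n, by linarith [hst n, hε1 n]⟩⟩)
  have hyl : Tendsto (fun n => y (φ n)) atTop (nhds y') :=
    (continuous_fst.tendsto _).comp hlim
  have hsl : Tendsto (fun n => s (φ n)) atTop (nhds s') :=
    (continuous_snd.tendsto _).comp hlim
  have hεl : Tendsto (fun n => ε (φ n)) atTop (nhds 0) := hεt.comp hφ.tendsto_atTop
  have hwl : Tendsto (fun n => w (y (φ n), s (φ n))) atTop (nhds (w (y', s'))) :=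
    (H.lip.continuous.tendsto _).comp hlim
  have hdl : Tendsto (fun n => t + 2 * ε (φ n) - s (φ n)) atTop (nhds (t - s')) := by
    have := ((hεl.const_mul 2).const_add t).sub hsl
    simpa using this
  have hrl : Tendsto (fun n => w (x, t) + 2 * ε (φ n) * Leg f g 0 + ε (φ n)) atTop (nhds (w (x, t))) := by
    have := (((hεl.const_mul 2).mul_const (Leg f g 0)).const_add (w (x, t))).add hεl
    simpa using this
  have hst' : s' ≤ t := by
    refine le_of_tendsto_of_tendsto hsl (show Tendsto (fun n => t + ε (φ n)) atTop (nhds t) by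
      simpa using hεl.const_add t) (Eventually.of_forall fun n => (hst _).le)
  have hor' : y' = 0 ∨ s' = 0 := by
    have hcl : IsClosed {P : ℝ × ℝ | P.1 = 0 ∨ P.2 = 0} :=
      (isClosed_eq continuous_fst continuous_const).union
        (isClosed_eq continuous_snd continuous_const)
    exact hcl.mem_of_tendsto hlim (Eventually.of_forall fun n => hor _)
  have hslt : s' < t := by
    refine lt_of_le_of_ne hst' ?_
    intro he
    have hy0 : y' = 0 := by
      rcases hor' with h | h
      · exact h
      · linarith
    have hk : ∀ k : ℝ, w (y', s') + k * x ≤ w (x, t) := by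
      intro k
      have hlimk : Tendsto (fun n => w (y (φ n), s (φ n)) + (k * (x - y (φ n)) -
          (t + 2 * ε (φ n) - s (φ n)) * f k)) atTop (nhds (w (y', s') + (k * (x - y') - (t - s') * f k))) :=
        hwl.add (((hyl.const_sub x).const_mul k).sub (hdl.mul_const _))
      have := le_of_tendsto_of_tendsto hlimk hrl (Eventually.of_forall fun n => by
        refine le_trans ?_ (hle (φ n))
        have hp : 0 < t + 2 * ε (φ n) - s (φ n) := by linarith [hst (φ n), hεp (φ n)]
        set d := t + 2 * ε (φ n) - s (φ n)
        have h1 := H.flux.leg_ge ((x - y (φ n)) / d) k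
        have h2 : d * ((x - y (φ n)) / d * k - f k) ≤ d * Leg f g ((x - y (φ n)) / d) := by gcongr
        have h3 : d * ((x - y (φ n)) / d * k - f k) = k * (x - y (φ n)) - d * f k := by
          field_simp
        linarith)
      rw [he, hy0] at this
      rw [he, hy0]
      linarith
    have := hk ((w (x, t) - w (y', s') + 1) / x)
    rw [div_mul_cancel₀ _ hx.ne'] at this
    linarith
  have hfin : w (y', s') + (t - s') * Leg f g ((x - y') / (t - s')) ≤ w (x, t) := by
    refine le_of_tendsto_of_tendsto ?_ hrl (Eventually.of_forall fun n => hle (φ n))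
    have hq : Tendsto (fun n => (x - y (φ n)) / (t + 2 * ε (φ n) - s (φ n))) atTop
        (nhds ((x - y') / (t - s'))) := (hyl.const_sub x).div hdl (by linarith)
    exact hwl.add (hdl.mul ((H.flux.leg_cont.tendsto _).comp hq))
  have hp : t - s' ≠ 0 := by linarith
  refine ⟨y', s', hmem.1.1, hmem.2.1, hslt, hor', le_antisymm ?_ hfin⟩
  have hxx : y' + (x - y') / (t - s') * (t - s') = x := by field_simp; ring
  have := H.S (x := y') (p := (x - y') / (t - s')) (t := s') (τ := t - s') hmem.1.1
    (by rw [hxx]; exact hx.le) hmem.2.1 (by linarith)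
  rw [hxx, show s' + (t - s') = t by ring] at this
  exact this

end HalfPDE


lemma closed_exists {X : Type*} [TopologicalSpace X] {C : Set (X × ℝ)} (hC : IsClosed C)
    {Kc : Set ℝ} (hK : IsCompact Kc) : IsClosed {x | ∃ p ∈ Kc, (x, p) ∈ C} := by
  have : CompactSpace Kc := isCompact_iff_compactSpace.1 hK
  have h1 : IsClosed ((fun q : X × Kc => (q.1, (q.2 : ℝ))) ⁻¹' C) :=
    hC.preimage (by fun_prop)
  have h2 := isClosedMap_fst_of_compactSpace _ h1
  convert h2 using 1
  ext x
  constructor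
  · rintro ⟨p, hp, h⟩
    exact ⟨(x, ⟨p, hp⟩), h, rfl⟩
  · rintro ⟨⟨x', p⟩, h, rfl⟩
    exact ⟨p.1, p.2, h⟩

lemma right_le {h φ : ℝ → ℝ} {a b x : ℝ} (hh : HasDerivWithinAt h a (Ioi x) x)
    (hφ : HasDerivAt φ b x) (he : h x = φ x) (hle : ∀ᶠ y in nhdsWithin x (Ioi x), h y ≤ φ y) :
    a ≤ b := by
  have h1 := (hasDerivWithinAt_iff_tendsto_slope' (by simp)).1 hh
  have h2 := (hasDerivWithinAt_iff_tendsto_slope' (by simp)).1 (hφ.hasDerivWithinAt (s := Ioi x))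
  refine le_of_tendsto_of_tendsto h1 h2 ?_
  filter_upwards [hle, self_mem_nhdsWithin] with y hy hxy
  rw [slope_def_field, slope_def_field, he]
  have : 0 < y - x := sub_pos.2 hxy
  gcongr

lemma left_ge {h φ : ℝ → ℝ} {a b x : ℝ} (hh : HasDerivWithinAt h a (Iio x) x)
    (hφ : HasDerivAt φ b x) (he : h x = φ x) (hle : ∀ᶠ y in nhdsWithin x (Iio x), h y ≤ φ y) :
    b ≤ a := by
  have h1 := (hasDerivWithinAt_iff_tendsto_slope' (by simp)).1 hh
  have h2 := (hasDerivWithinAt_iff_tendsto_slope' (by simp)).1 (hφ.hasDerivWithinAt (s := Iio x))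
  refine le_of_tendsto_of_tendsto h2 h1 ?_
  filter_upwards [hle, self_mem_nhdsWithin] with y hy hxy
  rw [slope_def_field, slope_def_field, he]
  have : y - x < 0 := sub_neg.2 hxy
  exact div_le_div_of_nonpos_of_le this.le (by linarith)

structure Half (f f' g : ℝ → ℝ) (w : ℝ × ℝ → ℝ) (um up : ℝ → ℝ → ℝ) (K : NNReal) (M : ℝ) : Prop where
  flux : Flux f f' g
  lip : LipschitzWith K w
  S : ∀ {x p t τ : ℝ}, 0 ≤ x → 0 ≤ x + p * τ → 0 ≤ t → 0 ≤ τ →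
    w (x + p * τ, t + τ) ≤ w (x, t) + τ * Leg f g p
  BC : ∀ {x t : ℝ}, 0 < x → 0 < t → ∃ y s, 0 ≤ y ∧ 0 ≤ s ∧ s < t ∧ (y = 0 ∨ s = 0) ∧
      w (x, t) = w (y, s) + (t - s) * Leg f g ((x - y) / (t - s))
  rd : ∀ {x t : ℝ}, 0 ≤ x → 0 < t → HasDerivWithinAt (fun y => w (y, t)) (up x t) (Ioi x) x
  ld : ∀ {x t : ℝ}, 0 < x → 0 < t → HasDerivWithinAt (fun y => w (y, t)) (um x t) (Iio x) x
  lim0 : ∀ {t : ℝ}, 0 < t → Tendsto (fun x => um x t) (nhdsWithin 0 (Ioi 0)) (nhds (up 0 t))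
  bm : ∀ {x t : ℝ}, 0 < t → |um x t| ≤ M
  bp : ∀ {x t : ℝ}, 0 < t → |up x t| ≤ M

def Seg (f g : ℝ → ℝ) (w : ℝ × ℝ → ℝ) (R y s x t : ℝ) : Prop :=
  0 ≤ y ∧ 0 ≤ x ∧ 0 ≤ s ∧ s ≤ t ∧ ∃ p, |p| ≤ R ∧ x = y + p * (t - s) ∧
    w (x, t) = w (y, s) + (t - s) * Leg f g p

namespace Half
variable {f f' g : ℝ → ℝ} {w : ℝ × ℝ → ℝ} {um up : ℝ → ℝ → ℝ} {K : NNReal} {M : ℝ}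

/-- S in endpoint form -/
lemma S' (H : Half f f' g w um up K M) {y s x t : ℝ} (hy : 0 ≤ y) (hx : 0 ≤ x) (hs : 0 ≤ s)
    (hst : s < t) : w (x, t) ≤ w (y, s) + (t - s) * Leg f g ((x - y) / (t - s)) := by
  have hp : t - s ≠ 0 := by linarith
  have hxx : y + (x - y) / (t - s) * (t - s) = x := by field_simp; ring
  have := H.S (x := y) (p := (x - y) / (t - s)) (t := s) (τ := t - s) hy
    (by rw [hxx]; exact hx) hs (by linarith)
  rwa [hxx, show s + (t - s) = t by ring] at this

lemma S'' (H : Half f f' g w um up K M) {y s x t p : ℝ} (hy : 0 ≤ y) (hx : 0 ≤ x) (hs : 0 ≤ s)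
    (hst : s ≤ t) (hp : x = y + p * (t - s)) : w (x, t) ≤ w (y, s) + (t - s) * Leg f g p := by
  have := H.S (x := y) (p := p) (t := s) (τ := t - s) hy
    (by rw [← hp]; exact hx) hs (by linarith)
  rwa [← hp, show s + (t - s) = t by ring] at this

lemma seg_mid (H : Half f f' g w um up K M) {y s x t p r : ℝ} (hy : 0 ≤ y) (hx : 0 ≤ x) (hs : 0 ≤ s)
    (hp : x = y + p * (t - s)) (hw : w (x, t) = w (y, s) + (t - s) * Leg f g p)
    (hsr : s ≤ r) (hrt : r ≤ t) :
    0 ≤ y + p * (r - s) ∧ w (y + p * (r - s), r) = w (y, s) + (r - s) * Leg f g p ∧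
    w (x, t) = w (y + p * (r - s), r) + (t - r) * Leg f g p ∧
    x = (y + p * (r - s)) + p * (t - r) := by
  have h0 : 0 ≤ y + p * (r - s) := by
    rcases le_total 0 p with h | h
    · have : 0 ≤ p * (r - s) := mul_nonneg h (by linarith)
      linarith
    · have : p * (t - s) ≤ p * (r - s) := mul_le_mul_of_nonpos_left (by linarith) h
      linarith
  have he : x = (y + p * (r - s)) + p * (t - r) := by rw [hp]; ring
  have h1 := H.S'' hy h0 hs hsr rfl
  have h2 := H.S'' h0 hx (by linarith) hrt he
  have h3 : (t - s) * Leg f g p = (r - s) * Leg f g p + (t - r) * Leg f g p := by ring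
  refine ⟨h0, by linarith, by linarith, he⟩

lemma leg_fwd (H : Half f f' g w um up K M) {y d x p : ℝ} (hd : 0 < d) (hp : x = y + p * d) (c : ℝ) :
    HasDerivAt (fun x' => c + d * Leg f g ((x' - y) / d)) (g p) x := by
  have e : (x - y) / d = p := by rw [hp]; field_simp; ring
  have h1 : HasDerivAt (fun x' : ℝ => (x' - y) / d) (1 / d) x :=
    ((hasDerivAt_id x).sub_const y).div_const d
  have h2 := HasDerivAt.comp x (e ▸ H.flux.leg_deriv p) h1
  have h3 := (h2.const_mul d).const_add c
  refine h3.congr_deriv ?_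
  rw [e]
  field_simp

lemma leg_bwd (H : Half f f' g w um up K M) {x d z p : ℝ} (hd : 0 < d) (hp : x = z + p * d) (c : ℝ) :
    HasDerivAt (fun z' => c - d * Leg f g ((x - z') / d)) (g p) z := by
  have e : (x - z) / d = p := by rw [hp]; field_simp; ring
  have h1 : HasDerivAt (fun z' : ℝ => (x - z') / d) (-1 / d) z :=
    ((hasDerivAt_id z).const_sub x).div_const d
  have h2 := HasDerivAt.comp z (e ▸ H.flux.leg_deriv p) h1
  have h3 := (h2.const_mul d).const_sub c
  refine h3.congr_deriv ?_
  rw [e]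
  field_simp

lemma D1r (H : Half f f' g w um up K M) {y s x t p : ℝ} (hy : 0 ≤ y) (hx : 0 ≤ x) (hs : 0 ≤ s)
    (hst : s < t) (hp : x = y + p * (t - s)) (hw : w (x, t) = w (y, s) + (t - s) * Leg f g p) :
    up x t ≤ g p := by
  have hd : 0 < t - s := by linarith
  have e : (x - y) / (t - s) = p := by rw [hp]; field_simp; ring
  refine right_le (H.rd hx (by linarith)) (H.leg_fwd hd hp (w (y, s))) ?_ ?_
  · simp only [e, hw]
  · filter_upwards [self_mem_nhdsWithin] with x' hx'
    exact H.S' hy (hx.trans (le_of_lt hx')) hs hst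

lemma D1l (H : Half f f' g w um up K M) {y s x t p : ℝ} (hy : 0 ≤ y) (hx : 0 < x) (hs : 0 ≤ s)
    (hst : s < t) (hp : x = y + p * (t - s)) (hw : w (x, t) = w (y, s) + (t - s) * Leg f g p) :
    g p ≤ um x t := by
  have hd : 0 < t - s := by linarith
  have e : (x - y) / (t - s) = p := by rw [hp]; field_simp; ring
  refine left_ge (H.ld hx (by linarith)) (H.leg_fwd hd hp (w (y, s))) ?_ ?_
  · simp only [e, hw]
  · filter_upwards [nhdsWithin_le_nhds (lt_mem_nhds hx)] with x' hx'
    exact H.S' hy (le_of_lt hx') hs hst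

/-- starting points -/
lemma D1sr (H : Half f f' g w um up K M) {y s x t p : ℝ} (hy : 0 ≤ y) (hx : 0 ≤ x) (hs : 0 < s)
    (hst : s < t) (hp : x = y + p * (t - s)) (hw : w (x, t) = w (y, s) + (t - s) * Leg f g p) :
    g p ≤ up y s := by
  have hd : 0 < t - s := by linarith
  have e : (x - y) / (t - s) = p := by rw [hp]; field_simp; ring
  have h1 := (H.rd hy hs).neg
  have h2 := (H.leg_bwd hd hp (w (x, t))).neg
  have := right_le h1 h2 (by simp only [Pi.neg_apply, e]; linarith) (by
    filter_upwards [self_mem_nhdsWithin] with x' hx'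
    have := H.S' (hy.trans (le_of_lt hx')) hx hs.le hst
    simp only [Pi.neg_apply]
    linarith)
  linarith

lemma D1sl (H : Half f f' g w um up K M) {y s x t p : ℝ} (hy : 0 < y) (hx : 0 ≤ x) (hs : 0 < s)
    (hst : s < t) (hp : x = y + p * (t - s)) (hw : w (x, t) = w (y, s) + (t - s) * Leg f g p) :
    um y s ≤ g p := by
  have hd : 0 < t - s := by linarith
  have e : (x - y) / (t - s) = p := by rw [hp]; field_simp; ring
  have h1 := (H.ld hy hs).neg
  have h2 := (H.leg_bwd hd hp (w (x, t))).neg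
  have := left_ge h1 h2 (by simp only [Pi.neg_apply, e]; linarith) (by
    filter_upwards [nhdsWithin_le_nhds (lt_mem_nhds hy)] with x' hx'
    have := H.S' (le_of_lt hx') hx hs.le hst
    simp only [Pi.neg_apply]
    linarith)
  linarith

lemma D2 (H : Half f f' g w um up K M) {y s x t p r : ℝ} (hy : 0 ≤ y) (hx : 0 ≤ x) (hs : 0 ≤ s)
    (hp : x = y + p * (t - s)) (hw : w (x, t) = w (y, s) + (t - s) * Leg f g p)
    (hsr : s < r) (hrt : r < t) (hz : 0 < y + p * (r - s)) :
    um (y + p * (r - s)) r = g p ∧ up (y + p * (r - s)) r = g p := by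
  obtain ⟨h0, h1, h2, h3⟩ := H.seg_mid hy hx hs hp hw hsr.le hrt.le
  have a1 := H.D1r hy h0 hs hsr rfl h1
  have a2 := H.D1l hy hz hs hsr rfl h1
  have a3 := H.D1sr h0 hx (lt_of_le_of_lt hs hsr) hrt h3 h2
  have a4 := H.D1sl hz hx (lt_of_le_of_lt hs hsr) hrt h3 h2
  exact ⟨le_antisymm a4 a2, le_antisymm a1 a3⟩

lemma slope_bound (H : Half f f' g w um up K M) {R : ℝ} (hR0 : 0 ≤ R)
    (hR : ∀ v, |v| ≤ M → |f' v| ≤ R) {y s x t p : ℝ} (hy : 0 ≤ y) (hx : 0 ≤ x) (hs : 0 ≤ s)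
    (hst : s < t) (hp : x = y + p * (t - s)) (hw : w (x, t) = w (y, s) + (t - s) * Leg f g p) :
    |p| ≤ R := by
  by_cases hp0 : p = 0
  · rw [hp0]; simpa using hR0
  · set r := (s + t) / 2 with hr
    have hz : 0 < y + p * (r - s) := by
      have e : y + p * (r - s) = (x + y) / 2 := by rw [hp, hr]; ring
      rw [e]
      rcases hy.lt_or_eq with h | h
      · linarith
      · have : x ≠ 0 := by
          rw [hp, ← h, zero_add]
          exact mul_ne_zero hp0 (by linarith)
        have : 0 < x := lt_of_le_of_ne hx (Ne.symm this)
        linarith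
    have h1 := (H.D2 hy hx hs hp hw (r := r) (by linarith) (by linarith) hz).1
    have h2 := H.bm (x := y + p * (r - s)) (t := r) (by linarith)
    rw [h1] at h2
    have := hR _ h2
    rwa [H.flux.fg] at this

lemma seg_of (H : Half f f' g w um up K M) {R : ℝ} (hR0 : 0 ≤ R)
    (hR : ∀ v, |v| ≤ M → |f' v| ≤ R) {y s x t p : ℝ} (hy : 0 ≤ y) (hx : 0 ≤ x) (hs : 0 ≤ s)
    (hst : s < t) (hp : x = y + p * (t - s)) (hw : w (x, t) = w (y, s) + (t - s) * Leg f g p) :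
    Seg f g w R y s x t :=
  ⟨hy, hx, hs, hst.le, p, H.slope_bound hR0 hR hy hx hs hst hp hw, hp, hw⟩

lemma BCseg (H : Half f f' g w um up K M) {R : ℝ} (hR0 : 0 ≤ R)
    (hR : ∀ v, |v| ≤ M → |f' v| ≤ R) {x t : ℝ} (hx : 0 < x) (ht : 0 < t) :
    ∃ y s, s < t ∧ (y = 0 ∨ s = 0) ∧ Seg f g w R y s x t := by
  obtain ⟨y, s, hy, hs, hst, hor, hw⟩ := H.BC hx ht
  have hp : t - s ≠ 0 := by linarith
  refine ⟨y, s, hst, hor, H.seg_of hR0 hR hy hx.le hs hst (p := (x - y) / (t - s)) ?_ hw⟩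
  field_simp; ring

lemma D3 (H : Half f f' g w um up K M) {x t : ℝ} (hx : 0 < x) (ht : 0 < t)
    (he : f' (um x t) = f' (up x t)) :
    ∃ σ0 > 0, σ0 ≤ t ∧ ∀ σ, 0 ≤ σ → σ ≤ σ0 → 0 ≤ x - f' (um x t) * σ ∧
      w (x, t) = w (x - f' (um x t) * σ, t - σ) + σ * Leg f g (f' (um x t)) := by
  obtain ⟨y, s, hy, hs, hst, hor, hw⟩ := H.BC hx ht
  have hp : t - s ≠ 0 := by linarith
  set q := (x - y) / (t - s) with hq
  have hxq : x = y + q * (t - s) := by rw [hq]; field_simp; ring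
  have a1 := H.D1r hy hx.le hs hst hxq hw
  have a2 := H.D1l hy hx hs hst hxq hw
  have he' : um x t = up x t := H.flux.mono.injective he
  have hqe : f' (um x t) = q := by
    rw [show um x t = g q by linarith, H.flux.fg]
  rw [hqe]
  refine ⟨t - s, by linarith, by linarith, fun σ h0 h1 => ?_⟩
  obtain ⟨b0, b1, b2, b3⟩ := H.seg_mid hy hx.le hs hxq hw (r := t - σ) (by linarith) (by linarith)
  have e : y + q * (t - σ - s) = x - q * σ := by rw [hxq]; ring
  rw [e] at b0 b2
  exact ⟨b0, by rw [b2]; ring⟩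

end Half

lemma Seg_closed {f f' g : ℝ → ℝ} (F : Flux f f' g) {w : ℝ × ℝ → ℝ} (hw : Continuous w) (R : ℝ) :
    IsClosed {q : (ℝ × ℝ) × (ℝ × ℝ) | Seg f g w R q.1.1 q.1.2 q.2.1 q.2.2} := by
  have hl := F.leg_cont
  have h1 : IsClosed {z : ((ℝ × ℝ) × (ℝ × ℝ)) × ℝ | z.1.2.1 = z.1.1.1 + z.2 * (z.1.2.2 - z.1.1.2) ∧
      w z.1.2 = w z.1.1 + (z.1.2.2 - z.1.1.2) * Leg f g z.2} :=
    (isClosed_eq (by fun_prop) (by fun_prop)).inter (isClosed_eq (by fun_prop) (by fun_prop))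
  have h2 := closed_exists h1 (isCompact_Icc (a := -R) (b := R))
  have h3 : IsClosed {q : (ℝ × ℝ) × (ℝ × ℝ) | 0 ≤ q.1.1 ∧ 0 ≤ q.2.1 ∧ 0 ≤ q.1.2 ∧ q.1.2 ≤ q.2.2} :=
    IsClosed.and (isClosed_le (by fun_prop) (by fun_prop)) (IsClosed.and
      (isClosed_le (by fun_prop) (by fun_prop)) (IsClosed.and
        (isClosed_le (by fun_prop) (by fun_prop)) (isClosed_le (by fun_prop) (by fun_prop))))
  convert h3.inter h2 using 1
  ext ⟨⟨y, s⟩, ⟨x, t⟩⟩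
  simp only [Seg, mem_ofPred_eq, mem_inter_iff, mem_Icc, ← abs_le]
  tauto

lemma Seg.dist {f g : ℝ → ℝ} {w : ℝ × ℝ → ℝ} {R y s x t : ℝ} (h : Seg f g w R y s x t) :
    |x - y| ≤ R * (t - s) := by
  obtain ⟨_, _, _, hst, p, hp, hx, _⟩ := h
  rw [hx, add_sub_cancel_left, abs_mul, abs_of_nonneg (by linarith : 0 ≤ t - s)]
  have : 0 ≤ t - s := by linarith
  gcongr

namespace Half
variable {f f' g : ℝ → ℝ} {w : ℝ × ℝ → ℝ} {um up : ℝ → ℝ → ℝ} {K : NNReal} {M : ℝ}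

lemma D4 (H : Half f f' g w um up K M) {R : ℝ} (hR0 : 0 ≤ R)
    (hR : ∀ v, |v| ≤ M → |f' v| ≤ R) {t : ℝ} (ht : 0 < t) (hneg : f' (up 0 t) < 0) :
    ∃ y, Seg f g w R y 0 0 t := by
  set Y := R * t + 1 with hY
  have hcl : IsClosed {x : ℝ | ∃ y ∈ Icc 0 Y, (x, y) ∈ {z : ℝ × ℝ | Seg f g w R z.2 0 z.1 t}} := by
    apply closed_exists _ isCompact_Icc
    exact (Seg_closed H.flux H.lip.continuous R).preimage
      (f := fun z : ℝ × ℝ => (((z.2, 0), (z.1, t)) : (ℝ × ℝ) × (ℝ × ℝ))) (by fun_prop)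
  have hev : ∀ᶠ x in nhdsWithin (0:ℝ) (Ioi 0), x ∈ {x : ℝ | ∃ y ∈ Icc 0 Y, (x, y) ∈ {z : ℝ × ℝ | Seg f g w R z.2 0 z.1 t}} := by
    have h1 := ((H.flux.cont'.tendsto _).comp (H.lim0 ht)).eventually (gt_mem_nhds hneg)
    filter_upwards [h1, self_mem_nhdsWithin, nhdsWithin_le_nhds (gt_mem_nhds (zero_lt_one' ℝ))]
      with x hx1 hx0 hx2
    obtain ⟨y, s, hst, hor, hseg⟩ := H.BCseg hR0 hR hx0 ht
    obtain ⟨hy, hx, hs, _, p, hpR, hxp, hw⟩ := id hseg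
    have a2 := H.D1l hy hx0 hs hst hxp hw
    have a3 := H.flux.mono.monotone a2
    rw [H.flux.fg] at a3
    have hp : p < 0 := lt_of_le_of_lt a3 hx1
    have hy0 : 0 < y := by
      have : p * (t - s) < 0 := mul_neg_of_neg_of_pos hp (by linarith)
      have hx0' : 0 < x := hx0
      linarith
    have hs0 : s = 0 := hor.resolve_left hy0.ne'
    subst hs0
    refine ⟨y, ⟨hy, ?_⟩, hseg⟩
    have := abs_le.1 hseg.dist
    rw [sub_zero] at this
    simp only [hY]
    linarith [this.1]
  obtain ⟨y, _, h⟩ := hcl.mem_of_frequently_of_tendsto hev.frequently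
    (tendsto_id.mono_left nhdsWithin_le_nhds : Tendsto id (nhdsWithin (0:ℝ) (Ioi 0)) (nhds 0))
  exact ⟨y, h⟩

end Half


abbrev sig : ℝ → ℝ := Real.smoothTransition
abbrev eps (n : ℕ) : ℝ := 1 / ((n : ℝ) + 1)

lemma eps_pos (n : ℕ) : 0 < eps n := by unfold eps; positivity
lemma eps_le (n : ℕ) : eps n ≤ 1 := by
  unfold eps
  rw [div_le_one (by positivity)]
  linarith [n.cast_nonneg (α := ℝ)]
lemma eps_lim : Tendsto eps atTop (nhds 0) := tendsto_one_div_add_atTop_nhds_zero_nat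

lemma sig_c1 : ContDiff ℝ 1 sig := Real.smoothTransition.contDiff
lemma sig_d (y : ℝ) : HasDerivAt sig (deriv sig y) y :=
  (sig_c1.differentiable (by norm_num) y).hasDerivAt
lemma dsig_cont : Continuous (deriv sig) := sig_c1.continuous_deriv (by norm_num)
lemma dsig_lt {y : ℝ} (h : y < 0) : deriv sig y = 0 := by
  have : sig =ᶠ[nhds y] fun _ => 0 := by
    filter_upwards [gt_mem_nhds h] with z hz
    exact Real.smoothTransition.zero_of_nonpos (le_of_lt hz)
  rw [this.deriv_eq]; simp
lemma dsig_gt {y : ℝ} (h : 1 < y) : deriv sig y = 0 := by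
  have : sig =ᶠ[nhds y] fun _ => 1 := by
    filter_upwards [lt_mem_nhds h] with z hz
    exact Real.smoothTransition.one_of_one_le (le_of_lt hz)
  rw [this.deriv_eq]; simp
lemma dsig_zero : deriv sig 0 = 0 := by
  apply IsLocalMin.deriv_eq_zero
  refine Eventually.of_forall fun y => ?_
  simp only [sig, Real.smoothTransition.zero]
  exact Real.smoothTransition.nonneg y
lemma dsig_supp : HasCompactSupport (deriv sig) :=
  HasCompactSupport.intro (isCompact_Icc (a := (0:ℝ)) (b := 1)) fun y hy => by
    rw [mem_Icc, not_and_or] at hy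
    rcases hy with h | h
    · exact dsig_lt (not_le.1 h)
    · exact dsig_gt (not_le.1 h)
lemma dsig_int : Integrable (deriv sig) := dsig_cont.integrable_of_hasCompactSupport dsig_supp
lemma dsig_integral : ∫ y, deriv sig y = 1 := by
  have h0 : Tendsto sig atBot (nhds 0) := by
    refine tendsto_const_nhds.congr' ?_
    filter_upwards [eventually_le_atBot 0] with y hy
    exact (Real.smoothTransition.zero_of_nonpos hy).symm
  have h1 : Tendsto sig atTop (nhds 1) := by
    refine tendsto_const_nhds.congr' ?_
    filter_upwards [eventually_ge_atTop 1] with y hy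
    exact (Real.smoothTransition.one_of_one_le hy).symm
  rw [integral_of_hasDerivAt_of_tendsto (fun y => sig_d y) dsig_int h0 h1]
  norm_num

lemma ker_right {h : ℝ → ℝ} (hm : Measurable h) {C l x : ℝ} (hb : ∀ y, |h y| ≤ C)
    (hl : Tendsto h (nhdsWithin x (Ioi x)) (nhds l)) :
    Tendsto (fun n => ∫ y, (deriv sig ((y - x) / eps n) / eps n) * h y) atTop (nhds l) := by
  have e : ∀ n, ∫ y, (deriv sig ((y - x) / eps n) / eps n) * h y =
      ∫ z, deriv sig z * h (x + eps n * z) := by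
    intro n
    have hp := eps_pos n
    rw [← integral_add_right_eq_self _ x]
    have h1 : ∀ y, (deriv sig ((y + x - x) / eps n) / eps n) * h (y + x) =
        (fun z => (eps n)⁻¹ * (deriv sig z * h (x + eps n * z))) (y / eps n) := by
      intro y
      simp only
      rw [show eps n * (y / eps n) = y by field_simp, add_sub_cancel_right, add_comm x y]
      ring
    simp_rw [h1]
    rw [Measure.integral_comp_div (fun z => (eps n)⁻¹ * (deriv sig z * h (x + eps n * z))),
      integral_const_mul, abs_of_pos hp, smul_eq_mul]
    field_simp
  simp_rw [e]
  have hl2 : ∫ z, deriv sig z * l = l := by rw [integral_mul_const, dsig_integral, one_mul]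
  rw [← hl2]
  apply tendsto_integral_of_dominated_convergence (fun z => |deriv sig z| * C)
  · intro n
    exact (dsig_cont.measurable.mul (hm.comp (by fun_prop))).aestronglyMeasurable
  · exact dsig_int.abs.mul_const C
  · intro n
    refine Eventually.of_forall fun z => ?_
    rw [norm_mul, Real.norm_eq_abs, Real.norm_eq_abs]
    gcongr
    exact hb _
  · refine Eventually.of_forall fun z => ?_
    rcases le_or_gt z 0 with hz | hz
    · have : deriv sig z = 0 := by
        rcases hz.lt_or_eq with h | h
        · exact dsig_lt h
        · rw [h]; exact dsig_zero
      simp [this]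
    · apply Tendsto.const_mul
      apply hl.comp
      rw [tendsto_nhdsWithin_iff]
      constructor
      · have := (eps_lim.mul_const z).const_add x
        simpa using this
      · refine Eventually.of_forall fun n => ?_
        have := mul_pos (eps_pos n) hz
        simp only [mem_Ioi]
        linarith

lemma ker_left {h : ℝ → ℝ} (hm : Measurable h) {C l x : ℝ} (hb : ∀ y, |h y| ≤ C)
    (hl : Tendsto h (nhdsWithin x (Iio x)) (nhds l)) :
    Tendsto (fun n => ∫ y, (deriv sig ((x - y) / eps n) / eps n) * h y) atTop (nhds l) := by
  have := ker_right (h := fun y => h (-y)) (x := -x) (l := l) (hm.comp measurable_neg)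
    (fun y => hb _) (by
      apply hl.comp
      rw [tendsto_nhdsWithin_iff]
      constructor
      · have : Tendsto (fun y : ℝ => -y) (nhds (-x)) (nhds (- -x)) := continuous_neg.tendsto _
        rw [neg_neg] at this
        exact this.mono_left nhdsWithin_le_nhds
      · filter_upwards [self_mem_nhdsWithin] with y hy
        simp only [mem_Ioi] at hy
        simp only [mem_Iio]
        linarith)
  refine this.congr fun n => ?_
  rw [← integral_neg_eq_self]
  congr 1
  ext y
  rw [neg_neg, show -y - -x = x - y by ring]

lemma ker_bound (h : ℝ → ℝ) {C x : ℝ} (hb : ∀ y, |h y| ≤ C) (n : ℕ) :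
    |∫ y, (deriv sig ((y - x) / eps n) / eps n) * h y| ≤ (∫ z, |deriv sig z|) * C := by
  have hp := eps_pos n
  have h1 : ∀ y, |deriv sig ((y + x - x) / eps n) / eps n| * C =
      (fun z => (eps n)⁻¹ * |deriv sig z| * C) (y / eps n) := by
    intro y
    rw [add_sub_cancel_right, abs_div, abs_of_pos hp]
    ring
  have e : ∫ y, |deriv sig ((y - x) / eps n) / eps n| * C = (∫ z, |deriv sig z|) * C := by
    rw [← integral_add_right_eq_self _ x]
    simp_rw [h1]
    rw [Measure.integral_comp_div (fun z => (eps n)⁻¹ * |deriv sig z| * C),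
      integral_mul_const, integral_const_mul, abs_of_pos hp, smul_eq_mul]
    field_simp
  rw [← e, ← Real.norm_eq_abs]
  apply norm_integral_le_of_norm_le
  · have : Integrable (fun z => (eps n)⁻¹ * |deriv sig z| * C) := (dsig_int.abs.const_mul _).mul_const _
    have h2 := (this.comp_div hp.ne').comp_sub_right x
    refine h2.congr (Eventually.of_forall fun y => ?_)
    simp only
    rw [abs_div, abs_of_pos hp]
    ring
  · refine Eventually.of_forall fun y => ?_
    rw [norm_mul, Real.norm_eq_abs, Real.norm_eq_abs]
    gcongr
    exact hb _

lemma ker_bound' (h : ℝ → ℝ) {C x : ℝ} (hb : ∀ y, |h y| ≤ C) (n : ℕ) :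
    |∫ y, (deriv sig ((x - y) / eps n) / eps n) * h y| ≤ (∫ z, |deriv sig z|) * C := by
  rw [← integral_neg_eq_self]
  have := ker_bound (fun y => h (-y)) (x := -x) (fun y => hb _) n
  refine le_trans (le_of_eq ?_) this
  congr 2
  ext y
  rw [show x - -y = y - -x by ring]

lemma ker_integrable {h : ℝ → ℝ} (hm : Measurable h) {C x : ℝ} (hb : ∀ y, |h y| ≤ C) (n : ℕ) :
    Integrable (fun y => (deriv sig ((y - x) / eps n) / eps n) * h y) := by
  have hp := eps_pos n
  have h2 := (((dsig_int).comp_div hp.ne').comp_sub_right x).div_const (eps n)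
  exact h2.mul_bdd (c := C) hm.aestronglyMeasurable (Eventually.of_forall fun y => by simpa using hb y)

lemma ker_integrable' {h : ℝ → ℝ} (hm : Measurable h) {C x : ℝ} (hb : ∀ y, |h y| ≤ C) (n : ℕ) :
    Integrable (fun y => (deriv sig ((x - y) / eps n) / eps n) * h y) := by
  have hp := eps_pos n
  have h2 := (((dsig_int).comp_div hp.ne').comp_sub_left x).div_const (eps n)
  exact h2.mul_bdd (c := C) hm.aestronglyMeasurable (Eventually.of_forall fun y => by simpa using hb y)


def psi (x1 x2 : ℝ) (n : ℕ) (y : ℝ) : ℝ := 1 - sig ((x1 - y) / eps n) - sig ((y - x2) / eps n)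

lemma psi_c1 (x1 x2 : ℝ) (n : ℕ) : ContDiff ℝ 1 (psi x1 x2 n) := by
  unfold psi
  exact ((contDiff_const.sub (sig_c1.comp (by fun_prop))).sub (sig_c1.comp (by fun_prop)))

lemma psi_deriv (x1 x2 : ℝ) (n : ℕ) (y : ℝ) : deriv (psi x1 x2 n) y =
    deriv sig ((x1 - y) / eps n) / eps n - deriv sig ((y - x2) / eps n) / eps n := by
  apply HasDerivAt.deriv
  have h1 : HasDerivAt (fun y : ℝ => (x1 - y) / eps n) (-1 / eps n) y :=
    ((hasDerivAt_id y).const_sub x1).div_const _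
  have h2 : HasDerivAt (fun y : ℝ => (y - x2) / eps n) (1 / eps n) y :=
    ((hasDerivAt_id y).sub_const x2).div_const _
  have h3 := ((sig_d _).comp y h1).const_sub 1 |>.sub ((sig_d _).comp y h2)
  refine h3.congr_deriv ?_
  ring

lemma psi_nonneg {x1 x2 : ℝ} (h : x1 ≤ x2) (n : ℕ) (y : ℝ) : 0 ≤ psi x1 x2 n y := by
  unfold psi
  have hp := eps_pos n
  rcases le_total y x2 with hy | hy
  · have : sig ((y - x2) / eps n) = 0 := Real.smoothTransition.zero_of_nonpos
      (div_nonpos_of_nonpos_of_nonneg (by linarith) hp.le)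
    rw [this]
    linarith [Real.smoothTransition.le_one ((x1 - y) / eps n)]
  · have : sig ((x1 - y) / eps n) = 0 := Real.smoothTransition.zero_of_nonpos
      (div_nonpos_of_nonpos_of_nonneg (by linarith) hp.le)
    rw [this]
    linarith [Real.smoothTransition.le_one ((y - x2) / eps n)]

lemma psi_le (x1 x2 : ℝ) (n : ℕ) (y : ℝ) : psi x1 x2 n y ≤ 1 := by
  unfold psi
  linarith [Real.smoothTransition.nonneg ((x1 - y) / eps n),
    Real.smoothTransition.nonneg ((y - x2) / eps n)]

lemma psi_zero {x1 x2 : ℝ} (h : x1 ≤ x2) (n : ℕ) {y : ℝ} (hy : y ≤ x1 - eps n ∨ x2 + eps n ≤ y) :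
    psi x1 x2 n y = 0 := by
  unfold psi
  have hp := eps_pos n
  rcases hy with hy | hy
  · have h1 : sig ((x1 - y) / eps n) = 1 := Real.smoothTransition.one_of_one_le
      (by rw [le_div_iff₀ hp]; linarith)
    have h2 : sig ((y - x2) / eps n) = 0 := Real.smoothTransition.zero_of_nonpos
      (div_nonpos_of_nonpos_of_nonneg (by linarith) hp.le)
    rw [h1, h2]; ring
  · have h1 : sig ((y - x2) / eps n) = 1 := Real.smoothTransition.one_of_one_le
      (by rw [le_div_iff₀ hp]; linarith)
    have h2 : sig ((x1 - y) / eps n) = 0 := Real.smoothTransition.zero_of_nonpos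
      (div_nonpos_of_nonpos_of_nonneg (by linarith) hp.le)
    rw [h1, h2]; ring

lemma psi_one {x1 x2 : ℝ} (n : ℕ) {y : ℝ} (h1 : x1 ≤ y) (h2 : y ≤ x2) :
    psi x1 x2 n y = 1 := by
  unfold psi
  have hp := eps_pos n
  have h1 : sig ((x1 - y) / eps n) = 0 := Real.smoothTransition.zero_of_nonpos
      (div_nonpos_of_nonpos_of_nonneg (by linarith) hp.le)
  have h2 : sig ((y - x2) / eps n) = 0 := Real.smoothTransition.zero_of_nonpos
      (div_nonpos_of_nonpos_of_nonneg (by linarith) hp.le)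
  rw [h1, h2]; ring

lemma psi_out {x1 x2 : ℝ} (h : x1 ≤ x2) (n : ℕ) {y : ℝ} (hy : y ∉ Icc (x1 - 1) (x2 + 1)) :
    psi x1 x2 n y = 0 := by
  apply psi_zero h
  rw [mem_Icc, not_and_or, not_le, not_le] at hy
  rcases hy with hy | hy
  · left; linarith [eps_le n]
  · right; linarith [eps_le n]

lemma psi_supp {x1 x2 : ℝ} (h : x1 ≤ x2) (n : ℕ) : HasCompactSupport (psi x1 x2 n) :=
  HasCompactSupport.intro isCompact_Icc fun _ hy => psi_out h n hy

lemma psi_lim {x1 x2 : ℝ} (h : x1 ≤ x2) (y : ℝ) :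
    Tendsto (fun n => psi x1 x2 n y) atTop (nhds ((Icc x1 x2).indicator (fun _ => 1) y)) := by
  by_cases hy : y ∈ Icc x1 x2
  · rw [indicator_of_mem hy]
    exact tendsto_const_nhds.congr fun n => (psi_one n hy.1 hy.2).symm
  · rw [indicator_of_notMem hy]
    rw [mem_Icc, not_and_or, not_le, not_le] at hy
    refine tendsto_const_nhds.congr' ?_
    rcases hy with hy | hy
    · filter_upwards [eps_lim.eventually (gt_mem_nhds (show 0 < x1 - y by linarith))] with n hn
      exact (psi_zero h n (Or.inl (by linarith))).symm
    · filter_upwards [eps_lim.eventually (gt_mem_nhds (show 0 < y - x2 by linarith))] with n hn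
      exact (psi_zero h n (Or.inr (by linarith))).symm

lemma dpsi_out {x1 x2 : ℝ} (h : x1 ≤ x2) (n : ℕ) {y : ℝ} (hy : y ∉ Icc (x1 - 1) (x2 + 1)) :
    deriv (psi x1 x2 n) y = 0 := by
  have h1 : psi x1 x2 n =ᶠ[nhds y] fun _ => 0 := by
    filter_upwards [isClosed_Icc.isOpen_compl.mem_nhds hy] with z hz
    exact psi_out h n hz
  rw [h1.deriv_eq]; simp

def TestIneq (E Q : ℝ × ℝ → ℝ) : Prop :=
  ∀ ψ b : ℝ → ℝ, ContDiff ℝ 1 ψ → HasCompactSupport ψ → (∀ x, 0 ≤ ψ x) →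
    ContDiff ℝ 1 b → HasCompactSupport b → (∀ t, 0 ≤ b t) → (∀ t ≤ 0, b t = 0) →
    0 ≤ ∫ P : ℝ × ℝ, (E P * (ψ P.1 * deriv b P.2) + Q P * (deriv ψ P.1 * b P.2))

lemma XX {E Q : ℝ × ℝ → ℝ} (hE : Measurable E) (hQ : Measurable Q) {CE CQ : ℝ}
    (hEb : ∀ P, |E P| ≤ CE) (hQb : ∀ P, |Q P| ≤ CQ) (hyp : TestIneq E Q) {x1 x2 : ℝ} (hx : x1 ≤ x2)
    {q : ℝ → ℝ} {Ql Qr : ℝ → ℝ}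
    (hl : ∀ t, 0 < t → Tendsto (fun x => Q (x, t)) (nhdsWithin x1 (Iio x1)) (nhds (Ql t)))
    (hr : ∀ t, 0 < t → Tendsto (fun x => Q (x, t)) (nhdsWithin x2 (Ioi x2)) (nhds (Qr t)))
    (hq : ∀ t, 0 < t → q t = Ql t - Qr t)
    {b : ℝ → ℝ} (hb : ContDiff ℝ 1 b) (hbs : HasCompactSupport b) (hb0 : ∀ t, 0 ≤ b t)
    (hbz : ∀ t ≤ 0, b t = 0) :
    0 ≤ (∫ t, deriv b t * ∫ x in Icc x1 x2, E (x, t)) + ∫ t, b t * q t := by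
  have hCE : 0 ≤ CE := (abs_nonneg _).trans (hEb 0)
  have hCQ : 0 ≤ CQ := (abs_nonneg _).trans (hQb 0)
  have hbd : Continuous (deriv b) := hb.continuous_deriv (by norm_num)
  obtain ⟨Cb', hCb'⟩ := hbs.deriv.exists_bound_of_continuous hbd
  obtain ⟨Cb, hCb⟩ := hbs.exists_bound_of_continuous hb.continuous
  simp only [Real.norm_eq_abs] at hCb hCb'
  have hCb0 : 0 ≤ Cb := (abs_nonneg _).trans (hCb 0)
  have hCb0' : 0 ≤ Cb' := (abs_nonneg _).trans (hCb' 0)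
  set Z : Set (ℝ × ℝ) := Icc (x1 - 1) (x2 + 1) ×ˢ tsupport b with hZ
  have hZc : IsCompact Z := isCompact_Icc.prod hbs
  have hbout : ∀ t ∉ tsupport b, b t = 0 := fun t ht => image_eq_zero_of_notMem_tsupport ht
  have hbout' : ∀ t ∉ tsupport b, deriv b t = 0 := fun t ht => by
    by_contra hc
    exact ht (support_deriv_subset hc)
  have hI1 : ∀ n, Integrable (fun P : ℝ × ℝ => E P * (psi x1 x2 n P.1 * deriv b P.2)) := by
    intro n
    have hpc := (psi_c1 x1 x2 n).continuous
    refine integrable_of_bdd (C := CE * (1 * Cb')) ?_ ?_ hZc ?_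
    · exact hE.mul (Continuous.measurable (by fun_prop))
    · intro P
      rw [abs_mul, abs_mul, abs_of_nonneg (psi_nonneg hx n P.1)]
      have := psi_le x1 x2 n P.1
      have := hEb P
      have := hCb' P.2
      have := psi_nonneg hx n P.1
      gcongr
    · intro P hP
      rw [hZ, mem_prod, not_and_or] at hP
      rcases hP with h | h
      · rw [psi_out hx n h]; simp
      · rw [hbout' _ h]; simp
  have hdpc : ∀ n, Continuous (deriv (psi x1 x2 n)) := fun n =>
    (psi_c1 x1 x2 n).continuous_deriv (by norm_num)
  have hI2 : ∀ n, Integrable (fun P : ℝ × ℝ => Q P * (deriv (psi x1 x2 n) P.1 * b P.2)) := by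
    intro n
    have hdp := hdpc n
    have hbc := hb.continuous
    obtain ⟨Cp, hCp⟩ := (psi_supp hx n).deriv.exists_bound_of_continuous hdp
    simp only [Real.norm_eq_abs] at hCp
    have hCp0 : 0 ≤ Cp := (abs_nonneg _).trans (hCp 0)
    refine integrable_of_bdd (C := CQ * (Cp * Cb)) ?_ ?_ hZc ?_
    · exact hQ.mul (Continuous.measurable (by fun_prop))
    · intro P
      rw [abs_mul, abs_mul]
      have := hCp P.1
      have := hQb P
      have := hCb P.2
      gcongr
    · intro P hP
      rw [hZ, mem_prod, not_and_or] at hP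
      rcases hP with h | h
      · rw [dpsi_out hx n h]; simp
      · rw [hbout _ h]; simp
  have hge : ∀ n, 0 ≤ (∫ P : ℝ × ℝ, E P * (psi x1 x2 n P.1 * deriv b P.2)) +
      ∫ P : ℝ × ℝ, Q P * (deriv (psi x1 x2 n) P.1 * b P.2) := by
    intro n
    rw [← integral_add (hI1 n) (hI2 n)]
    exact hyp _ b (psi_c1 _ _ n) (psi_supp hx n) (psi_nonneg hx n) hb hbs hb0 hbz
  -- limit of first term
  have hL1 : Tendsto (fun n => ∫ P : ℝ × ℝ, E P * (psi x1 x2 n P.1 * deriv b P.2)) atTop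
      (nhds (∫ P : ℝ × ℝ, E P * ((Icc x1 x2).indicator (fun _ => 1) P.1 * deriv b P.2))) := by
    apply tendsto_integral_of_dominated_convergence (Z.indicator fun _ => CE * (1 * Cb'))
    · exact fun n => (hI1 n).aestronglyMeasurable
    · rw [integrable_indicator_iff hZc.measurableSet]
      exact integrableOn_const hZc.measure_lt_top.ne
    · intro n
      refine Eventually.of_forall fun P => ?_
      by_cases hP : P ∈ Z
      · rw [indicator_of_mem hP, Real.norm_eq_abs, abs_mul, abs_mul, abs_of_nonneg (psi_nonneg hx n P.1)]
        have := psi_le x1 x2 n P.1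
        have := hEb P
        have := hCb' P.2
        have := psi_nonneg hx n P.1
        gcongr
      · rw [indicator_of_notMem hP]
        rw [hZ, mem_prod, not_and_or] at hP
        rcases hP with h | h
        · rw [psi_out hx n h]; simp
        · rw [hbout' _ h]; simp
    · refine Eventually.of_forall fun P => ?_
      exact ((psi_lim hx P.1).mul_const _).const_mul _
  have hE1 : ∫ P : ℝ × ℝ, E P * ((Icc x1 x2).indicator (fun _ => 1) P.1 * deriv b P.2) =
      ∫ t, deriv b t * ∫ x in Icc x1 x2, E (x, t) := by
    have hint : Integrable fun P : ℝ × ℝ => E P * ((Icc x1 x2).indicator (fun _ => 1) P.1 * deriv b P.2) := by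
      refine integrable_of_bdd (C := CE * (1 * Cb')) ?_ ?_ hZc ?_
      · refine hE.mul (Measurable.mul ?_ (hbd.measurable.comp measurable_snd))
        exact (measurable_const.indicator measurableSet_Icc).comp measurable_fst
      · intro P
        rw [abs_mul, abs_mul]
        have h1 : |(Icc x1 x2).indicator (fun _ => (1:ℝ)) P.1| ≤ 1 := by
          by_cases h : P.1 ∈ Icc x1 x2
          · rw [indicator_of_mem h]; simp
          · rw [indicator_of_notMem h]; simp
        have := hEb P
        have := hCb' P.2
        gcongr
      · intro P hP
        rw [hZ, mem_prod, not_and_or] at hP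
        rcases hP with h | h
        · rw [indicator_of_notMem (fun h' => h ⟨by linarith [h'.1], by linarith [h'.2]⟩)]; simp
        · rw [hbout' _ h]; simp
    rw [Measure.volume_eq_prod, integral_prod_symm _ (by rwa [← Measure.volume_eq_prod])]
    congr 1
    ext t
    rw [← integral_const_mul, ← integral_indicator measurableSet_Icc]
    congr 1
    ext x
    by_cases h : x ∈ Icc x1 x2
    · rw [indicator_of_mem h, indicator_of_mem h]; ring
    · rw [indicator_of_notMem h, indicator_of_notMem h]; ring
  -- second term
  have hE2 : ∀ n, ∫ P : ℝ × ℝ, Q P * (deriv (psi x1 x2 n) P.1 * b P.2) =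
      ∫ t, b t * ((∫ x, (deriv sig ((x1 - x) / eps n) / eps n) * Q (x, t)) -
        ∫ x, (deriv sig ((x - x2) / eps n) / eps n) * Q (x, t)) := by
    intro n
    rw [Measure.volume_eq_prod, integral_prod_symm _ (by rw [← Measure.volume_eq_prod]; exact hI2 n)]
    congr 1
    ext t
    have hQt : Measurable fun x => Q (x, t) := hQ.comp (by fun_prop)
    rw [← integral_sub (ker_integrable' hQt (fun y => hQb _) n)
      (ker_integrable hQt (fun y => hQb _) n), ← integral_const_mul]
    congr 1
    ext x
    rw [psi_deriv]
    ring
  have hL2 : Tendsto (fun n => ∫ P : ℝ × ℝ, Q P * (deriv (psi x1 x2 n) P.1 * b P.2)) atTop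
      (nhds (∫ t, b t * q t)) := by
    simp_rw [hE2]
    apply tendsto_integral_of_dominated_convergence
      (fun t => |b t| * ((∫ z, |deriv sig z|) * CQ + (∫ z, |deriv sig z|) * CQ))
    · intro n
      apply AEStronglyMeasurable.mul hb.continuous.aestronglyMeasurable
      have hm1 : StronglyMeasurable fun t => ∫ x, (deriv sig ((x1 - x) / eps n) / eps n) * Q (x, t) := by
        apply StronglyMeasurable.integral_prod_left (f := fun x t => (deriv sig ((x1 - x) / eps n) / eps n) * Q (x, t))
        apply Measurable.stronglyMeasurable
        have := dsig_cont.measurable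
        exact Measurable.mul (by fun_prop) hQ
      have hm2 : StronglyMeasurable fun t => ∫ x, (deriv sig ((x - x2) / eps n) / eps n) * Q (x, t) := by
        apply StronglyMeasurable.integral_prod_left (f := fun x t => (deriv sig ((x - x2) / eps n) / eps n) * Q (x, t))
        apply Measurable.stronglyMeasurable
        have := dsig_cont.measurable
        exact Measurable.mul (by fun_prop) hQ
      exact (hm1.sub hm2).aestronglyMeasurable
    · exact (hb.continuous.integrable_of_hasCompactSupport hbs).abs.mul_const _
    · intro n
      refine Eventually.of_forall fun t => ?_
      rw [norm_mul, Real.norm_eq_abs]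
      gcongr
      rw [Real.norm_eq_abs]
      refine (abs_sub _ _).trans ?_
      exact add_le_add (ker_bound' _ (fun y => hQb _) n) (ker_bound _ (fun y => hQb _) n)
    · refine Eventually.of_forall fun t => ?_
      rcases le_or_gt t 0 with ht | ht
      · simp [hbz t ht]
      · rw [hq t ht]
        have hQt : Measurable fun x => Q (x, t) := hQ.comp (by fun_prop)
        exact ((ker_left hQt (fun y => hQb _) (hl t ht)).sub
          (ker_right hQt (fun y => hQb _) (hr t ht))).const_mul _
  have := ge_of_tendsto (hL1.add hL2) (Eventually.of_forall hge)
  rwa [hE1] at this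

lemma TT {m q : ℝ → ℝ} (hm : Measurable m) (hq : Measurable q) {Cm Cq : ℝ} (hmb : ∀ t, |m t| ≤ Cm)
    (hqb : ∀ t, |q t| ≤ Cq)
    (hmr : ∀ t, 0 ≤ t → Tendsto m (nhdsWithin t (Ioi t)) (nhds (m t)))
    (hyp : ∀ b : ℝ → ℝ, ContDiff ℝ 1 b → HasCompactSupport b → (∀ t, 0 ≤ b t) → (∀ t ≤ 0, b t = 0) →
      0 ≤ (∫ t, deriv b t * m t) + ∫ t, b t * q t) {t1 t2 : ℝ} (h1 : 0 ≤ t1) (h12 : t1 ≤ t2) :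
    m t2 - m t1 ≤ ∫ t in t1..t2, q t := by
  set b : ℕ → ℝ → ℝ := fun n t => sig ((t - t1) / eps n) - sig ((t - t2) / eps n) with hb
  have hbC : ∀ n, ContDiff ℝ 1 (b n) := fun n =>
    (sig_c1.comp (by fun_prop)).sub (sig_c1.comp (by fun_prop))
  have hz : ∀ n t, t ∉ Icc t1 (t2 + 1) → b n t = 0 := by
    intro n t ht
    have hp := eps_pos n
    rw [mem_Icc, not_and_or, not_le, not_le] at ht
    simp only [hb]
    rcases ht with h | h
    · have e1 : sig ((t - t1) / eps n) = 0 := Real.smoothTransition.zero_of_nonpos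
        (div_nonpos_of_nonpos_of_nonneg (by linarith) hp.le)
      have e2 : sig ((t - t2) / eps n) = 0 := Real.smoothTransition.zero_of_nonpos
        (div_nonpos_of_nonpos_of_nonneg (by linarith) hp.le)
      rw [e1, e2]; ring
    · have e1 : sig ((t - t1) / eps n) = 1 := Real.smoothTransition.one_of_one_le
        (by rw [le_div_iff₀ hp]; linarith [eps_le n])
      have e2 : sig ((t - t2) / eps n) = 1 := Real.smoothTransition.one_of_one_le
        (by rw [le_div_iff₀ hp]; linarith [eps_le n])
      rw [e1, e2]; ring
  have hbs : ∀ n, HasCompactSupport (b n) := fun n =>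
    HasCompactSupport.intro isCompact_Icc (hz n)
  have hb0 : ∀ n t, 0 ≤ b n t := by
    intro n t
    have hp := eps_pos n
    have : sig ((t - t2) / eps n) ≤ sig ((t - t1) / eps n) := by
      apply Real.smoothTransition.monotone
      gcongr
    simp only [hb]; linarith
  have hb1 : ∀ n t, b n t ≤ 1 := by
    intro n t
    simp only [hb]
    linarith [Real.smoothTransition.le_one ((t - t1) / eps n),
      Real.smoothTransition.nonneg ((t - t2) / eps n)]
  have hbz : ∀ n, ∀ t ≤ 0, b n t = 0 := by
    intro n t ht
    have hp := eps_pos n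
    have e1 : sig ((t - t1) / eps n) = 0 := Real.smoothTransition.zero_of_nonpos
      (div_nonpos_of_nonpos_of_nonneg (by linarith) hp.le)
    have e2 : sig ((t - t2) / eps n) = 0 := Real.smoothTransition.zero_of_nonpos
      (div_nonpos_of_nonpos_of_nonneg (by linarith) hp.le)
    simp only [hb]
    rw [e1, e2]; ring
  have hbd : ∀ n t, deriv (b n) t =
      deriv sig ((t - t1) / eps n) / eps n - deriv sig ((t - t2) / eps n) / eps n := by
    intro n t
    apply HasDerivAt.deriv
    have e1 : HasDerivAt (fun y : ℝ => (y - t1) / eps n) (1 / eps n) t :=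
      ((hasDerivAt_id t).sub_const t1).div_const _
    have e2 : HasDerivAt (fun y : ℝ => (y - t2) / eps n) (1 / eps n) t :=
      ((hasDerivAt_id t).sub_const t2).div_const _
    have e3 := ((sig_d _).comp t e1).sub ((sig_d _).comp t e2)
    refine e3.congr_deriv ?_
    ring
  have hL1 : Tendsto (fun n => ∫ t, deriv (b n) t * m t) atTop (nhds (m t1 - m t2)) := by
    have := (ker_right hm hmb (hmr t1 h1)).sub (ker_right hm hmb (hmr t2 (h1.trans h12)))
    refine this.congr fun n => ?_
    rw [← integral_sub (ker_integrable hm hmb n) (ker_integrable hm hmb n)]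
    congr 1
    ext t
    rw [hbd]; ring
  have hL2 : Tendsto (fun n => ∫ t, b n t * q t) atTop (nhds (∫ t in t1..t2, q t)) := by
    rw [intervalIntegral.integral_of_le h12, ← integral_indicator measurableSet_Ioc]
    apply tendsto_integral_of_dominated_convergence ((Icc t1 (t2 + 1)).indicator fun _ => 1 * Cq)
    · exact fun n => ((hbC n).continuous.measurable.mul hq).aestronglyMeasurable
    · rw [integrable_indicator_iff measurableSet_Icc]
      exact integrableOn_const isCompact_Icc.measure_lt_top.ne
    · intro n
      refine Eventually.of_forall fun t => ?_
      by_cases ht : t ∈ Icc t1 (t2 + 1)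
      · rw [indicator_of_mem ht, Real.norm_eq_abs, abs_mul, abs_of_nonneg (hb0 n t)]
        have := hb1 n t
        have := hb0 n t
        have := hqb t
        gcongr
      · rw [indicator_of_notMem ht, hz n t ht]; simp
    · refine Eventually.of_forall fun t => ?_
      have hcases : Tendsto (fun n => b n t) atTop (nhds ((Ioc t1 t2).indicator (fun _ => 1) t)) := by
        refine tendsto_const_nhds.congr' ?_
        rcases le_or_gt t t1 with h | h
        · refine Eventually.of_forall fun n => ?_
          rw [indicator_of_notMem (fun h' => absurd h'.1 (not_lt.2 h))]
          have hp := eps_pos n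
          have e1 : sig ((t - t1) / eps n) = 0 := Real.smoothTransition.zero_of_nonpos
            (div_nonpos_of_nonpos_of_nonneg (by linarith) hp.le)
          have e2 : sig ((t - t2) / eps n) = 0 := Real.smoothTransition.zero_of_nonpos
            (div_nonpos_of_nonpos_of_nonneg (by linarith) hp.le)
          simp only [hb]
          rw [e1, e2]; ring
        · rcases le_or_gt t t2 with h' | h'
          · rw [indicator_of_mem (show t ∈ Ioc t1 t2 from ⟨h, h'⟩)]
            filter_upwards [eps_lim.eventually (gt_mem_nhds (show 0 < t - t1 by linarith))] with n hn
            have hp := eps_pos n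
            have e1 : sig ((t - t1) / eps n) = 1 := Real.smoothTransition.one_of_one_le
              (by rw [le_div_iff₀ hp]; linarith)
            have e2 : sig ((t - t2) / eps n) = 0 := Real.smoothTransition.zero_of_nonpos
              (div_nonpos_of_nonpos_of_nonneg (by linarith) hp.le)
            simp only [hb]
            rw [e1, e2]; ring
          · rw [indicator_of_notMem (fun h'' => absurd h''.2 (not_le.2 h'))]
            filter_upwards [eps_lim.eventually (gt_mem_nhds (show 0 < t - t2 by linarith))] with n hn
            have hp := eps_pos n
            have e1 : sig ((t - t1) / eps n) = 1 := Real.smoothTransition.one_of_one_le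
              (by rw [le_div_iff₀ hp]; linarith)
            have e2 : sig ((t - t2) / eps n) = 1 := Real.smoothTransition.one_of_one_le
              (by rw [le_div_iff₀ hp]; linarith)
            simp only [hb]
            rw [e1, e2]; ring
      have e : (Ioc t1 t2).indicator (fun t => q t) t = (Ioc t1 t2).indicator (fun _ => 1) t * q t := by
        by_cases h : t ∈ Ioc t1 t2
        · rw [indicator_of_mem h, indicator_of_mem h, one_mul]
        · rw [indicator_of_notMem h, indicator_of_notMem h, zero_mul]
      rw [e]
      exact hcases.mul_const _
  have := ge_of_tendsto (hL1.add hL2) (Eventually.of_forall fun n =>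
    hyp (b n) (hbC n) (hbs n) (hb0 n) (hbz n))
  linarith


/-- bounded measurable functions of one variable are interval integrable -/
lemma ii_of_bdd {h : ℝ → ℝ} (hm : Measurable h) {C : ℝ} (hb : ∀ y, |h y| ≤ C) (a b : ℝ) :
    IntervalIntegrable h volume a b := by
  rw [intervalIntegrable_iff]
  refine Measure.integrableOn_of_bounded (M := C) ?_ hm.aestronglyMeasurable ?_
  · simp
  · exact Eventually.of_forall fun y => hb y

lemma io_of_bdd {h : ℝ → ℝ} (hm : Measurable h) {C : ℝ} (hb : ∀ y, |h y| ≤ C) (a b : ℝ) :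
    IntegrableOn h (Icc a b) := by
  refine Measure.integrableOn_of_bounded (M := C) ?_ hm.aestronglyMeasurable ?_
  · simp
  · exact Eventually.of_forall fun y => hb y

lemma ae_deriv_int {h : ℝ → ℝ} (hm : Measurable h) {C : ℝ} (hb : ∀ y, |h y| ≤ C) :
    ∀ᵐ x, ∀ c, HasDerivAt (fun x => ∫ t in c..x, h t) (h x) x := by
  apply LocallyIntegrable.ae_hasDerivAt_integral
  intro x
  refine ⟨Icc (x-1) (x+1), Icc_mem_nhds (by linarith) (by linarith), ?_⟩
  exact io_of_bdd hm hb _ _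

lemma ae_nonneg_of_int {h : ℝ → ℝ} (hm : Measurable h) {C : ℝ} (hb : ∀ y, |h y| ≤ C)
    (hi : ∀ t1 t2, 0 ≤ t1 → t1 ≤ t2 → 0 ≤ ∫ t in t1..t2, h t) : ∀ᵐ t, 0 < t → 0 ≤ h t := by
  filter_upwards [ae_deriv_int hm hb] with t ht h0
  have h1 := ht 0
  rw [hasDerivAt_iff_tendsto_slope] at h1
  have h2 : Tendsto (slope (fun x => ∫ t in (0:ℝ)..x, h t) t) (nhdsWithin t (Ioi t)) (nhds (h t)) :=
    h1.mono_left (nhdsWithin_mono _ (fun y hy => ne_of_gt hy))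
  refine ge_of_tendsto h2 ?_
  filter_upwards [self_mem_nhdsWithin] with y hy
  rw [slope_def_field]
  have hy' : t < y := hy
  rw [intervalIntegral.integral_interval_sub_left (ii_of_bdd hm hb _ _) (ii_of_bdd hm hb _ _)]
  exact div_nonneg (hi t y h0.le hy'.le) (by linarith)

lemma sgn_max (f : ℝ → ℝ) (v k : ℝ) :
    Real.sign (v - k) * (f v - f k) = f (max v k) - f (min v k) := by
  rcases lt_trichotomy v k with h | h | h
  · rw [Real.sign_of_neg (by linarith), max_eq_right h.le, min_eq_left h.le]; ring
  · subst h; simp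
  · rw [Real.sign_of_pos (by linarith), max_eq_left h.le, min_eq_right h.le]; ring

namespace ABSol
variable {fl fr : ℝ → ℝ} {A B : ℝ} {u0 : ℝ → ℝ} (sol : ABSol fl fr A B u0)

def Um (x t : ℝ) : ℝ := if 0 < t then sol.um x t else 0
def Up (x t : ℝ) : ℝ := if 0 < t then sol.up x t else 0

lemma nw_m (x : ℝ) : Tendsto (fun n => x - eps n) atTop (nhdsWithin x (Iio x)) := by
  apply tendsto_nhdsWithin_of_tendsto_nhds_of_eventually_within
  · simpa using (tendsto_const_nhds (x := x)).sub eps_lim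
  · exact Eventually.of_forall fun n => by have := eps_pos n; simp only [mem_Iio]; linarith

lemma nw_p (x : ℝ) : Tendsto (fun n => x + eps n) atTop (nhdsWithin x (Ioi x)) := by
  apply tendsto_nhdsWithin_of_tendsto_nhds_of_eventually_within
  · simpa using (tendsto_const_nhds (x := x)).add eps_lim
  · exact Eventually.of_forall fun n => by have := eps_pos n; simp only [mem_Ioi]; linarith

lemma Um_meas2 : Measurable (fun P : ℝ × ℝ => sol.Um P.1 P.2) := by
  apply measurable_of_tendsto_metrizable
    (f := fun n (P : ℝ × ℝ) => if 0 < P.2 then sol.u (P.1 - eps n) P.2 else 0)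
  · intro n
    refine Measurable.ite (measurableSet_lt measurable_const measurable_snd) ?_ measurable_const
    exact sol.meas.comp ((measurable_fst.sub measurable_const).prodMk measurable_snd)
  · rw [tendsto_pi_nhds]
    intro P
    unfold Um
    split_ifs with h
    · exact (sol.um_spec P.1 P.2 h).comp (nw_m P.1)
    · exact tendsto_const_nhds

lemma Up_meas2 : Measurable (fun P : ℝ × ℝ => sol.Up P.1 P.2) := by
  apply measurable_of_tendsto_metrizable
    (f := fun n (P : ℝ × ℝ) => if 0 < P.2 then sol.u (P.1 + eps n) P.2 else 0)
  · intro n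
    refine Measurable.ite (measurableSet_lt measurable_const measurable_snd) ?_ measurable_const
    exact sol.meas.comp ((measurable_fst.add measurable_const).prodMk measurable_snd)
  · rw [tendsto_pi_nhds]
    intro P
    unfold Up
    split_ifs with h
    · exact (sol.up_spec P.1 P.2 h).comp (nw_p P.1)
    · exact tendsto_const_nhds

lemma Um_meas (x : ℝ) : Measurable (sol.Um x) := sol.Um_meas2.comp measurable_prodMk_left
lemma Up_meas (x : ℝ) : Measurable (sol.Up x) := sol.Up_meas2.comp measurable_prodMk_left
lemma u_meas (t : ℝ) : Measurable (fun x => sol.u x t) :=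
  sol.meas.comp (measurable_id.prodMk measurable_const)

lemma um_bdd {M : ℝ} (hM : ∀ x t, |sol.u x t| ≤ M) {x t : ℝ} (ht : 0 < t) : |sol.um x t| ≤ M :=
  le_of_tendsto ((sol.um_spec x t ht).abs) (Eventually.of_forall fun y => hM y t)
lemma up_bdd {M : ℝ} (hM : ∀ x t, |sol.u x t| ≤ M) {x t : ℝ} (ht : 0 < t) : |sol.up x t| ≤ M :=
  le_of_tendsto ((sol.up_spec x t ht).abs) (Eventually.of_forall fun y => hM y t)
lemma Um_bdd {M : ℝ} (hM : ∀ x t, |sol.u x t| ≤ M) (x t : ℝ) : |sol.Um x t| ≤ M := by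
  unfold Um
  split_ifs with h
  · exact sol.um_bdd hM h
  · simpa using (abs_nonneg _).trans (hM 0 0)
lemma Up_bdd {M : ℝ} (hM : ∀ x t, |sol.u x t| ≤ M) (x t : ℝ) : |sol.Up x t| ≤ M := by
  unfold Up
  split_ifs with h
  · exact sol.up_bdd hM h
  · simpa using (abs_nonneg _).trans (hM 0 0)

/-- bound of a continuous function on [-M,M] -/
lemma cbd {f : ℝ → ℝ} (hf : Continuous f) (M : ℝ) : ∃ C, 0 ≤ C ∧ ∀ v, |v| ≤ M → |f v| ≤ C := by
  obtain ⟨C, hC⟩ := (isCompact_Icc (a := -M) (b := M)).exists_bound_of_continuousOn hf.continuousOn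
  exact ⟨|C|, abs_nonneg _, fun v hv => (hC v (abs_le.1 hv)).trans (le_abs_self _)⟩

lemma prod_c1 {ψ b : ℝ → ℝ} (hψ : ContDiff ℝ 1 ψ) (hb : ContDiff ℝ 1 b) :
    ContDiff ℝ 1 (fun p : ℝ × ℝ => ψ p.1 * b p.2) :=
  (hψ.comp contDiff_fst).mul (hb.comp contDiff_snd)

lemma prod_supp {ψ b : ℝ → ℝ} (hψ : HasCompactSupport ψ) (hb : HasCompactSupport b) :
    HasCompactSupport (fun p : ℝ × ℝ => ψ p.1 * b p.2) := by
  refine HasCompactSupport.intro (IsCompact.prod hψ hb) ?_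
  intro p hp
  rw [mem_prod, not_and_or] at hp
  rcases hp with h | h
  · rw [image_eq_zero_of_notMem_tsupport h, zero_mul]
  · rw [image_eq_zero_of_notMem_tsupport h, mul_zero]

lemma test_weak : TestIneq (fun P => sol.u P.1 P.2) (fun P => dflux fl fr P.1 (sol.u P.1 P.2)) := by
  intro ψ b hψ hψs hψ0 hb hbs hb0 hbz
  have h := sol.weak (fun x t => ψ x * b t) (prod_c1 hψ hb) (prod_supp hψs hbs)
    (fun x t ht => by rw [hbz t ht, mul_zero])
  simp only [deriv_const_mul_field', deriv_mul_const_field'] at h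
  exact h.ge

lemma test_weak' : TestIneq (fun P => -sol.u P.1 P.2) (fun P => -dflux fl fr P.1 (sol.u P.1 P.2)) := by
  intro ψ b hψ hψs hψ0 hb hbs hb0 hbz
  have h := sol.weak (fun x t => ψ x * b t) (prod_c1 hψ hb) (prod_supp hψs hbs)
    (fun x t ht => by rw [hbz t ht, mul_zero])
  simp only [deriv_const_mul_field', deriv_mul_const_field'] at h
  refine le_of_eq ?_
  rw [← neg_zero, ← h, ← integral_neg]
  congr 1; ext P; ring

lemma test_int : TestIneq (fun P => |sol.u P.1 P.2 - cAB A B P.1|)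
    (fun P => Real.sign (sol.u P.1 P.2 - cAB A B P.1) *
          (dflux fl fr P.1 (sol.u P.1 P.2) - dflux fl fr P.1 (cAB A B P.1))) := by
  intro ψ b hψ hψs hψ0 hb hbs hb0 hbz
  have h := sol.interfaceEntropy (fun x t => ψ x * b t) (prod_c1 hψ hb) (prod_supp hψs hbs)
    (fun x t => mul_nonneg (hψ0 x) (hb0 t))
    (fun x t ht => by rw [hbz t ht, mul_zero])
  simp only [deriv_const_mul_field', deriv_mul_const_field'] at h
  exact h

lemma dflux_meas (hl : Continuous fl) (hr : Continuous fr) {v : ℝ × ℝ → ℝ} (hv : Measurable v) :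
    Measurable (fun P : ℝ × ℝ => dflux fl fr P.1 (v P)) := by
  unfold dflux
  exact Measurable.ite (measurableSet_lt measurable_fst measurable_const)
    (hl.measurable.comp hv) (hr.measurable.comp hv)

def fm (fl fr : ℝ → ℝ) (x v : ℝ) : ℝ := if x ≤ 0 then fl v else fr v

lemma fm_cont (hl : Continuous fl) (hr : Continuous fr) (x : ℝ) : Continuous (fm fl fr x) := by
  unfold fm; split_ifs <;> assumption
lemma fp_cont (hl : Continuous fl) (hr : Continuous fr) (x : ℝ) : Continuous (dflux fl fr x) := by
  unfold dflux; split_ifs <;> assumption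

lemma fm_ev (x : ℝ) : ∀ᶠ y in nhdsWithin x (Iio x), ∀ v, dflux fl fr y v = fm fl fr x v := by
  rcases le_or_gt x 0 with h | h
  · filter_upwards [self_mem_nhdsWithin] with y hy v
    have : y < 0 := lt_of_lt_of_le hy h
    simp [dflux, fm, h, this]
  · filter_upwards [mem_nhdsWithin_of_mem_nhds (lt_mem_nhds h)] with y hy v
    simp [dflux, fm, h.not_ge, hy.not_gt]
lemma fp_ev (x : ℝ) : ∀ᶠ y in nhdsWithin x (Ioi x), ∀ v, dflux fl fr y v = dflux fl fr x v := by
  rcases lt_or_ge x 0 with h | h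
  · filter_upwards [mem_nhdsWithin_of_mem_nhds (gt_mem_nhds h)] with y hy v
    simp [dflux, h, hy]
  · filter_upwards [self_mem_nhdsWithin] with y hy v
    have : 0 < y := lt_of_le_of_lt h hy
    simp [dflux, h.not_gt, this.not_gt]

lemma dfl_lim_m (hl : Continuous fl) (hr : Continuous fr) {x t : ℝ} (ht : 0 < t) :
    Tendsto (fun y => dflux fl fr y (sol.u y t)) (nhdsWithin x (Iio x)) (nhds (fm fl fr x (sol.Um x t))) := by
  have h1 := ((fm_cont hl hr x).tendsto _).comp (sol.um_spec x t ht)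
  simp only [Um, if_pos ht]
  refine h1.congr' ?_
  filter_upwards [fm_ev (fl := fl) (fr := fr) x] with y hy
  simp [hy]
lemma dfl_lim_p (hl : Continuous fl) (hr : Continuous fr) {x t : ℝ} (ht : 0 < t) :
    Tendsto (fun y => dflux fl fr y (sol.u y t)) (nhdsWithin x (Ioi x)) (nhds (dflux fl fr x (sol.Up x t))) := by
  have h1 := ((fp_cont hl hr x).tendsto _).comp (sol.up_spec x t ht)
  simp only [Up, if_pos ht]
  refine h1.congr' ?_
  filter_upwards [fp_ev (fl := fl) (fr := fr) x] with y hy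
  simp [hy]

lemma m_meas (x1 x2 : ℝ) : Measurable (fun t => ∫ x in Icc x1 x2, sol.u x t) := by
  have : StronglyMeasurable (fun t => ∫ x in Icc x1 x2, sol.u x t) := by
    apply StronglyMeasurable.integral_prod_right (f := fun t x => sol.u x t)
    exact (sol.meas.comp measurable_swap).stronglyMeasurable
  exact this.measurable

lemma m_bdd {M : ℝ} (hM : ∀ x t, |sol.u x t| ≤ M) (x1 x2 t : ℝ) :
    |∫ x in Icc x1 x2, sol.u x t| ≤ M * volume.real (Icc x1 x2) := by
  rw [← Real.norm_eq_abs]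
  exact norm_setIntegral_le_of_norm_le_const isCompact_Icc.measure_lt_top (fun x _ => hM x t)

lemma m_rc (x1 x2 : ℝ) {t : ℝ} (ht : 0 ≤ t) :
    Tendsto (fun t => ∫ x in Icc x1 x2, sol.u x t) (nhdsWithin t (Ioi t))
      (nhds (∫ x in Icc x1 x2, sol.u x t)) := by
  obtain ⟨M, hM⟩ := sol.bdd
  have h := sol.timeCont (|x1| + |x2|) t ht
  have h' := h.mono_left (nhdsWithin_mono t (show Ioi t ⊆ Ici 0 from fun y hy => ht.trans (le_of_lt hy)))
  rw [tendsto_iff_norm_sub_tendsto_zero]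
  refine squeeze_zero (fun _ => norm_nonneg _) (fun s => ?_) h'
  rw [← integral_sub (io_of_bdd (sol.u_meas s) (fun x => hM x s) _ _)
    (io_of_bdd (sol.u_meas t) (fun x => hM x t) _ _)]
  refine (norm_integral_le_integral_norm _).trans ?_
  refine setIntegral_mono_set ?_ ?_ ?_
  · exact io_of_bdd (C := M + M) (((sol.u_meas s).sub (sol.u_meas t)).abs)
      (fun y => by rw [abs_abs]; exact (abs_sub _ _).trans (add_le_add (hM _ _) (hM _ _))) _ _
  · exact Eventually.of_forall fun y => abs_nonneg _
  · refine (Icc_subset_Icc ?_ ?_).eventuallyLE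
    · have := neg_abs_le x1; have := abs_nonneg x2; linarith
    · have := le_abs_self x2; have := abs_nonneg x1; linarith

lemma dflux_bd (hl : Continuous fl) (hr : Continuous fr) (M : ℝ) :
    ∃ C, 0 ≤ C ∧ ∀ x v, |v| ≤ M → |dflux fl fr x v| ≤ C ∧ |fm fl fr x v| ≤ C := by
  obtain ⟨C1, h1, h1'⟩ := cbd hl M
  obtain ⟨C2, h2, h2'⟩ := cbd hr M
  refine ⟨C1 + C2, by positivity, fun x v hv => ?_⟩
  have := h1' v hv
  have := h2' v hv
  constructor
  · unfold dflux; split_ifs <;> linarith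
  · unfold fm; split_ifs <;> linarith

lemma balance (hl : Continuous fl) (hr : Continuous fr) {x1 x2 t1 t2 : ℝ} (hx : x1 ≤ x2) (h1 : 0 ≤ t1)
    (h12 : t1 ≤ t2) : (∫ x in Icc x1 x2, sol.u x t2) - (∫ x in Icc x1 x2, sol.u x t1) =
    ∫ t in t1..t2, (fm fl fr x1 (sol.Um x1 t) - dflux fl fr x2 (sol.Up x2 t)) := by
  obtain ⟨M, hM⟩ := sol.bdd
  obtain ⟨C, hC0, hC⟩ := dflux_bd hl hr M
  have hqm : Measurable (fun t => fm fl fr x1 (sol.Um x1 t) - dflux fl fr x2 (sol.Up x2 t)) :=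
    ((fm_cont hl hr x1).measurable.comp (sol.Um_meas x1)).sub
      ((fp_cont hl hr x2).measurable.comp (sol.Up_meas x2))
  have hqb : ∀ t, |fm fl fr x1 (sol.Um x1 t) - dflux fl fr x2 (sol.Up x2 t)| ≤ C + C := fun t =>
    (abs_sub _ _).trans (add_le_add (hC _ _ (sol.Um_bdd hM _ _)).2 (hC _ _ (sol.Up_bdd hM _ _)).1)
  have hum : Measurable (fun P : ℝ × ℝ => sol.u P.1 P.2) := sol.meas
  apply le_antisymm
  · refine TT (sol.m_meas x1 x2) hqm (sol.m_bdd hM x1 x2) hqb (fun t ht => sol.m_rc x1 x2 ht) ?_ h1 h12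
    intro b hb hbs hb0 hbz
    exact XX hum (dflux_meas hl hr hum) (fun P => hM P.1 P.2) (fun P => (hC P.1 _ (hM P.1 P.2)).1)
      sol.test_weak hx (fun t ht => sol.dfl_lim_m hl hr ht) (fun t ht => sol.dfl_lim_p hl hr ht)
      (fun t ht => rfl) hb hbs hb0 hbz
  · have := TT (m := fun t => -∫ x in Icc x1 x2, sol.u x t)
      (q := fun t => -(fm fl fr x1 (sol.Um x1 t) - dflux fl fr x2 (sol.Up x2 t)))
      (sol.m_meas x1 x2).neg hqm.neg (fun t => by rw [abs_neg]; exact sol.m_bdd hM x1 x2 t)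
      (fun t => by rw [abs_neg]; exact hqb t)
      (fun t ht => (sol.m_rc x1 x2 ht).neg) (fun b hb hbs hb0 hbz => ?_) h1 h12
    · rw [intervalIntegral.integral_neg] at this
      linarith
    · have := XX hum.neg (dflux_meas hl hr hum).neg (fun P => by simpa using hM P.1 P.2)
        (fun P => by simpa using (hC P.1 _ (hM P.1 P.2)).1)
        sol.test_weak' hx (fun t ht => (sol.dfl_lim_m hl hr ht).neg)
        (fun t ht => (sol.dfl_lim_p hl hr ht).neg)
        (q := fun t => -(fm fl fr x1 (sol.Um x1 t) - dflux fl fr x2 (sol.Up x2 t)))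
        (fun t ht => by ring) hb hbs hb0 hbz
      simpa [integral_neg] using this

lemma rh (hl : Continuous fl) (hr : Continuous fr) :
    ∀ᵐ t, 0 < t → fl (sol.Um 0 t) = fr (sol.Up 0 t) := by
  obtain ⟨M, hM⟩ := sol.bdd
  obtain ⟨C, hC0, hC⟩ := dflux_bd hl hr M
  have hqm : Measurable (fun t => fm fl fr 0 (sol.Um 0 t) - dflux fl fr 0 (sol.Up 0 t)) :=
    ((fm_cont hl hr 0).measurable.comp (sol.Um_meas 0)).sub
      ((fp_cont hl hr 0).measurable.comp (sol.Up_meas 0))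
  have hqb : ∀ t, |fm fl fr 0 (sol.Um 0 t) - dflux fl fr 0 (sol.Up 0 t)| ≤ C + C := fun t =>
    (abs_sub _ _).trans (add_le_add (hC _ _ (sol.Um_bdd hM _ _)).2 (hC _ _ (sol.Up_bdd hM _ _)).1)
  have hz : ∀ t1 t2, 0 ≤ t1 → t1 ≤ t2 →
      ∫ t in t1..t2, (fm fl fr 0 (sol.Um 0 t) - dflux fl fr 0 (sol.Up 0 t)) = 0 := by
    intro t1 t2 h1 h2
    rw [← sol.balance hl hr le_rfl h1 h2]
    simp
  filter_upwards [ae_nonneg_of_int hqm hqb (fun t1 t2 h1 h2 => (hz t1 t2 h1 h2).ge),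
    ae_nonneg_of_int hqm.neg (fun t => by simpa [abs_sub_comm] using hqb t) (fun t1 t2 h1 h2 => by
      have := hz t1 t2 h1 h2
      simp only [Pi.neg_apply]
      rw [intervalIntegral.integral_neg, this, neg_zero])] with t ha hb ht
  have h1 := ha ht
  have h2 := hb ht
  simp [fm, dflux] at h1 h2
  linarith

lemma ient (hl : Continuous fl) (hr : Continuous fr) :
    ∀ᵐ t, 0 < t → Real.sign (sol.Up 0 t - B) * (fr (sol.Up 0 t) - fr B) ≤
      Real.sign (sol.Um 0 t - A) * (fl (sol.Um 0 t) - fl A) := by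
  obtain ⟨M, hM⟩ := sol.bdd
  simp only [sgn_max]
  have hcl : Continuous (fun v => fl (max v A) - fl (min v A)) := by fun_prop
  have hcr : Continuous (fun v => fr (max v B) - fr (min v B)) := by fun_prop
  obtain ⟨C1, hC10, hC1⟩ := cbd hcl M
  obtain ⟨C2, hC20, hC2⟩ := cbd hcr M
  have hum : Measurable (fun P : ℝ × ℝ => sol.u P.1 P.2) := sol.meas
  have hcm : Measurable (fun P : ℝ × ℝ => cAB A B P.1) := by
    unfold cAB
    exact Measurable.ite (measurableSet_le measurable_fst measurable_const) measurable_const measurable_const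
  set q : ℝ → ℝ := fun t => (fl (max (sol.Um 0 t) A) - fl (min (sol.Um 0 t) A)) -
    (fr (max (sol.Up 0 t) B) - fr (min (sol.Up 0 t) B)) with hq
  have hqm : Measurable q := (hcl.measurable.comp (sol.Um_meas 0)).sub (hcr.measurable.comp (sol.Up_meas 0))
  have hqb : ∀ t, |q t| ≤ C1 + C2 := fun t =>
    (abs_sub _ _).trans (add_le_add (hC1 _ (sol.Um_bdd hM _ _)) (hC2 _ (sol.Up_bdd hM _ _)))
  set Q : ℝ × ℝ → ℝ := (fun P => Real.sign (sol.u P.1 P.2 - cAB A B P.1) *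
          (dflux fl fr P.1 (sol.u P.1 P.2) - dflux fl fr P.1 (cAB A B P.1))) with hQ
  have hQl : ∀ x t, x < 0 → Q (x, t) = fl (max (sol.u x t) A) - fl (min (sol.u x t) A) := by
    intro x t hx
    simp only [hQ]
    rw [← sgn_max]
    simp [cAB, dflux, hx, hx.le]
  have hQr : ∀ x t, 0 < x → Q (x, t) = fr (max (sol.u x t) B) - fr (min (sol.u x t) B) := by
    intro x t hx
    simp only [hQ]
    rw [← sgn_max]
    simp [cAB, dflux, hx.not_gt, hx.not_ge]
  have hcr' : Continuous (fun v => fr (max v A) - fr (min v A)) := by fun_prop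
  obtain ⟨C3, hC30, hC3⟩ := cbd hcr' M
  have hQ0 : ∀ x t, x = 0 → Q (x, t) = fr (max (sol.u x t) A) - fr (min (sol.u x t) A) := by
    intro x t hx
    simp only [hQ]
    rw [← sgn_max]
    simp [cAB, dflux, hx]
  have hQb : ∀ P, |Q P| ≤ C1 + C2 + C3 := by
    rintro ⟨x, t⟩
    rcases lt_trichotomy x 0 with h | h | h
    · rw [hQl x t h]; have := hC1 _ (hM x t); linarith
    · rw [hQ0 x t h]; have := hC3 _ (hM x t); linarith
    · rw [hQr x t h]; have := hC2 _ (hM x t); linarith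
  have hi : ∀ t1 t2, 0 ≤ t1 → t1 ≤ t2 → 0 ≤ ∫ t in t1..t2, q t := by
    intro t1 t2 h1 h2
    have := TT (m := fun _ => 0) measurable_const hqm (Cm := 0) (by simp) hqb
      (fun t ht => tendsto_const_nhds) (fun b hb hbs hb0 hbz => ?_) h1 h2
    · simpa using this
    · have := XX (E := fun P : ℝ × ℝ => |sol.u P.1 P.2 - cAB A B P.1|) (Q := Q) (CE := M + (|A| + |B|))
        ((hum.sub hcm).abs)
        ((measurable_rsign.comp (hum.sub hcm)).mul ((dflux_meas hl hr hum).sub (dflux_meas hl hr hcm)))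
        (fun P => by
          rw [abs_abs]
          refine (abs_sub _ _).trans (add_le_add (hM _ _) ?_)
          have := abs_nonneg A; have := abs_nonneg B
          unfold cAB; split_ifs <;> linarith) hQb sol.test_int (le_refl (0:ℝ))
        (fun t ht => (((hcl.tendsto _).comp (sol.um_spec 0 t ht)).congr' (by
          filter_upwards [self_mem_nhdsWithin] with x hx
          exact (hQl x t hx).symm)))
        (fun t ht => (((hcr.tendsto _).comp (sol.up_spec 0 t ht)).congr' (by
          filter_upwards [self_mem_nhdsWithin] with x hx
          exact (hQr x t hx).symm)))
        (q := q) (fun t ht => by simp only [hq, Um, Up, if_pos ht]) hb hbs hb0 hbz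
      simpa using this
  filter_upwards [ae_nonneg_of_int hqm hqb hi] with t h ht
  have := h ht
  simp only [hq] at this
  linarith

end ABSol


lemma neg_mp : MeasurePreserving (fun P : ℝ × ℝ => (-P.1, P.2)) volume volume :=
  (Measure.measurePreserving_neg (volume : Measure ℝ)).prod (MeasurePreserving.id _)

lemma pde_gen {f f' g : ℝ → ℝ} (F : Flux f f' g) {w u U : ℝ × ℝ → ℝ}
    (hwc : Continuous w) (hu : Measurable u) (hU : Measurable U)
    (hrd : ∀ x t, 0 < x → 0 < t → HasDerivWithinAt (fun y => w (y, t)) (U (x, t)) (Ioi x) x)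
    (ht : ∀ x, 0 < x → ∀ᵐ t, 0 < t → HasDerivAt (fun s => w (x, s)) (-f (U (x, t))) t)
    (hx : ∀ t, 0 < t → ∀ᵐ x, 0 < x → u (x, t) = U (x, t)) :
    ∀ᵐ P : ℝ × ℝ, 0 < P.1 → 0 < P.2 → DifferentiableAt ℝ w P →
      fderiv ℝ w P (1, 0) = u P ∧ fderiv ℝ w P (0, 1) = - f (u P) := by
  have h1 : ∀ᵐ P : ℝ × ℝ, 0 < P.1 → 0 < P.2 → u P = U P := by
    have hms : MeasurableSet {P : ℝ × ℝ | 0 < P.1 → 0 < P.2 → u P = U P} := by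
      have e : {P : ℝ × ℝ | 0 < P.1 → 0 < P.2 → u P = U P} =
        {P | 0 < P.1}ᶜ ∪ ({P | 0 < P.2}ᶜ ∪ {P | u P = U P}) := by
        ext P; simp only [mem_union, mem_compl_iff, mem_ofPred_eq]; tauto
      rw [e]
      exact (measurableSet_lt measurable_const measurable_fst).compl.union
        ((measurableSet_lt measurable_const measurable_snd).compl.union (measurableSet_eq_fun hu hU))
    rw [Measure.volume_eq_prod, Measure.ae_prod_iff_ae_ae hms,
      Measure.ae_ae_comm (p := fun x t => 0 < x → 0 < t → u (x, t) = U (x, t)) hms]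
    refine Eventually.of_forall fun t => ?_
    rcases le_or_gt t 0 with h | h
    · exact Eventually.of_forall fun x _ h' => absurd h' h.not_gt
    · filter_upwards [hx t h] with x hx' h1 _ using hx' h1
  have h2 : ∀ᵐ P : ℝ × ℝ, 0 < P.1 → 0 < P.2 → DifferentiableAt ℝ w P →
      fderiv ℝ w P (0, 1) = - f (U P) := by
    have hms : MeasurableSet {P : ℝ × ℝ | 0 < P.1 → 0 < P.2 → DifferentiableAt ℝ w P →
      fderiv ℝ w P (0, 1) = - f (U P)} := by
      have e : {P : ℝ × ℝ | 0 < P.1 → 0 < P.2 → DifferentiableAt ℝ w P →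
        fderiv ℝ w P (0, 1) = - f (U P)} =
        {P | 0 < P.1}ᶜ ∪ ({P | 0 < P.2}ᶜ ∪ ({P | DifferentiableAt ℝ w P}ᶜ ∪
          {P | fderiv ℝ w P (0, 1) = - f (U P)})) := by
        ext P; simp only [mem_union, mem_compl_iff, mem_ofPred_eq]; tauto
      rw [e]
      exact (measurableSet_lt measurable_const measurable_fst).compl.union
        ((measurableSet_lt measurable_const measurable_snd).compl.union
        ((measurableSet_of_differentiableAt ℝ w).compl.union
          (measurableSet_eq_fun (measurable_fderiv_apply_const ℝ w _)
            (F.cont.measurable.comp hU).neg)))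
    rw [Measure.volume_eq_prod, Measure.ae_prod_iff_ae_ae hms]
    refine Eventually.of_forall fun x => ?_
    rcases le_or_gt x 0 with h | h
    · exact Eventually.of_forall fun t h' => absurd h' h.not_gt
    · filter_upwards [ht x h] with t ht' _ h2 hd
      have h3 : HasDerivAt (fun s => w (x, s)) (fderiv ℝ w (x, t) (0, 1)) t :=
        hd.hasFDerivAt.comp_hasDerivAt t ((hasDerivAt_const t x).prodMk (hasDerivAt_id t))
      exact h3.unique (ht' h2)
  filter_upwards [h1, h2] with P h1 h2 hP1 hP2 hd
  rw [h1 hP1 hP2, h2 hP1 hP2 hd]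
  refine ⟨?_, rfl⟩
  have h3 : HasDerivAt (fun y => w (y, P.2)) (fderiv ℝ w P (1, 0)) P.1 :=
    hd.hasFDerivAt.comp_hasDerivAt (f := fun y => (y, P.2)) P.1
      ((hasDerivAt_id P.1).prodMk (hasDerivAt_const P.1 P.2))
  exact (uniqueDiffWithinAt_Ioi P.1).eq_deriv _ h3.hasDerivWithinAt (hrd P.1 P.2 hP1 hP2)

namespace ABSol
variable {fl fr : ℝ → ℝ} {A B : ℝ} {u0 : ℝ → ℝ} (sol : ABSol fl fr A B u0)

def W (x t : ℝ) : ℝ := (∫ y in (0:ℝ)..x, sol.u y t) - ∫ s in (0:ℝ)..t, fl (sol.Um 0 s)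
def w (P : ℝ × ℝ) : ℝ := sol.W P.1 (max P.2 0)

lemma u_ii (a b t : ℝ) : IntervalIntegrable (fun y => sol.u y t) volume a b := by
  obtain ⟨M, hM⟩ := sol.bdd
  exact ii_of_bdd (sol.u_meas t) (fun y => hM y t) a b

lemma W_x (x1 x2 t : ℝ) : sol.W x2 t - sol.W x1 t = ∫ y in x1..x2, sol.u y t := by
  unfold W
  rw [← intervalIntegral.integral_interval_sub_left (sol.u_ii 0 x2 t) (sol.u_ii 0 x1 t)]
  ring

lemma fUm_ii {f : ℝ → ℝ} (hf : Continuous f) (x a b : ℝ) :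
    IntervalIntegrable (fun s => f (sol.Um x s)) volume a b := by
  obtain ⟨M, hM⟩ := sol.bdd
  obtain ⟨C, h0, hC⟩ := cbd hf M
  exact ii_of_bdd (hf.measurable.comp (sol.Um_meas x)) (fun y => hC _ (sol.Um_bdd hM _ _)) a b
lemma fUp_ii {f : ℝ → ℝ} (hf : Continuous f) (x a b : ℝ) :
    IntervalIntegrable (fun s => f (sol.Up x s)) volume a b := by
  obtain ⟨M, hM⟩ := sol.bdd
  obtain ⟨C, h0, hC⟩ := cbd hf M
  exact ii_of_bdd (hf.measurable.comp (sol.Up_meas x)) (fun y => hC _ (sol.Up_bdd hM _ _)) a b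

lemma rh_int (hl : Continuous fl) (hr : Continuous fr) {t1 t2 : ℝ} (h1 : 0 ≤ t1) (h12 : t1 ≤ t2) :
    ∫ s in t1..t2, fl (sol.Um 0 s) = ∫ s in t1..t2, fr (sol.Up 0 s) := by
  have := sol.balance hl hr (le_refl (0:ℝ)) h1 h12
  simp only [fm, dflux, le_refl, if_true, lt_irrefl, if_false] at this
  rw [intervalIntegral.integral_sub (sol.fUm_ii hl _ _ _) (sol.fUp_ii hr _ _ _)] at this
  simp at this
  linarith

lemma W_tr (hl : Continuous fl) (hr : Continuous fr) {x t1 t2 : ℝ} (hx : 0 ≤ x) (h1 : 0 ≤ t1)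
    (h12 : t1 ≤ t2) : sol.W x t2 - sol.W x t1 = - ∫ s in t1..t2, fr (sol.Up x s) := by
  have hb := sol.balance hl hr hx h1 h12
  simp only [fm, dflux, le_refl, if_true, hx.not_gt, if_false] at hb
  rw [intervalIntegral.integral_sub (sol.fUm_ii hl _ _ _) (sol.fUp_ii hr _ _ _),
    integral_Icc_eq_integral_Ioc, integral_Icc_eq_integral_Ioc,
    ← intervalIntegral.integral_of_le hx, ← intervalIntegral.integral_of_le hx] at hb
  have h3 := intervalIntegral.integral_interval_sub_left (sol.fUm_ii hl 0 0 t2) (sol.fUm_ii hl 0 0 t1)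
  unfold W
  linarith

lemma W_tl (hl : Continuous fl) (hr : Continuous fr) {x t1 t2 : ℝ} (hx : x ≤ 0) (h1 : 0 ≤ t1)
    (h12 : t1 ≤ t2) : sol.W x t2 - sol.W x t1 = - ∫ s in t1..t2, fl (sol.Um x s) := by
  have hb := sol.balance hl hr hx h1 h12
  simp only [fm, dflux, hx, if_true, lt_irrefl, if_false] at hb
  rw [intervalIntegral.integral_sub (sol.fUm_ii hl _ _ _) (sol.fUp_ii hr _ _ _),
    integral_Icc_eq_integral_Ioc, integral_Icc_eq_integral_Ioc,
    ← intervalIntegral.integral_of_le hx, ← intervalIntegral.integral_of_le hx] at hb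
  have h3 := intervalIntegral.integral_interval_sub_left (sol.fUm_ii hl 0 0 t2) (sol.fUm_ii hl 0 0 t1)
  have h4 := sol.rh_int hl hr h1 h12
  unfold W
  rw [intervalIntegral.integral_symm x 0, intervalIntegral.integral_symm x 0]
  linarith

lemma W_t_lip (hl : Continuous fl) (hr : Continuous fr) : ∃ C, 0 ≤ C ∧ ∀ x t1 t2, 0 ≤ t1 → 0 ≤ t2 →
    |sol.W x t2 - sol.W x t1| ≤ C * |t2 - t1| := by
  obtain ⟨M, hM⟩ := sol.bdd
  obtain ⟨C1, h1, hC1⟩ := cbd hl M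
  obtain ⟨C2, h2, hC2⟩ := cbd hr M
  refine ⟨C1 + C2, by positivity, fun x => ?_⟩
  have key : ∀ t1 t2, 0 ≤ t1 → t1 ≤ t2 → |sol.W x t2 - sol.W x t1| ≤ (C1 + C2) * |t2 - t1| := by
    intro t1 t2 h0 h12
    have ha := abs_nonneg (t2 - t1)
    rcases le_total 0 x with h | h
    · rw [sol.W_tr hl hr h h0 h12, abs_neg, ← Real.norm_eq_abs (∫ _ in _.._, _)]
      refine (intervalIntegral.norm_integral_le_of_norm_le_const (C := C2)
        (fun s _ => hC2 _ (sol.Up_bdd hM _ _))).trans ?_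
      nlinarith
    · rw [sol.W_tl hl hr h h0 h12, abs_neg, ← Real.norm_eq_abs (∫ _ in _.._, _)]
      refine (intervalIntegral.norm_integral_le_of_norm_le_const (C := C1)
        (fun s _ => hC1 _ (sol.Um_bdd hM _ _))).trans ?_
      nlinarith
  intro t1 t2 ht1 ht2
  rcases le_total t1 t2 with h | h
  · exact key t1 t2 ht1 h
  · rw [abs_sub_comm, abs_sub_comm t2]; exact key t2 t1 ht2 h

lemma w_lip (hl : Continuous fl) (hr : Continuous fr) : ∃ K : NNReal, LipschitzWith K sol.w := by
  obtain ⟨C, h0, hC⟩ := sol.W_t_lip hl hr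
  obtain ⟨M, hM⟩ := sol.bdd
  have hM0 : 0 ≤ M := (abs_nonneg _).trans (hM 0 0)
  refine ⟨⟨M + C, by positivity⟩, LipschitzWith.of_dist_le_mul ?_⟩
  rintro ⟨x, t⟩ ⟨y, s⟩
  simp only [NNReal.coe_mk, Real.dist_eq, Prod.dist_eq, w]
  have h1 : |sol.W x (max t 0) - sol.W y (max t 0)| ≤ M * |x - y| := by
    rw [sol.W_x, ← Real.norm_eq_abs (∫ _ in _.._, _)]
    exact intervalIntegral.norm_integral_le_of_norm_le_const (fun s _ => hM _ _)
  have h2 := hC y (max s 0) (max t 0) (le_max_right _ _) (le_max_right _ _)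
  have h3 : |max t 0 - max s 0| ≤ |t - s| := abs_max_sub_max_le_abs t s 0
  have h4 := le_max_left |x - y| |t - s|
  have h5 := le_max_right |x - y| |t - s|
  calc |sol.W x (max t 0) - sol.W y (max s 0)|
      ≤ |sol.W x (max t 0) - sol.W y (max t 0)| + |sol.W y (max t 0) - sol.W y (max s 0)| :=
        abs_sub_le _ _ _
    _ ≤ M * |x - y| + C * |max t 0 - max s 0| := add_le_add h1 h2
    _ ≤ M * max |x - y| |t - s| + C * max |x - y| |t - s| := by gcongr; exact h3.trans h5
    _ = (M + C) * max |x - y| |t - s| := by ring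

lemma w_rd (x : ℝ) {t : ℝ} (ht : 0 < t) :
    HasDerivWithinAt (fun y => sol.w (y, t)) (sol.up x t) (Ioi x) x := by
  simp only [w, W]
  rw [max_eq_left ht.le]
  apply HasDerivWithinAt.sub_const
  refine (intervalIntegral.integral_hasDerivWithinAt_of_tendsto_ae_right (s := Ici x) (t := Ioi x)
    (sol.u_ii 0 x t) ?_ ?_).mono Ioi_subset_Ici_self
  · exact (sol.u_meas t).stronglyMeasurable.stronglyMeasurableAtFilter
  · exact (sol.up_spec x t ht).mono_left inf_le_left

lemma w_ld (x : ℝ) {t : ℝ} (ht : 0 < t) :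
    HasDerivWithinAt (fun y => sol.w (y, t)) (sol.um x t) (Iio x) x := by
  simp only [w, W]
  rw [max_eq_left ht.le]
  apply HasDerivWithinAt.sub_const
  refine (intervalIntegral.integral_hasDerivWithinAt_of_tendsto_ae_right (s := Iic x) (t := Iic x)
    (sol.u_ii 0 x t) ?_ ?_).mono Iio_subset_Iic_self
  · exact (sol.u_meas t).stronglyMeasurable.stronglyMeasurableAtFilter
  · refine (sol.um_spec x t ht).mono_left ?_
    have : (ae volume : Filter ℝ) ≤ 𝓟 {x}ᶜ := by
      rw [le_principal_iff]; exact compl_mem_ae_iff.2 (by simp)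
    refine (inf_le_inf_left _ this).trans ?_
    rw [nhdsWithin, inf_assoc, inf_principal, nhdsWithin]
    refine inf_le_inf_left _ (principal_mono.2 ?_)
    rintro y ⟨h1, h2⟩
    exact lt_of_le_of_ne h1 h2

lemma w_tr (hl : Continuous fl) (hr : Continuous fr) {x : ℝ} (hx : 0 ≤ x) :
    ∀ᵐ t, 0 < t → HasDerivAt (fun s => sol.w (x, s)) (-fr (sol.Up x t)) t := by
  obtain ⟨M, hM⟩ := sol.bdd
  obtain ⟨C, h0, hC⟩ := cbd hr M
  filter_upwards [ae_deriv_int (hr.measurable.comp (sol.Up_meas x)) (fun y => hC _ (sol.Up_bdd hM _ _))]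
    with t h ht
  refine ((h 0).neg.const_add (sol.W x 0)).congr_of_eventuallyEq ?_
  filter_upwards [lt_mem_nhds ht] with s hs
  have := sol.W_tr hl hr hx le_rfl hs.le
  simp only [w, max_eq_left hs.le, Pi.neg_apply, Function.comp_apply]
  linarith
lemma w_tl (hl : Continuous fl) (hr : Continuous fr) {x : ℝ} (hx : x ≤ 0) :
    ∀ᵐ t, 0 < t → HasDerivAt (fun s => sol.w (x, s)) (-fl (sol.Um x t)) t := by
  obtain ⟨M, hM⟩ := sol.bdd
  obtain ⟨C, h0, hC⟩ := cbd hl M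
  filter_upwards [ae_deriv_int (hl.measurable.comp (sol.Um_meas x)) (fun y => hC _ (sol.Um_bdd hM _ _))]
    with t h ht
  refine ((h 0).neg.const_add (sol.W x 0)).congr_of_eventuallyEq ?_
  filter_upwards [lt_mem_nhds ht] with s hs
  have := sol.W_tl hl hr hx le_rfl hs.le
  simp only [w, max_eq_left hs.le, Pi.neg_apply, Function.comp_apply]
  linarith

lemma u_ae {t : ℝ} (ht : 0 < t) : ∀ᵐ x, sol.u x t = sol.Up x t ∧ sol.u x t = sol.Um x t := by
  obtain ⟨M, hM⟩ := sol.bdd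
  filter_upwards [ae_deriv_int (sol.u_meas t) (fun y => hM y t)] with x h
  have h1 : HasDerivAt (fun y => sol.w (y, t)) (sol.u x t) x := by
    simp only [w, W]
    rw [max_eq_left ht.le]
    exact (h 0).sub_const _
  simp only [Up, Um, if_pos ht]
  exact ⟨(uniqueDiffWithinAt_Ioi x).eq_deriv _ h1.hasDerivWithinAt (sol.w_rd x ht),
   (uniqueDiffWithinAt_Iio x).eq_deriv _ h1.hasDerivWithinAt (sol.w_ld x ht)⟩

lemma lim_r {t : ℝ} (ht : 0 < t) :
    Tendsto (fun x => sol.um x t) (nhdsWithin 0 (Ioi 0)) (nhds (sol.up 0 t)) := by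
  rw [Metric.tendsto_nhds]
  intro ε hε
  have h := (Metric.tendsto_nhds.1 (sol.up_spec 0 t ht)) (ε/2) (by linarith)
  rw [eventually_nhdsWithin_iff, Metric.eventually_nhds_iff] at h
  obtain ⟨δ, hδ, h⟩ := h
  filter_upwards [Ioo_mem_nhdsGT hδ] with x hx
  have : dist (sol.um x t) (sol.up 0 t) ≤ ε / 2 := by
    refine le_of_tendsto ((sol.um_spec x t ht).dist tendsto_const_nhds) ?_
    filter_upwards [Ioo_mem_nhdsLT hx.1] with y hy
    refine (h ?_ hy.1).le
    rw [Real.dist_eq, sub_zero, abs_of_pos hy.1]; exact hy.2.trans hx.2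
  linarith
lemma lim_l {t : ℝ} (ht : 0 < t) :
    Tendsto (fun x => sol.up x t) (nhdsWithin 0 (Iio 0)) (nhds (sol.um 0 t)) := by
  rw [Metric.tendsto_nhds]
  intro ε hε
  have h := (Metric.tendsto_nhds.1 (sol.um_spec 0 t ht)) (ε/2) (by linarith)
  rw [eventually_nhdsWithin_iff, Metric.eventually_nhds_iff] at h
  obtain ⟨δ, hδ, h⟩ := h
  filter_upwards [Ioo_mem_nhdsLT (show -δ < 0 by linarith)] with x hx
  have : dist (sol.up x t) (sol.um 0 t) ≤ ε / 2 := by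
    refine le_of_tendsto ((sol.up_spec x t ht).dist tendsto_const_nhds) ?_
    filter_upwards [Ioo_mem_nhdsGT hx.2] with y hy
    refine (h ?_ hy.2).le
    rw [Real.dist_eq, sub_zero, abs_of_neg hy.2]; linarith [hy.1, hx.1]
  linarith

lemma hpde_r {gr : ℝ → ℝ} (Fl : Continuous fl) (Fr : Flux fr (deriv fr) gr) {M : ℝ}
    (hM : ∀ x t, |sol.u x t| ≤ M) {K : NNReal} (hK : LipschitzWith K sol.w) :
    HalfPDE fr (deriv fr) gr sol.w (fun P => sol.u P.1 P.2) K M where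
  flux := Fr
  lip := hK
  meas := sol.meas
  bdd P := hM _ _
  pde := by
    refine pde_gen Fr (U := fun P => sol.Up P.1 P.2) hK.continuous sol.meas sol.Up_meas2 ?_ ?_ ?_
    · intro x t _ ht
      simp only [Up, if_pos ht]
      exact sol.w_rd x ht
    · intro x hx
      exact sol.w_tr Fl Fr.cont hx.le
    · intro t ht
      filter_upwards [sol.u_ae ht] with x h _ using h.1
  kru k φ hφ hφs hφ0 hφz := by
    have := sol.kruzkov_r k (fun x t => φ (x, t)) hφ hφs (fun x t => hφ0 _) (fun x t h => hφz _ (by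
      simp only [mem_ofPred_eq, not_and_or, not_lt]; exact h))
    refine this.trans_eq (integral_congr_ae (Eventually.of_forall fun P => ?_))
    have hd := (hφ.differentiable (by norm_num) P).hasFDerivAt
    have e1 : HasDerivAt (fun s => φ (P.1, s)) (fderiv ℝ φ P (0, 1)) P.2 :=
      hd.comp_hasDerivAt (f := fun s => (P.1, s)) P.2 ((hasDerivAt_const P.2 P.1).prodMk (hasDerivAt_id P.2))
    have e2 : HasDerivAt (fun y => φ (y, P.2)) (fderiv ℝ φ P (1, 0)) P.1 :=
      hd.comp_hasDerivAt (f := fun y => (y, P.2)) P.1 ((hasDerivAt_id P.1).prodMk (hasDerivAt_const P.1 P.2))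
    simp only [e1.deriv, e2.deriv]

lemma hpde_l {gl : ℝ → ℝ} (Fl : Flux fl (deriv fl) gl) (hr : Continuous fr) {M : ℝ}
    (hM : ∀ x t, |sol.u x t| ≤ M) {K : NNReal} (hK : LipschitzWith K sol.w)
    (hK' : LipschitzWith K (fun P : ℝ × ℝ => sol.w (-P.1, P.2))) :
    HalfPDE (fun v => fl (-v)) (fun v => -deriv fl (-v)) (fun p => -gl (-p))
      (fun P => sol.w (-P.1, P.2)) (fun P => -sol.u (-P.1) P.2) K M where
  flux := Fl.reflect
  lip := hK'
  meas := (sol.meas.comp neg_mp.measurable).neg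
  bdd P := by simpa using hM _ _
  pde := by
    refine pde_gen Fl.reflect (U := fun P => -sol.Um (-P.1) P.2) hK'.continuous
      (sol.meas.comp neg_mp.measurable).neg (sol.Um_meas2.comp neg_mp.measurable).neg ?_ ?_ ?_
    · intro x t _ ht
      simp only [Um, if_pos ht]
      have := (sol.w_ld (-x) ht).scomp x (hasDerivAt_neg x).hasDerivWithinAt (s := Ioi x)
        (fun y hy => by simp only [mem_Iio]; have : x < y := hy; linarith)
      simpa [Function.comp_def] using this
    · intro x hx
      simp only [neg_neg]
      exact sol.w_tl Fl.cont hr (x := -x) (by linarith)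
    · intro t ht
      have := (Measure.measurePreserving_neg (volume : Measure ℝ)).quasiMeasurePreserving.ae (sol.u_ae ht)
      filter_upwards [this] with x h _
      simp only [h.2]
  kru k φ hφ hφs hφ0 hφz := by
    have hc : ContDiff ℝ 1 (fun P : ℝ × ℝ => (-P.1, P.2)) := contDiff_fst.neg.prodMk contDiff_snd
    have hh : HasCompactSupport (fun P : ℝ × ℝ => φ (-P.1, P.2)) :=
      hφs.comp_homeomorph ((Homeomorph.neg ℝ).prodCongr (Homeomorph.refl ℝ))
    have := sol.kruzkov_l (-k) (fun x t => φ (-x, t)) (hφ.comp hc) hh (fun x t => hφ0 _) (fun x t h => hφz _ (by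
      simp only [mem_ofPred_eq, not_and_or, not_lt]; exact h.imp (fun h => by linarith) id))
    have hemb : MeasurableEmbedding (fun P : ℝ × ℝ => (-P.1, P.2)) :=
      ((Homeomorph.neg ℝ).prodCongr (Homeomorph.refl ℝ)).measurableEmbedding
    rw [← neg_mp.integral_comp hemb] at this
    refine this.trans_eq (integral_congr_ae (Eventually.of_forall fun P => ?_))
    have hd := (hφ.differentiable (by norm_num) P).hasFDerivAt
    have hd' : HasFDerivAt φ (fderiv ℝ φ P) (- -P.1, P.2) := by rw [neg_neg]; exact hd
    have e1 : HasDerivAt (fun s => φ (P.1, s)) (fderiv ℝ φ P (0, 1)) P.2 :=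
      hd.comp_hasDerivAt (f := fun s => (P.1, s)) P.2 ((hasDerivAt_const P.2 P.1).prodMk (hasDerivAt_id P.2))
    have e2 : HasDerivAt (fun y => φ (-y, P.2)) (fderiv ℝ φ P (-1, 0)) (-P.1) :=
      hd'.comp_hasDerivAt (f := fun y => (-y, P.2)) (-P.1)
        ((hasDerivAt_neg (-P.1)).prodMk (hasDerivAt_const (-P.1) P.2))
    have e3 : fderiv ℝ φ P (-1, 0) = - fderiv ℝ φ P (1, 0) := by
      rw [← map_neg]; simp
    simp only [neg_neg, e1.deriv, e2.deriv, e3]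
    rw [show -sol.u (-P.1) P.2 - k = -(sol.u (-P.1) P.2 - -k) by ring, Real.sign_neg, abs_neg]
    ring

theorem main_half {gl gr : ℝ → ℝ} (Fl : Flux fl (deriv fl) gl) (Fr : Flux fr (deriv fr) gr) :
    ∃ w K M, Half fr (deriv fr) gr w sol.um sol.up K M ∧
      Half (fun v => fl (-v)) (fun v => -deriv fl (-v)) (fun p => -gl (-p)) (fun P => w (-P.1, P.2))
        (fun x t => -sol.up (-x) t) (fun x t => -sol.um (-x) t) K M ∧
      (∀ᵐ t, 0 < t → HasDerivAt (fun s => w (0, s)) (-fl (sol.um 0 t)) t) := by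
  obtain ⟨M, hM⟩ := sol.bdd
  obtain ⟨K, hK⟩ := sol.w_lip Fl.cont Fr.cont
  have hK' : LipschitzWith K (fun P : ℝ × ℝ => sol.w (-P.1, P.2)) := by
    apply LipschitzWith.of_dist_le_mul
    intro P Q
    refine (hK.dist_le_mul _ _).trans ?_
    simp [Prod.dist_eq, dist_neg_neg]
  have HR := sol.hpde_r Fl.cont Fr hM hK
  have HL := sol.hpde_l Fl Fr.cont hM hK hK'
  refine ⟨sol.w, K, M, ?_, ?_, ?_⟩
  · exact { flux := Fr, lip := hK, S := HR.S, BC := HR.BC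
            rd := fun {x t} _ ht => sol.w_rd x ht
            ld := fun {x t} _ ht => sol.w_ld x ht
            lim0 := sol.lim_r
            bm := sol.um_bdd hM
            bp := sol.up_bdd hM }
  · refine { flux := Fl.reflect, lip := hK', S := HL.S, BC := HL.BC
             rd := ?_, ld := ?_, lim0 := ?_
             bm := fun h => by rw [abs_neg]; exact sol.up_bdd hM h
             bp := fun h => by rw [abs_neg]; exact sol.um_bdd hM h }
    · intro x t _ ht
      have := (sol.w_ld (-x) ht).scomp x (hasDerivAt_neg x).hasDerivWithinAt (s := Ioi x)
        (fun y hy => by simp only [mem_Iio]; have : x < y := hy; linarith)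
      simpa [Function.comp_def] using this
    · intro x t _ ht
      have := (sol.w_rd (-x) ht).scomp x (hasDerivAt_neg x).hasDerivWithinAt (s := Iio x)
        (fun y hy => by simp only [mem_Ioi]; have : y < x := hy; linarith)
      simpa [Function.comp_def] using this
    · intro t ht
      have h1 : Tendsto (fun x : ℝ => -x) (nhdsWithin 0 (Ioi 0)) (nhdsWithin 0 (Iio 0)) := by
        apply tendsto_nhdsWithin_of_tendsto_nhds_of_eventually_within
        · exact (Continuous.tendsto' continuous_neg 0 0 (by simp)).mono_left nhdsWithin_le_nhds
        · filter_upwards [self_mem_nhdsWithin] with y hy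
          have : (0:ℝ) < y := hy
          simp only [mem_Iio]; linarith
      simpa [Function.comp_def] using ((sol.lim_l ht).comp h1).neg
  · filter_upwards [sol.w_tl Fl.cont Fr.cont (le_refl (0:ℝ))] with t h ht
    have := h ht
    simpa only [Um, if_pos ht] using this

theorem main_ifc {gl gr : ℝ → ℝ} (Fl : Flux fl (deriv fl) gl) (Fr : Flux fr (deriv fr) gr)
    (hAB : fl A = fr B) (hA' : deriv fl A ≤ 0) (hB' : 0 ≤ deriv fr B) :
    ∀ᵐ t, 0 < t → fl (sol.um 0 t) = fr (sol.up 0 t) ∧ fl A ≤ fl (sol.um 0 t) ∧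
      (fl A < fl (sol.um 0 t) → 0 < deriv fl (sol.um 0 t) ∨ deriv fr (sol.up 0 t) < 0) := by
  filter_upwards [sol.rh Fl.cont Fr.cont, sol.ient Fl.cont Fr.cont] with t h1 h2 ht
  have e1 := h1 ht
  have e2 := h2 ht
  simp only [Um, Up, if_pos ht] at e1 e2
  set a := sol.um 0 t
  set b := sol.up 0 t
  rw [← e1, ← hAB] at e2
  refine ⟨e1, ?_, ?_⟩
  · by_contra hc
    push Not at hc
    have t1 := Fl.tan a A
    have t2 := Fr.tan b B
    have ha : 0 < a - A := by by_contra h; push Not at h; nlinarith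
    have hb : b - B < 0 := by by_contra h; push Not at h; nlinarith
    rw [Real.sign_of_neg hb, Real.sign_of_pos ha] at e2
    linarith
  · intro hc
    by_contra hn
    push Not at hn
    have t1 := Fl.tan A a
    have t2 := Fr.tan B b
    have ha : a - A < 0 := by by_contra h; push Not at h; nlinarith [hn.1]
    have hb : 0 < b - B := by by_contra h; push Not at h; nlinarith [hn.2]
    rw [Real.sign_of_neg ha, Real.sign_of_pos hb] at e2
    linarith

end ABSol


lemma lip_comp {w : ℝ × ℝ → ℝ} {K K' : NNReal} (hw : LipschitzWith K w) {ζ : ℝ → ℝ} {s t : ℝ}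
    (hζ : LipschitzOnWith K' ζ (Icc s t)) :
    LipschitzOnWith (K * max K' 1) (fun r => w (ζ r, r)) (Icc s t) :=
  hw.comp_lipschitzOnWith (hζ.prodMk LipschitzWith.id.lipschitzOnWith)

namespace Half
variable {f f' g : ℝ → ℝ} {w : ℝ × ℝ → ℝ} {um up : ℝ → ℝ → ℝ} {K : NNReal} {M : ℝ}

lemma leftder (H : Half f f' g w um up K M) {ζ : ℝ → ℝ} {r d : ℝ} (hr : 0 < r) (hz : 0 < ζ r)
    (hζ : HasDerivAt ζ (f' (um (ζ r) r)) r) (he : f' (um (ζ r) r) = f' (up (ζ r) r))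
    (hd : HasDerivAt (fun τ => w (ζ τ, τ)) d r) : d = Leg f g (f' (um (ζ r) r)) := by
  obtain ⟨σ0, h0, h0r, hσ⟩ := H.D3 hz hr he
  set p := f' (um (ζ r) r) with hp
  set k : ℝ → ℝ := fun τ => w (ζ r + p * (τ - r), τ) with hk
  have h1 : HasDerivAt (fun τ => w (ζ τ, τ) - k τ) 0 r := by
    rw [hasDerivAt_iff_isLittleO] at hζ ⊢
    refine Asymptotics.IsBigO.trans_isLittleO ?_ hζ
    refine Asymptotics.IsBigO.of_bound K (Eventually.of_forall fun τ => ?_)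
    have := H.lip.dist_le_mul (ζ τ, τ) (ζ r + p * (τ - r), τ)
    rw [Prod.dist_eq] at this
    simp only [dist_self, Real.dist_eq] at this
    rw [max_eq_left (abs_nonneg _)] at this
    simp only [hk, Real.norm_eq_abs, smul_eq_mul, sub_self, mul_zero, add_zero, sub_zero]
    refine this.trans (le_of_eq ?_)
    congr 2; ring
  have h2 : HasDerivWithinAt k (Leg f g p) (Iio r) r := by
    have : HasDerivWithinAt (fun τ => w (ζ r, r) - (r - τ) * Leg f g p) (Leg f g p) (Iio r) r := by
      have := (((hasDerivAt_id r).const_sub r).mul_const (Leg f g p)).const_sub (w (ζ r, r))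
      simpa using this.hasDerivWithinAt
    refine this.congr_of_eventuallyEq ?_ ?_
    · filter_upwards [Ioo_mem_nhdsLT (show r - σ0 < r by linarith)] with τ hτ
      have := (hσ (r - τ) (by linarith [hτ.2]) (by linarith [hτ.1])).2
      rw [show r - (r - τ) = τ by ring, show ζ r - p * (r - τ) = ζ r + p * (τ - r) by ring] at this
      simp only [hk]; linarith
    · simp [hk]
  have h3 := h1.hasDerivWithinAt (s := Iio r) |>.add h2
  have h4 : HasDerivWithinAt (fun τ => w (ζ τ, τ)) (Leg f g p) (Iio r) r := by
    refine (h3.congr_deriv (by simp)).congr_of_eventuallyEq (Eventually.of_forall fun τ => ?_) ?_ <;> simp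
  exact (uniqueDiffWithinAt_Iio r).eq_deriv _ hd.hasDerivWithinAt h4

lemma posSeg (H : Half f f' g w um up K M) {R : ℝ} (hR0 : 0 ≤ R)
    (hR : ∀ v, |v| ≤ M → |f' v| ≤ R) {ζ : ℝ → ℝ} {K' : NNReal} {s t : ℝ} (hs : 0 ≤ s) (hst : s < t)
    (hL : LipschitzOnWith K' ζ (Icc s t)) (hpos : ∀ r ∈ Ioo s t, 0 < ζ r)
    (hg : ∀ᵐ r, r ∈ Ioo s t → HasDerivAt ζ (f' (um (ζ r) r)) r ∧ f' (um (ζ r) r) = f' (up (ζ r) r)) :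
    Seg f g w R (ζ s) s (ζ t) t := by
  have hcl : ∀ r ∈ Icc s t, 0 ≤ ζ r := by
    have h1 : closure (Ioo s t) = Icc s t := closure_Ioo hst.ne
    intro r hr
    have h2 : ContinuousWithinAt ζ (Ioo s t) r := (hL.continuousOn r hr).mono Ioo_subset_Icc_self
    have h3 := h2.mem_closure (t := Ici 0) (by rw [h1]; exact hr) (fun x hx => (hpos x hx).le)
    rwa [closure_Ici] at h3
  have hys := hcl s ⟨le_rfl, hst.le⟩
  have hxt := hcl t ⟨hst.le, le_rfl⟩
  have hne : t - s ≠ 0 := by linarith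
  set q := (ζ t - ζ s) / (t - s) with hq
  have hqe : ζ t = ζ s + q * (t - s) := by rw [hq]; field_simp; ring
  refine H.seg_of hR0 hR hys hxt hs hst hqe (le_antisymm (H.S' hys hxt hs hst) ?_)
  set k := g q with hk
  have hlin : LipschitzOnWith (‖k‖₊ * K') (fun r => k * ζ r) (Icc s t) := by
    have : LipschitzWith ‖k‖₊ (fun z : ℝ => k * z) := by
      apply LipschitzWith.of_dist_le_mul
      intro x y
      simp [Real.dist_eq, ← mul_sub, abs_mul]
    exact this.comp_lipschitzOnWith hL
  have hlip := (lip_comp H.lip hL).sub hlin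
  have := lip_mono' hst.le (C := - f k) hlip ?_
  · have e : (t - s) * Leg f g q = k * (ζ t - ζ s) - f k * (t - s) := by
      rw [hqe]; unfold Leg; rw [← hk]; ring
    rw [e]
    linarith
  · filter_upwards [hg] with r hr hm d hd
    obtain ⟨h1, h2⟩ := hr hm
    have h3 : HasDerivAt (fun τ => w (ζ τ, τ)) (d + k * f' (um (ζ r) r)) r := by
      refine (hd.add (h1.const_mul k)).congr_of_eventuallyEq (Eventually.of_forall fun τ => ?_)
      simp
    have h4 := H.leftder (hs.trans_lt hm.1) (hpos r hm) h1 h2 h3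
    have h5 := H.flux.leg_ge (f' (um (ζ r) r)) k
    linarith

end Half


structure Two (fl fl' gl fr fr' gr : ℝ → ℝ) (w : ℝ × ℝ → ℝ) (um up : ℝ → ℝ → ℝ) (K : NNReal)
    (M A B γ R : ℝ) : Prop where
  Fl : Flux fl fl' gl
  HR : Half fr fr' gr w um up K M
  HL : Half (fun v => fl (-v)) (fun v => -fl' (-v)) (fun p => -gl (-p)) (fun P => w (-P.1, P.2))
        (fun x t => -up (-x) t) (fun x t => -um (-x) t) K M
  hA : fl A = γ
  hB : fr B = γ
  ifc : ∀ᵐ t, 0 < t → fl (um 0 t) = fr (up 0 t) ∧ γ ≤ fl (um 0 t) ∧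
      (γ < fl (um 0 t) → 0 < fl' (um 0 t) ∨ fr' (up 0 t) < 0)
  wt : ∀ᵐ t, 0 < t → HasDerivAt (fun s => w (0, s)) (-fl (um 0 t)) t
  hR0 : 0 ≤ R
  hRr : ∀ v, |v| ≤ M → |fr' v| ≤ R
  hRl : ∀ v, |v| ≤ M → |fl' v| ≤ R

def Gc (fl fl' fr fr' : ℝ → ℝ) (um up : ℝ → ℝ → ℝ) (γ : ℝ) (ζ : ℝ → ℝ) (t : ℝ) : Prop :=
  (ζ t < 0 → HasDerivAt ζ (fl' (um (ζ t) t)) t ∧ fl' (um (ζ t) t) = fl' (up (ζ t) t)) ∧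
  (0 < ζ t → HasDerivAt ζ (fr' (um (ζ t) t)) t ∧ fr' (um (ζ t) t) = fr' (up (ζ t) t)) ∧
  (ζ t = 0 → fl (um 0 t) = γ ∧ fr (up 0 t) = γ)

lemma Gc.congr {fl fl' fr fr' : ℝ → ℝ} {um up : ℝ → ℝ → ℝ} {γ : ℝ} {ζ ζ' : ℝ → ℝ} {t : ℝ}
    (h : Gc fl fl' fr fr' um up γ ζ t) (he : ζ' =ᶠ[nhds t] ζ) : Gc fl fl' fr fr' um up γ ζ' t := by
  have e := he.eq_of_nhds
  obtain ⟨h1, h2, h3⟩ := h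
  unfold Gc
  rw [e]
  exact ⟨fun h => ⟨(h1 h).1.congr_of_eventuallyEq he, (h1 h).2⟩,
    fun h => ⟨(h2 h).1.congr_of_eventuallyEq he, (h2 h).2⟩, h3⟩

def IsP (fl fl' fr fr' : ℝ → ℝ) (um up : ℝ → ℝ → ℝ) (γ : ℝ) (ζ : ℝ → ℝ) (s t : ℝ) : Prop :=
  (∃ K : NNReal, LipschitzOnWith K ζ (Icc s t)) ∧ (∀ᵐ r, r ∈ Ioo s t → Gc fl fl' fr fr' um up γ ζ r)

def Pc (fl fl' fr fr' : ℝ → ℝ) (um up : ℝ → ℝ → ℝ) (γ : ℝ) (s y t x : ℝ) : Prop :=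
  ∃ ζ : ℝ → ℝ, IsP fl fl' fr fr' um up γ ζ s t ∧ ζ s = y ∧ ζ t = x

section
variable {fl fl' fr fr' : ℝ → ℝ} {um up : ℝ → ℝ → ℝ} {γ : ℝ}

lemma IsP.mono {ζ : ℝ → ℝ} {s t s' t' : ℝ} (h : IsP fl fl' fr fr' um up γ ζ s t) (hs : s ≤ s')
    (ht : t' ≤ t) : IsP fl fl' fr fr' um up γ ζ s' t' := by
  obtain ⟨⟨K, hK⟩, hg⟩ := h
  refine ⟨⟨K, hK.mono (Icc_subset_Icc hs ht)⟩, ?_⟩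
  filter_upwards [hg] with r hr hm using hr (Ioo_subset_Ioo hs ht hm)

lemma glue_lip {ζ1 ζ2 : ℝ → ℝ} {K1 K2 : NNReal} {s r t : ℝ} (h1 : LipschitzOnWith K1 ζ1 (Icc s r))
    (h2 : LipschitzOnWith K2 ζ2 (Icc r t)) (hsr : s ≤ r) (hrt : r ≤ t) (he : ζ1 r = ζ2 r) :
    LipschitzOnWith (K1 + K2) (fun τ => if τ ≤ r then ζ1 τ else ζ2 τ) (Icc s t) := by
  have key : ∀ x ∈ Icc s t, ∀ y ∈ Icc s t, x ≤ y →
      dist (if x ≤ r then ζ1 x else ζ2 x) (if y ≤ r then ζ1 y else ζ2 y) ≤ (K1 + K2 : NNReal) * dist x y := by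
    intro x hx y hy hxy
    have k1 : (0:ℝ) ≤ K1 := K1.2
    have k2 : (0:ℝ) ≤ K2 := K2.2
    have hdd : dist x y = y - x := by rw [dist_comm, Real.dist_eq, abs_of_nonneg (by linarith)]
    rw [hdd, NNReal.coe_add]
    split_ifs with a b b
    · have := h1.dist_le_mul x ⟨hx.1, a⟩ y ⟨hy.1, b⟩
      rw [hdd] at this; nlinarith
    · push Not at b
      have u1 := h1.dist_le_mul x ⟨hx.1, a⟩ r ⟨hsr, le_rfl⟩
      have u2 := h2.dist_le_mul r ⟨le_rfl, hrt⟩ y ⟨b.le, hy.2⟩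
      have d1 : dist x r = r - x := by rw [dist_comm, Real.dist_eq, abs_of_nonneg (by linarith)]
      have d2 : dist r y = y - r := by rw [dist_comm, Real.dist_eq, abs_of_nonneg (by linarith)]
      have u3 := dist_triangle (ζ1 x) (ζ1 r) (ζ2 y)
      rw [d1] at u1
      rw [d2, ← he] at u2
      nlinarith
    · exact absurd (hxy.trans b) a
    · push Not at a b
      have := h2.dist_le_mul x ⟨a.le, hx.2⟩ y ⟨b.le, hy.2⟩
      rw [hdd] at this; nlinarith
  apply LipschitzOnWith.of_dist_le_mul
  intro x hx y hy
  rcases le_total x y with h | h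
  · exact key x hx y hy h
  · rw [dist_comm, dist_comm x]; exact key y hy x hx h

lemma Pc.trans {s y r z t x : ℝ} (h1 : Pc fl fl' fr fr' um up γ s y r z)
    (h2 : Pc fl fl' fr fr' um up γ r z t x) (hsr : s ≤ r) (hrt : r ≤ t) :
    Pc fl fl' fr fr' um up γ s y t x := by
  obtain ⟨ζ1, ⟨⟨K1, hK1⟩, hg1⟩, e1, e1'⟩ := h1
  obtain ⟨ζ2, ⟨⟨K2, hK2⟩, hg2⟩, e2, e2'⟩ := h2
  refine ⟨fun τ => if τ ≤ r then ζ1 τ else ζ2 τ, ⟨⟨K1 + K2, glue_lip hK1 hK2 hsr hrt (by rw [e1', e2])⟩, ?_⟩,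
    ?_, ?_⟩
  · have hne : ∀ᵐ τ : ℝ, τ ≠ r := by simp [ae_iff, measure_singleton]
    filter_upwards [hg1, hg2, hne] with τ a b hn hm
    rcases lt_or_gt_of_ne hn with h | h
    · refine (a ⟨hm.1, h⟩).congr ?_
      filter_upwards [gt_mem_nhds h] with σ hσ
      rw [if_pos hσ.le]
    · refine (b ⟨h, hm.2⟩).congr ?_
      filter_upwards [lt_mem_nhds h] with σ hσ
      rw [if_neg hσ.not_ge]
  · simp only [if_pos hsr, e1]
  · simp only
    split_ifs with h
    · have : t = r := le_antisymm h hrt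
      rw [this, e1', ← e2, ← this, e2']
    · exact e2'

lemma Pc.refl (s y : ℝ) : Pc fl fl' fr fr' um up γ s y s y :=
  ⟨fun _ => y, ⟨⟨0, LipschitzWith.const _ |>.lipschitzOnWith⟩, by simp⟩, rfl, rfl⟩

lemma Pc.cross {T x1 x2 y1 y2 : ℝ} (hT : 0 ≤ T) (h1 : Pc fl fl' fr fr' um up γ 0 y1 T x1)
    (h2 : Pc fl fl' fr fr' um up γ 0 y2 T x2) (hx : x1 ≤ x2) (hy : y2 ≤ y1) :
    Pc fl fl' fr fr' um up γ 0 y2 T x1 ∧ Pc fl fl' fr fr' um up γ 0 y1 T x2 := by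
  obtain ⟨ζ1, p1, e1, e1'⟩ := h1
  obtain ⟨ζ2, p2, e2, e2'⟩ := h2
  obtain ⟨K1, hK1⟩ := p1.1
  obtain ⟨K2, hK2⟩ := p2.1
  have hc : ContinuousOn (fun r => ζ2 r - ζ1 r) (Icc 0 T) := hK2.continuousOn.sub hK1.continuousOn
  obtain ⟨r, hr, hr0⟩ := intermediate_value_Icc hT hc (show (0:ℝ) ∈ Icc (ζ2 0 - ζ1 0) (ζ2 T - ζ1 T) by
    rw [e1, e2, e1', e2']; constructor <;> linarith)
  have hrr : ζ2 r = ζ1 r := by simpa [sub_eq_zero] using hr0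
  constructor
  · exact Pc.trans ⟨ζ2, p2.mono le_rfl hr.2, e2, hrr⟩ ⟨ζ1, p1.mono hr.1 le_rfl, rfl, e1'⟩ hr.1 hr.2
  · exact Pc.trans ⟨ζ1, p1.mono le_rfl hr.2, e1, rfl⟩ ⟨ζ2, p2.mono hr.1 le_rfl, hrr, e2'⟩ hr.1 hr.2
end

namespace Two
variable {fl fl' gl fr fr' gr : ℝ → ℝ} {w : ℝ × ℝ → ℝ} {um up : ℝ → ℝ → ℝ} {K : NNReal}
    {M A B γ R : ℝ}

def SRL (fl gl fr gr : ℝ → ℝ) (w : ℝ × ℝ → ℝ) (R y s x t : ℝ) : Prop :=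
  Seg fr gr w R y s x t ∨
  Seg (fun v => fl (-v)) (fun p => -gl (-p)) (fun P => w (-P.1, P.2)) R (-y) s (-x) t

def S0 (w : ℝ × ℝ → ℝ) (γ s t : ℝ) : Prop := w (0, t) = w (0, s) - γ * (t - s)

lemma w0_lip (H : Two fl fl' gl fr fr' gr w um up K M A B γ R) :
    LipschitzWith K (fun s => w (0, s)) := by
  apply LipschitzWith.of_dist_le_mul
  intro x y
  have := H.HR.lip.dist_le_mul (0, x) (0, y)
  simpa [Prod.dist_eq] using this

lemma N (H : Two fl fl' gl fr fr' gr w um up K M A B γ R) {s t : ℝ} (hs : 0 ≤ s) (hst : s ≤ t) :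
    w (0, t) ≤ w (0, s) - γ * (t - s) := by
  have := lip_mono' hst (C := γ) (h := fun r => -w (0, r)) (K := K) (H.w0_lip.neg.lipschitzOnWith) ?_
  · linarith
  · filter_upwards [H.ifc, H.wt] with r h1 h2 hm d hd
    have hr := hs.trans_lt hm.1
    have := hd.unique (h2 hr).neg
    rw [this, neg_neg]
    exact (h1 hr).2.1

lemma N' (H : Two fl fl' gl fr fr' gr w um up K M A B γ R) {s t : ℝ} (hs : 0 ≤ s) (hst : s ≤ t)
    (h : ∀ᵐ r, r ∈ Ioo s t → fl (um 0 r) ≤ γ) : S0 w γ s t := by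
  refine le_antisymm (H.N hs hst) ?_
  have := lip_mono' hst (C := -γ) (h := fun r => w (0, r)) (K := K) (H.w0_lip.lipschitzOnWith) ?_
  · linarith
  · filter_upwards [h, H.wt] with r h1 h2 hm d hd
    rw [hd.unique (h2 (hs.trans_lt hm.1))]
    linarith [h1 hm]

lemma S0_Pc (H : Two fl fl' gl fr fr' gr w um up K M A B γ R) {s t : ℝ} (hs : 0 ≤ s)
    (h : S0 w γ s t) : Pc fl fl' fr fr' um up γ s 0 t 0 := by
  refine ⟨fun _ => 0, ⟨⟨0, LipschitzWith.const _ |>.lipschitzOnWith⟩, ?_⟩, rfl, rfl⟩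
  filter_upwards [H.ifc, H.wt] with r h1 h2 hm
  have hr := hs.trans_lt hm.1
  have key : ∀ τ ∈ Ioo s t, w (0, τ) = w (0, s) - γ * (τ - s) := by
    intro τ hτ
    have a1 := H.N hs hτ.1.le
    have a2 := H.N (hs.trans hτ.1.le) hτ.2.le
    unfold S0 at h
    linarith
  have hd : HasDerivAt (fun τ => w (0, τ)) (-γ) r := by
    have : HasDerivAt (fun τ => w (0, s) - γ * (τ - s)) (-γ) r := by
      simpa using (((hasDerivAt_id r).sub_const s).const_mul γ).const_sub (w (0, s))
    refine this.congr_of_eventuallyEq ?_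
    filter_upwards [Ioo_mem_nhds hm.1 hm.2] with τ hτ using key τ hτ
  have e := hd.unique (h2 hr)
  have e' := (h1 hr).1
  refine ⟨fun h => absurd h (lt_irrefl _), fun h => absurd h (lt_irrefl _), fun _ => ⟨by linarith, by linarith⟩⟩

/-- a nondegenerate line, positivity in the interior -/
lemma line_pos {y s x t p r : ℝ} (hy : 0 ≤ y) (hx : 0 ≤ x) (hp : x = y + p * (t - s)) (hm : r ∈ Ioo s t)
    (hn : ¬ (y = 0 ∧ x = 0)) : 0 < y + p * (r - s) := by
  have h1 : 0 < r - s := by linarith [hm.1]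
  have h2 : 0 < t - r := by linarith [hm.2]
  have e : (t - s) * (y + p * (r - s)) = y * (t - r) + x * (r - s) := by rw [hp]; ring
  by_contra hc
  push Not at hc
  have h3 : y * (t - r) + x * (r - s) ≤ 0 := by rw [← e]; nlinarith
  have h4 : 0 ≤ y * (t - r) := by positivity
  have h5 : 0 ≤ x * (r - s) := by positivity
  exact hn ⟨by nlinarith, by nlinarith⟩

lemma lin_lip (y p s a b : ℝ) : LipschitzOnWith ‖p‖₊ (fun r : ℝ => y + p * (r - s)) (Icc a b) := by
  apply LipschitzWith.lipschitzOnWith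
  apply LipschitzWith.of_dist_le_mul
  intro u v
  simp [Real.dist_eq, ← mul_sub, abs_mul]

lemma lin_deriv (y p s r : ℝ) : HasDerivAt (fun r : ℝ => y + p * (r - s)) p r := by
  simpa using (((hasDerivAt_id r).sub_const s).const_mul p).const_add y

lemma SRL_Pc (H : Two fl fl' gl fr fr' gr w um up K M A B γ R) {y s x t : ℝ}
    (h : SRL fl gl fr gr w R y s x t) : Pc fl fl' fr fr' um up γ s y t x := by
  rcases h with h | h
  · obtain ⟨hy, hx, hs, hst, p, hpR, hp, hw⟩ := h
    rcases hst.eq_or_lt with rfl | hst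
    · have : x = y := by rw [hp]; ring
      rw [this]; exact Pc.refl _ _
    by_cases hn : y = 0 ∧ x = 0
    · obtain ⟨rfl, rfl⟩ := hn
      have hp0 : p = 0 := by
        have : p * (t - s) = 0 := by linarith
        rcases mul_eq_zero.1 this with h | h
        · exact h
        · linarith
      apply H.S0_Pc hs
      refine le_antisymm (H.N hs hst.le) ?_
      have := H.HR.flux.leg_ge p B
      rw [hw]
      rw [H.hB] at this
      subst hp0
      nlinarith
    · refine ⟨fun r => y + p * (r - s), ⟨⟨_, lin_lip _ _ _ _ _⟩, Eventually.of_forall fun r hm => ?_⟩, by simp, hp.symm⟩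
      have hz := line_pos hy hx hp hm hn
      obtain ⟨a1, a2⟩ := H.HR.D2 hy hx hs hp hw hm.1 hm.2 hz
      refine ⟨fun h => absurd h hz.not_gt, fun _ => ?_, fun h => absurd h hz.ne'⟩
      simp only [a1, a2, H.HR.flux.fg]
      exact ⟨lin_deriv _ _ _ _, trivial⟩
  · obtain ⟨hy, hx, hs, hst, p, hpR, hp, hw⟩ := h
    rcases hst.eq_or_lt with rfl | hst
    · have : x = y := by linarith
      rw [this]; exact Pc.refl _ _
    by_cases hn : -y = 0 ∧ -x = 0
    · obtain ⟨hy0, hx0⟩ := hn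
      have hy0 : y = 0 := by linarith
      have hx0 : x = 0 := by linarith
      subst hy0 hx0
      have hp0 : p = 0 := by
        have : p * (t - s) = 0 := by linarith
        rcases mul_eq_zero.1 this with h | h
        · exact h
        · linarith
      apply H.S0_Pc hs
      refine le_antisymm (H.N hs hst.le) ?_
      have := H.HL.flux.leg_ge p (-A)
      simp only [neg_neg, neg_zero] at hw this
      rw [hw]
      rw [H.hA] at this
      subst hp0
      nlinarith
    · refine ⟨fun r => y + (-p) * (r - s), ⟨⟨_, lin_lip _ _ _ _ _⟩, Eventually.of_forall fun r hm => ?_⟩, by simp, by linarith⟩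
      have hz := line_pos hy hx hp hm hn
      obtain ⟨a1, a2⟩ := H.HL.D2 hy hx hs hp hw hm.1 hm.2 hz
      have e : -(-y + p * (r - s)) = y + (-p) * (r - s) := by ring
      rw [e, neg_inj] at a1 a2
      have hz' : y + (-p) * (r - s) < 0 := by linarith
      refine ⟨fun _ => ?_, fun h => absurd h hz'.not_gt, fun h => absurd h hz'.ne⟩
      simp only [a1, a2, H.Fl.fg]
      exact ⟨lin_deriv _ _ _ _, trivial⟩

end Two


namespace Two
variable {fl fl' gl fr fr' gr : ℝ → ℝ} {w : ℝ × ℝ → ℝ} {um up : ℝ → ℝ → ℝ} {K : NNReal}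
    {M A B γ R : ℝ}

lemma hRl' (H : Two fl fl' gl fr fr' gr w um up K M A B γ R) :
    ∀ v, |v| ≤ M → |(fun v => -fl' (-v)) v| ≤ R := by
  intro v hv
  simp only [abs_neg]
  exact H.hRl _ (by rwa [abs_neg])

lemma SRL.dist {y s x t : ℝ} (h : SRL fl gl fr gr w R y s x t) : |x - y| ≤ R * (t - s) := by
  rcases h with h | h
  · exact h.dist
  · have := h.dist
    rwa [show -x - -y = -(x - y) by ring, abs_neg] at this

lemma SRL.nn {y s x t : ℝ} (h : SRL fl gl fr gr w R y s x t) : 0 ≤ s ∧ s ≤ t := by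
  rcases h with h | h <;> exact ⟨h.2.2.1, h.2.2.2.1⟩

lemma SRL.refl (hR : 0 ≤ R) {y s : ℝ} (hs : 0 ≤ s) : SRL fl gl fr gr w R y s y s := by
  rcases le_total 0 y with h | h
  · exact Or.inl ⟨h, h, hs, le_rfl, 0, by simpa using hR, by simp, by simp⟩
  · exact Or.inr ⟨by linarith, by linarith, hs, le_rfl, 0, by simpa using hR, by simp, by simp⟩

lemma SRL_closed (H : Two fl fl' gl fr fr' gr w um up K M A B γ R) :
    IsClosed {q : (ℝ × ℝ) × (ℝ × ℝ) | SRL fl gl fr gr w R q.1.1 q.1.2 q.2.1 q.2.2} := by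
  have h1 := Seg_closed H.HR.flux H.HR.lip.continuous R
  have h2 := (Seg_closed H.HL.flux H.HL.lip.continuous R).preimage
    (f := fun q : (ℝ × ℝ) × (ℝ × ℝ) => (((-q.1.1, q.1.2), (-q.2.1, q.2.2)) : (ℝ × ℝ) × (ℝ × ℝ)))
    (by fun_prop)
  exact h1.union h2

lemma SRL_closed' (H : Two fl fl' gl fr fr' gr w um up K M A B γ R) {X : Type*} [TopologicalSpace X]
    {a b c d : X → ℝ} (ha : Continuous a) (hb : Continuous b) (hc : Continuous c) (hd : Continuous d) :
    IsClosed {q : X | SRL fl gl fr gr w R (a q) (b q) (c q) (d q)} :=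
  H.SRL_closed.preimage (f := fun q : X => (((a q, b q), (c q, d q)) : (ℝ × ℝ) × (ℝ × ℝ)))
    (by fun_prop)

lemma interface (H : Two fl fl' gl fr fr' gr w um up K M A B γ R) {τ : ℝ} (hτ : 0 ≤ τ) :
    ∃ s y, 0 ≤ s ∧ s ≤ τ ∧ SRL fl gl fr gr w R y 0 0 s ∧ S0 w γ s τ := by
  set Y := R * τ with hY
  set Q : Set ℝ := {s | ∃ y ∈ Icc (-Y) Y, (s, y) ∈ {z : ℝ × ℝ | SRL fl gl fr gr w R z.2 0 0 z.1}} with hQ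
  have hQc : IsClosed Q := closed_exists
    (H.SRL_closed' continuous_snd continuous_const continuous_const continuous_fst) isCompact_Icc
  have hmem : ∀ s y, s ≤ τ → SRL fl gl fr gr w R y 0 0 s → s ∈ Q := by
    intro s y hs h
    refine ⟨y, ?_, h⟩
    have := h.dist
    rw [zero_sub, abs_neg, sub_zero] at this
    have h2 : R * s ≤ Y := mul_le_mul_of_nonneg_left hs H.hR0
    exact abs_le.1 (this.trans h2)
  have hK : IsCompact (Icc 0 τ ∩ Q) := isCompact_Icc.inter_right hQc
  have h0 : (0:ℝ) ∈ Icc 0 τ ∩ Q := ⟨⟨le_rfl, hτ⟩, hmem 0 0 hτ (SRL.refl H.hR0 le_rfl)⟩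
  have hs := hK.sSup_mem ⟨0, h0⟩
  set s := sSup (Icc 0 τ ∩ Q) with hsd
  obtain ⟨y, hy, hsrl⟩ := hs.2
  refine ⟨s, y, hs.1.1, hs.1.2, hsrl, H.N' hs.1.1 hs.1.2 ?_⟩
  filter_upwards [H.ifc] with r hr hm
  have hr0 := hs.1.1.trans_lt hm.1
  obtain ⟨e1, e2, e3⟩ := hr hr0
  by_contra hc
  push Not at hc
  have hno : ∀ y, ¬ SRL fl gl fr gr w R y 0 0 r := by
    intro y h
    have : r ≤ s := le_csSup hK.bddAbove ⟨⟨hr0.le, hm.2.le⟩, hmem r y hm.2.le h⟩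
    exact absurd hm.1 this.not_gt
  rcases e3 hc with h | h
  · obtain ⟨z, hz⟩ := H.HL.D4 H.hR0 H.hRl' hr0 (by simpa using h)
    exact hno (-z) (Or.inr (by simpa using hz))
  · obtain ⟨z, hz⟩ := H.HR.D4 H.hR0 H.hRr hr0 h
    exact hno z (Or.inl hz)

def Path (fl gl fr gr : ℝ → ℝ) (w : ℝ × ℝ → ℝ) (R γ T y x : ℝ) : Prop :=
  SRL fl gl fr gr w R y 0 x T ∨ ∃ s ∈ Icc 0 T, ∃ t ∈ Icc 0 T, s ≤ t ∧
    SRL fl gl fr gr w R y 0 0 s ∧ S0 w γ s t ∧ SRL fl gl fr gr w R 0 t x T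

lemma Path_Pc (H : Two fl fl' gl fr fr' gr w um up K M A B γ R) {T y x : ℝ}
    (h : Path fl gl fr gr w R γ T y x) : Pc fl fl' fr fr' um up γ 0 y T x := by
  rcases h with h | ⟨s, hs, t, ht, hst, h1, h2, h3⟩
  · exact H.SRL_Pc h
  · exact ((H.SRL_Pc h1).trans (H.S0_Pc hs.1 h2) hs.1 hst).trans (H.SRL_Pc h3) ht.1 ht.2

lemma Path_exists (H : Two fl fl' gl fr fr' gr w um up K M A B γ R) {T : ℝ} (hT : 0 < T) (x : ℝ) :
    ∃ y, Path fl gl fr gr w R γ T y x := by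
  have key : (∃ y s, (y = 0 ∨ s = 0) ∧ SRL fl gl fr gr w R y s x T) := by
    rcases lt_trichotomy x 0 with h | h | h
    · obtain ⟨y, s, hs, ho, hh⟩ := H.HL.BCseg H.hR0 H.hRl' (x := -x) (by linarith) hT
      refine ⟨-y, s, by simpa using ho, Or.inr (by simpa using hh)⟩
    · subst h
      exact ⟨0, T, Or.inl rfl, SRL.refl H.hR0 hT.le⟩
    · obtain ⟨y, s, hs, ho, hh⟩ := H.HR.BCseg H.hR0 H.hRr h hT
      exact ⟨y, s, ho, Or.inl hh⟩
  obtain ⟨y, s, ho, h⟩ := key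
  rcases ho with rfl | rfl
  · obtain ⟨s', y', a1, a2, a3, a4⟩ := H.interface h.nn.1
    exact ⟨y', Or.inr ⟨s', ⟨a1, a2.trans h.nn.2⟩, s, h.nn, a2, a3, a4, h⟩⟩
  · exact ⟨y, Or.inl h⟩

lemma Path_compact (H : Two fl fl' gl fr fr' gr w um up K M A B γ R) {T : ℝ} (x : ℝ) :
    IsCompact {y | Path fl gl fr gr w R γ T y x} := by
  have hw := H.HR.lip.continuous
  have h1 : IsClosed {y | SRL fl gl fr gr w R y 0 x T} :=
    H.SRL_closed' continuous_id continuous_const continuous_const continuous_const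
  have h2 : IsClosed {z : (ℝ × ℝ) × ℝ | z.1.2 ≤ z.2 ∧
      SRL fl gl fr gr w R z.1.1 0 0 z.1.2 ∧ S0 w γ z.1.2 z.2 ∧ SRL fl gl fr gr w R 0 z.2 x T} := by
    refine IsClosed.and (isClosed_le (by fun_prop) (by fun_prop)) (IsClosed.and ?_ (IsClosed.and ?_ ?_))
    · exact H.SRL_closed' (by fun_prop) continuous_const continuous_const (by fun_prop)
    · unfold S0; exact isClosed_eq (by fun_prop) (by fun_prop)
    · exact H.SRL_closed' continuous_const (by fun_prop) continuous_const continuous_const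
  have h3 := closed_exists (closed_exists h2 (isCompact_Icc (a := (0:ℝ)) (b := T)))
    (isCompact_Icc (a := (0:ℝ)) (b := T))
  have h4 : IsClosed {y | Path fl gl fr gr w R γ T y x} := h1.union h3
  refine (isCompact_Icc (a := -(|x| + R * T)) (b := |x| + R * T)).of_isClosed_subset h4 ?_
  intro y hy
  have : |y| ≤ |x| + R * T := by
    rcases hy with h | ⟨s, hs, t, ht, hst, a1, a2, a3⟩
    · have := h.dist
      have h5 := abs_sub_abs_le_abs_sub y x
      rw [abs_sub_comm] at h5
      linarith
    · have b1 := a1.dist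
      have b2 := a3.dist
      have b3 : R * s ≤ R * t := mul_le_mul_of_nonneg_left hst H.hR0
      rw [zero_sub, abs_neg] at b1
      have := abs_nonneg x
      rw [sub_zero] at b2
      nlinarith
  exact abs_le.1 this

lemma sideSeg (H : Two fl fl' gl fr fr' gr w um up K M A B γ R) {ζ : ℝ → ℝ} {a b : ℝ} (ha : 0 ≤ a)
    (hab : a ≤ b) (hp : IsP fl fl' fr fr' um up γ ζ a b) (hz : ∀ r ∈ Ioo a b, ζ r ≠ 0) :
    SRL fl gl fr gr w R (ζ a) a (ζ b) b := by
  rcases hab.eq_or_lt with rfl | hab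
  · exact SRL.refl H.hR0 ha
  obtain ⟨⟨K', hL⟩, hg⟩ := hp
  have hc := hL.continuousOn.mono Ioo_subset_Icc_self
  have hs : (∀ r ∈ Ioo a b, 0 < ζ r) ∨ (∀ r ∈ Ioo a b, ζ r < 0) := by
    by_contra hcon
    push Not at hcon
    obtain ⟨⟨r1, m1, h1⟩, r2, m2, h2⟩ := hcon
    obtain ⟨r, hr, h0⟩ := (isPreconnected_Ioo.intermediate_value m1 m2 hc) ⟨h1, h2⟩
    exact hz r hr h0
  rcases hs with hs | hs
  · left
    refine H.HR.posSeg H.hR0 H.hRr ha hab hL hs ?_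
    filter_upwards [hg] with r hr hm using (hr hm).2.1 (hs r hm)
  · right
    refine H.HL.posSeg (ζ := fun r => -ζ r) H.hR0 H.hRl' ha hab hL.neg (fun r hr => by linarith [hs r hr]) ?_
    filter_upwards [hg] with r hr hm
    obtain ⟨e1, e2⟩ := (hr hm).1 (hs r hm)
    simp only [neg_neg]
    rw [← e2]
    exact ⟨e1.neg, rfl⟩

lemma max_lip {ζ : ℝ → ℝ} {K' : NNReal} {s : Set ℝ} (h : LipschitzOnWith K' ζ s) (B A : ℝ) :
    ∃ K'' : NNReal, LipschitzOnWith K'' (fun r => B * max (ζ r) 0 + A * min (ζ r) 0) s := by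
  have hm : ∀ k : ℝ, LipschitzWith ‖k‖₊ (fun z : ℝ => k * z) := by
    intro k
    apply LipschitzWith.of_dist_le_mul
    intro x y
    simp [Real.dist_eq, ← mul_sub, abs_mul]
  have h1 : LipschitzWith _ (fun z : ℝ => B * max z 0) := (hm B).comp (LipschitzWith.id.max_const 0)
  have h2 : LipschitzWith _ (fun z : ℝ => A * min z 0) := (hm A).comp (LipschitzWith.id.min_const 0)
  exact ⟨_, (h1.add h2).comp_lipschitzOnWith h⟩

lemma mid_S0 (H : Two fl fl' gl fr fr' gr w um up K M A B γ R) {ζ : ℝ → ℝ} {a b : ℝ} (ha : 0 ≤ a)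
    (hab : a ≤ b) (hp : IsP fl fl' fr fr' um up γ ζ a b) (h0a : ζ a = 0) (h0b : ζ b = 0) :
    S0 w γ a b := by
  refine le_antisymm (H.N ha hab) ?_
  obtain ⟨⟨K', hL⟩, hg⟩ := hp
  obtain ⟨K'', hK''⟩ := max_lip hL B A
  have := lip_mono' hab (C := -γ) ((lip_comp H.HR.lip hL).sub hK'') ?_
  · simp only [h0a, h0b, max_self, min_self, mul_zero, add_zero, sub_zero] at this
    linarith
  set Z : Set ℝ := {r | ζ r = 0} with hZ
  have hiso : ∀ᵐ r : ℝ, r ∈ Z → (nhdsWithin r (Z ∩ Ioi r)).NeBot := by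
    have := (countable_setOfPred_isolated_right_within (s := Z)).ae_notMem volume
    filter_upwards [this] with r hr hrZ
    rw [neBot_iff]
    intro h
    exact hr ⟨hrZ, h⟩
  filter_upwards [hg, hiso, H.wt] with r hr hi hwt hm d hd
  have hr0 := ha.trans_lt hm.1
  obtain ⟨g1, g2, g3⟩ := hr hm
  have hcont : ContinuousAt ζ r := hL.continuousOn.continuousAt (Icc_mem_nhds hm.1 hm.2)
  rcases lt_trichotomy (ζ r) 0 with h | h | h
  · obtain ⟨e1, e2⟩ := g1 h
    have h3 : HasDerivAt (fun τ => w (ζ τ, τ)) (d + A * fl' (um (ζ r) r)) r := by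
      refine (hd.add (e1.const_mul A)).congr_of_eventuallyEq ?_
      filter_upwards [hcont.eventually (gt_mem_nhds h)] with τ hτ
      simp [max_eq_right hτ.le, min_eq_left hτ.le]
    have h4 := H.HL.leftder (ζ := fun r => -ζ r) (d := d + A * fl' (um (ζ r) r)) hr0 (by linarith)
      (by simp only [neg_neg]; rw [← e2]; exact e1.neg) (by simp only [neg_neg]; rw [e2])
      (by simpa only [neg_neg] using h3)
    simp only [neg_neg] at h4
    have h5 := H.HL.flux.leg_ge (-fl' (up (ζ r) r)) (-A)
    simp only [neg_neg] at h5
    rw [H.hA, ← h4, ← e2] at h5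
    linarith
  · have hNe := hi h
    have hw := hwt hr0
    rw [(g3 h).1] at hw
    have hu : UniqueDiffWithinAt ℝ (Z ∩ Ioi r) r := by
      rw [uniqueDiffWithinAt_iff_accPt, accPt_principal_iff_nhdsWithin]
      rwa [show (Z ∩ Ioi r) \ {r} = Z ∩ Ioi r by
        ext q; simp only [Set.mem_sdiff, mem_inter_iff, mem_Ioi, mem_singleton_iff]
        exact ⟨fun h => h.1, fun h => ⟨h, h.2.ne'⟩⟩]
    have h1 : HasDerivWithinAt (fun s => w (0, s)) d (Z ∩ Ioi r) r := by
      refine hd.hasDerivWithinAt.congr ?_ ?_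
      · intro q hq
        have : ζ q = 0 := hq.1
        simp [this]
      · simp [h]
    rw [hu.eq_deriv _ h1 hw.hasDerivWithinAt]
  · obtain ⟨e1, e2⟩ := g2 h
    have h3 : HasDerivAt (fun τ => w (ζ τ, τ)) (d + B * fr' (um (ζ r) r)) r := by
      refine (hd.add (e1.const_mul B)).congr_of_eventuallyEq ?_
      filter_upwards [hcont.eventually (lt_mem_nhds h)] with τ hτ
      simp [max_eq_left hτ.le, min_eq_right hτ.le]
    have h4 := H.HR.leftder hr0 h e1 e2 h3
    have h5 := H.HR.flux.leg_ge (fr' (um (ζ r) r)) B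
    rw [H.hB, ← h4] at h5
    linarith

lemma Pc_Path (H : Two fl fl' gl fr fr' gr w um up K M A B γ R) {T y x : ℝ} (hT : 0 ≤ T)
    (h : Pc fl fl' fr fr' um up γ 0 y T x) : Path fl gl fr gr w R γ T y x := by
  obtain ⟨ζ, hp, rfl, rfl⟩ := h
  obtain ⟨K', hL⟩ := hp.1
  by_cases hne : (Icc 0 T ∩ ζ ⁻¹' {0}).Nonempty
  · have hK : IsCompact (Icc 0 T ∩ ζ ⁻¹' {0}) :=
      isCompact_Icc.of_isClosed_subset (hL.continuousOn.preimage_isClosed_of_isClosed isClosed_Icc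
        isClosed_singleton) inter_subset_left
    have hi := hK.sInf_mem hne
    have hs := hK.sSup_mem hne
    have hle : ∀ r ∈ Icc 0 T ∩ ζ ⁻¹' {0}, sInf (Icc 0 T ∩ ζ ⁻¹' {0}) ≤ r := fun r hr => csInf_le hK.bddBelow hr
    have hge : ∀ r ∈ Icc 0 T ∩ ζ ⁻¹' {0}, r ≤ sSup (Icc 0 T ∩ ζ ⁻¹' {0}) := fun r hr => le_csSup hK.bddAbove hr
    set a := sInf (Icc 0 T ∩ ζ ⁻¹' {0})
    set b := sSup (Icc 0 T ∩ ζ ⁻¹' {0})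
    have hab := hge a hi
    have za : ζ a = 0 := hi.2
    have zb : ζ b = 0 := hs.2
    refine Or.inr ⟨a, hi.1, b, hs.1, hab, ?_, ?_, ?_⟩
    · have := H.sideSeg le_rfl hi.1.1 (hp.mono le_rfl hi.1.2) (fun r hr h0 =>
        absurd hr.2 (hle r ⟨⟨hr.1.le, hr.2.le.trans hi.1.2⟩, h0⟩).not_gt)
      rwa [za] at this
    · exact H.mid_S0 hi.1.1 hab (hp.mono hi.1.1 hs.1.2) za zb
    · have := H.sideSeg hs.1.1 hs.1.2 (hp.mono hs.1.1 le_rfl) (fun r hr h0 =>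
        absurd hr.1 (hge r ⟨⟨hs.1.1.trans hr.1.le, hr.2.le⟩, h0⟩).not_gt)
      rwa [zb] at this
  · exact Or.inl (H.sideSeg le_rfl hT hp (fun r hr h0 => hne ⟨r, ⟨hr.1.le, hr.2.le⟩, h0⟩))

end Two


lemma charSet0_eq {T : ℝ} {fl fr : ℝ → ℝ} {γ A B : ℝ} {u0 : ℝ → ℝ} (sol : ABSol fl fr A B u0) (x : ℝ) :
    charSet0 T fl fr γ sol x =
      {y | Pc fl (deriv fl) fr (deriv fr) sol.um sol.up γ 0 y T x} := by
  ext y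
  constructor
  · rintro ⟨ζ, ⟨⟨h1, h2⟩, h3⟩, rfl⟩
    refine ⟨ζ, ⟨h1, ?_⟩, rfl, h3⟩
    rw [ae_restrict_iff' measurableSet_Icc] at h2
    filter_upwards [h2] with r hr hm using hr (Ioo_subset_Icc_self hm)
  · rintro ⟨ζ, ⟨h1, h2⟩, rfl, h3⟩
    refine ⟨ζ, ⟨⟨h1, ?_⟩, h3⟩, rfl⟩
    rw [← restrict_Ioo_eq_restrict_Icc, ae_restrict_iff' measurableSet_Ioo]
    exact h2

/-- `C₀(u,x)` is nonempty and compact for every `x`, and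
`x ↦ min C₀(u,x)`, `x ↦ max C₀(u,x)` are nondecreasing
(Proposition 4.1 (i),(iv) of the paper). -/
theorem charSet0_compact_and_monotone
    {T a θl θr A B : ℝ} {fl fr : ℝ → ℝ}
    (hT : 0 < T)
    (hflC : ContDiff ℝ 2 fl) (hfrC : ContDiff ℝ 2 fr)
    (ha : 0 < a)
    (hfl2 : ∀ w : ℝ, a ≤ deriv (deriv fl) w)
    (hfr2 : ∀ w : ℝ, a ≤ deriv (deriv fr) w)
    (hf0 : fl 0 = fr 0) (hf1 : fl 1 = fr 1)
    (hθl : deriv fl θl = 0) (hθr : deriv fr θr = 0)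
    (hθl0 : 0 ≤ θl) (hθr1 : θr ≤ 1)
    (hAB : fl A = fr B) (hA' : deriv fl A ≤ 0) (hB' : 0 ≤ deriv fr B)
    {u0 : ℝ → ℝ} (hu0 : IsLinf u0) (sol : ABSol fl fr A B u0) :
    (∀ x : ℝ, (charSet0 T fl fr (fl A) sol x).Nonempty ∧
      IsCompact (charSet0 T fl fr (fl A) sol x)) ∧
    (∀ x1 x2 : ℝ, x1 < x2 →
      sInf (charSet0 T fl fr (fl A) sol x1) ≤
        sInf (charSet0 T fl fr (fl A) sol x2) ∧
      sSup (charSet0 T fl fr (fl A) sol x1) ≤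
        sSup (charSet0 T fl fr (fl A) sol x2)) := by
  obtain ⟨gl, Fl⟩ := flux_exists hflC ha hfl2
  obtain ⟨gr, Fr⟩ := flux_exists hfrC ha hfr2
  obtain ⟨w, K, M, HR, HL, hwt⟩ := sol.main_half Fl Fr
  obtain ⟨Rl, hRl0, hRl⟩ := ABSol.cbd Fl.cont' M
  obtain ⟨Rr, hRr0, hRr⟩ := ABSol.cbd Fr.cont' M
  have H : Two fl (deriv fl) gl fr (deriv fr) gr w sol.um sol.up K M A B (fl A) (Rl + Rr) :=
    { Fl := Fl, HR := HR, HL := HL, hA := rfl, hB := hAB.symm,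
      ifc := sol.main_ifc Fl Fr hAB hA' hB', wt := hwt, hR0 := by linarith,
      hRr := fun v hv => by linarith [hRr v hv],
      hRl := fun v hv => by linarith [hRl v hv] }
  have e : ∀ x, charSet0 T fl fr (fl A) sol x =
      {y | Two.Path fl gl fr gr w (Rl + Rr) (fl A) T y x} := by
    intro x
    rw [charSet0_eq]
    ext y
    exact ⟨H.Pc_Path hT.le, H.Path_Pc⟩
  have hne : ∀ x, (charSet0 T fl fr (fl A) sol x).Nonempty := by
    intro x; rw [e]; exact H.Path_exists hT x
  have hco : ∀ x, IsCompact (charSet0 T fl fr (fl A) sol x) := by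
    intro x; rw [e]; exact H.Path_compact x
  refine ⟨fun x => ⟨hne x, hco x⟩, fun x1 x2 hx => ?_⟩
  have cross : ∀ y1 ∈ charSet0 T fl fr (fl A) sol x1, ∀ y2 ∈ charSet0 T fl fr (fl A) sol x2, y2 ≤ y1 →
      y2 ∈ charSet0 T fl fr (fl A) sol x1 ∧ y1 ∈ charSet0 T fl fr (fl A) sol x2 := by
    intro y1 h1 y2 h2 hy
    rw [charSet0_eq] at h1 h2 ⊢
    rw [charSet0_eq]
    exact Pc.cross hT.le h1 h2 hx.le hy
  constructor
  · by_contra hc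
    push Not at hc
    have := (cross _ ((hco x1).sInf_mem (hne x1)) _ ((hco x2).sInf_mem (hne x2)) hc.le).1
    exact absurd (csInf_le (hco x1).bddBelow this) hc.not_ge
  · by_contra hc
    push Not at hc
    have := (cross _ ((hco x1).sSup_mem (hne x1)) _ ((hco x2).sSup_mem (hne x2)) hc.le).2
    exact absurd (le_csSup (hco x2).bddAbove this) hc.not_ge
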